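/- arXiv:math/0611901 — 4 statements merged into one kernel-verified Lean document; each statement's English description precedes it below -/
import Mathlib

section
/- Let n ≥ 1, let Q ⊆ ℝⁿ be a bounded open axis-parallel cube, and let φ : ℝⁿ → ℝ be smooth with compact support contained in Q. Then there exist smooth functions ψ₁, …, ψₙ : ℝⁿ → ℝ, each with compact support contained in Q, such that φ = Σ_{k=1}^n ∂_k ψ_k, if and only if ∫_{ℝⁿ} φ dm = 0. -/
open MeasureTheory Metric Set ENNReal NNReal

noncomputable section

/-- The partial derivative `∂_j φ` in the `j`-th coordinate direction. -/
def pderivIdx (n : ℕ) (j : Fin n) (φ : EuclideanSpace ℝ (Fin n) → ℝ)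
    (x : EuclideanSpace ℝ (Fin n)) : ℝ :=
  fderiv ℝ φ x (EuclideanSpace.single j 1)

/-!
If `φ` is a divergence of compactly supported functions, its integral vanishes by integration by
parts. Conversely, enclose the support of `φ` in a compact box `∏ K i` inside the given open one
and choose bumps `η i` supported in `K i` with `∫ η i = 1`. On each line parallel to the `k`-th
axis, `f` and `η k • ∫ f dx_k` have the same integral, so the primitive of their difference from
`-∞` is again supported in the box; hence `f` equals `η k • ∫ f dx_k` up to a `k`-th partial
derivative. Doing this for one coordinate after the other leaves the residual
`(∏ η i (x i)) • ∫ φ`.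
-/

open Function

lemma exists_isCompact_ordConnected_between {α : Type*} [LinearOrder α] [TopologicalSpace α]
    [OrderClosedTopology α] [CompactIccSpace α] {T I : Set α} (hT : IsCompact T)
    (hI : I.OrdConnected) (hTI : T ⊆ I) : ∃ K, IsCompact K ∧ K.OrdConnected ∧ T ⊆ K ∧ K ⊆ I := by
  obtain rfl | hne := T.eq_empty_or_nonempty
  · exact ⟨∅, isCompact_empty, ordConnected_empty, Subset.rfl, hTI⟩
  · obtain ⟨c, hc⟩ := hT.exists_isLeast hne
    obtain ⟨d, hd⟩ := hT.exists_isGreatest hne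
    exact ⟨Icc c d, isCompact_Icc, ordConnected_Icc, fun t ht ↦ ⟨hc.2 ht, hd.2 ht⟩,
      hI.out (hTI hc.1) (hTI hd.1)⟩

section Integration

variable {V E : Type*} [NormedAddCommGroup V] [NormedSpace ℝ V] [MeasurableSpace V] [BorelSpace V]
  {μ : Measure V} [NormedAddCommGroup E] [NormedSpace ℝ E] {f : V → E} {m : WithTop ℕ∞}

lemma integrable_fderiv_apply_of_hasCompactSupport [IsFiniteMeasureOnCompacts μ] (hm : m ≠ 0)
    (hf : ContDiff ℝ m f) (hfc : HasCompactSupport f) (v : V) :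
    Integrable (fun x ↦ fderiv ℝ f x v) μ :=
  ((hf.continuous_fderiv hm).clm_apply continuous_const).integrable_of_hasCompactSupport
    (hfc.fderiv_apply ℝ v)

variable [FiniteDimensional ℝ V]

lemma integral_fderiv_apply_eq_zero [μ.IsAddHaarMeasure] {v : V} (hf : Differentiable ℝ f)
    (hfi : Integrable f μ) (hf'i : Integrable (fun x ↦ fderiv ℝ f x v) μ) :
    ∫ x, fderiv ℝ f x v ∂μ = 0 := by
  -- Integrate by parts against the constant function `1`.
  simpa using integral_bilinear_fderiv_right_eq_neg_left_of_integrable (μ := μ)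
    (f := fun _ ↦ (1 : ℝ)) (g := f) (v := v) (B := ContinuousLinearMap.lsmul ℝ ℝ)
    (by simp) (by simpa using hf'i) (by simpa using hfi) (by simp) (fun x _ ↦ hf x)

lemma integral_sum_fderiv_apply_eq_zero [μ.IsAddHaarMeasure] {κ : Type*} {s : Finset κ}
    {ψ : κ → V → E} (hm : m ≠ 0) (hψ : ∀ k ∈ s, ContDiff ℝ m (ψ k))
    (hψc : ∀ k ∈ s, HasCompactSupport (ψ k)) (v : κ → V) :
    ∫ x, ∑ k ∈ s, fderiv ℝ (ψ k) x (v k) ∂μ = 0 := by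
  have hint (k) (hk : k ∈ s) : Integrable (fun x ↦ fderiv ℝ (ψ k) x (v k)) μ :=
    integrable_fderiv_apply_of_hasCompactSupport hm (hψ k hk) (hψc k hk) (v k)
  rw [integral_finsetSum _ hint]
  exact Finset.sum_eq_zero fun k hk ↦ integral_fderiv_apply_eq_zero ((hψ k hk).differentiable hm)
    ((hψ k hk).continuous.integrable_of_hasCompactSupport (hψc k hk)) (hint k hk)

lemma exists_contDiff_tsupport_subset_integral_eq_one [IsLocallyFiniteMeasure μ]
    [μ.IsOpenPosMeasure] (m : ℕ∞) {U : Set V} (hU : IsOpen U) (hne : U.Nonempty) :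
    ∃ η : V → ℝ, ContDiff ℝ m η ∧ HasCompactSupport η ∧ tsupport η ⊆ U ∧ ∫ x, η x ∂μ = 1 := by
  obtain ⟨x, hx⟩ := hne
  obtain ⟨r, hr, hrU⟩ := nhds_basis_closedBall.mem_iff.1 (hU.mem_nhds hx)
  let b : ContDiffBump x := ⟨r / 2, r, half_pos hr, half_lt_self hr⟩
  exact ⟨b.normed μ, b.contDiff_normed, b.hasCompactSupport_normed,
    b.tsupport_normed_eq.trans_subset hrU, b.integral_normed⟩

end Integration

section Fiber

variable {ι E : Type*} [DecidableEq ι] [NormedAddCommGroup E]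
  {k : ι} {F : (ι → ℝ) → E} {K : ι → Set ℝ}

lemma integrable_comp_update (hF : Continuous F) (hK : IsCompact (K k))
    (hFK : support F ⊆ univ.pi K) (x : ι → ℝ) : Integrable fun t ↦ F (update x k t) := by
  refine (hF.comp (continuous_const.update k continuous_id)).integrable_of_hasCompactSupport
    (.of_support_subset_isCompact hK fun t ht ↦ ?_)
  simpa using hFK ht k trivial

variable [NormedSpace ℝ E] {η : ℝ → ℝ}

/-- The integral of `F` along the line through `x` parallel to the `k`-th axis, as a function of
all the coordinates of `x`. -/
def fiberIntegral (k : ι) (F : (ι → ℝ) → E) (x : ι → ℝ) : E :=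
  ∫ t, F (update x k t)

/-- The primitive of `F` in the `k`-th coordinate that vanishes at `-∞`. -/
def fiberPrimitive (k : ι) (F : (ι → ℝ) → E) (x : ι → ℝ) : E :=
  ∫ t in Iic (x k), F (update x k t)

/-- The function obtained from `F` by spreading its mass on each line parallel to the `k`-th axis
according to the profile `η`. When `∫ η = 1`, the integrals along these lines are preserved. -/
def fiberSpread (η : ℝ → ℝ) (k : ι) (F : (ι → ℝ) → E) (x : ι → ℝ) : E :=
  η (x k) • fiberIntegral k F x

lemma dependsOn_fiberIntegral {s : Set ι} (hF : DependsOn F s) :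
    DependsOn (fiberIntegral k F) (s \ {k}) := by
  intro x y hxy
  refine integral_congr_ae (.of_forall fun t ↦ hF fun i hi ↦ ?_)
  obtain rfl | hik := eq_or_ne i k
  · simp
  · simpa [hik] using hxy i ⟨hi, hik⟩

lemma fiberIntegral_smul_of_dependsOn {w : (ι → ℝ) → ℝ} (hw : DependsOn w {k}ᶜ) (x : ι → ℝ) :
    fiberIntegral k (fun y ↦ w y • F y) x = w x • fiberIntegral k F x := by
  have hw_update (t : ℝ) : w (update x k t) = w x := hw fun i hi ↦ update_of_ne hi t x
  simp only [fiberIntegral, hw_update, integral_smul]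

lemma fiberSpread_prod_smul {η : ι → ℝ → ℝ} {S : Finset ι} (hk : k ∉ S) :
    fiberSpread (η k) k (fun x ↦ (∏ i ∈ S, η i (x i)) • F x) =
      fun x ↦ (∏ i ∈ insert k S, η i (x i)) • fiberIntegral k F x := by
  have hprod : DependsOn (fun x : ι → ℝ ↦ ∏ i ∈ S, η i (x i)) {k}ᶜ := fun x y hxy ↦
    Finset.prod_congr rfl fun i hi ↦ by rw [hxy i (ne_of_mem_of_not_mem hi hk)]
  ext x
  rw [fiberSpread, fiberIntegral_smul_of_dependsOn hprod, Finset.prod_insert hk, mul_smul]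

lemma exists_ne_zero_of_fiberIntegral_ne_zero {x : ι → ℝ} (hx : fiberIntegral k F x ≠ 0) :
    ∃ t, F (update x k t) ≠ 0 := by
  contrapose! hx
  simp [fiberIntegral, hx]

lemma exists_le_ne_zero_of_fiberPrimitive_ne_zero {x : ι → ℝ} (hx : fiberPrimitive k F x ≠ 0) :
    ∃ t ≤ x k, F (update x k t) ≠ 0 := by
  contrapose! hx
  exact setIntegral_eq_zero_of_forall_eq_zero hx

lemma exists_ge_ne_zero_of_fiberPrimitive_ne_zero {x : ι → ℝ} (hx : fiberPrimitive k F x ≠ 0)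
    (hF : fiberIntegral k F x = 0) : ∃ t ≥ x k, F (update x k t) ≠ 0 := by
  contrapose! hx
  rw [← hF]
  exact setIntegral_eq_integral_of_forall_compl_eq_zero fun t ht ↦ hx t (not_le.1 ht).le

lemma support_fiberSpread_subset (hη : support η ⊆ K k) (hF : support F ⊆ univ.pi K) :
    support (fiberSpread η k F) ⊆ univ.pi K := by
  intro x hx i _
  obtain ⟨hηx, hFx⟩ := smul_ne_zero_iff.1 hx
  obtain rfl | hik := eq_or_ne i k
  · exact hη hηx
  · obtain ⟨t, ht⟩ := exists_ne_zero_of_fiberIntegral_ne_zero hFx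
    simpa [hik] using hF ht i trivial

lemma support_fiberPrimitive_subset (hK : (K k).OrdConnected) (hF : support F ⊆ univ.pi K)
    (hF0 : fiberIntegral k F = 0) : support (fiberPrimitive k F) ⊆ univ.pi K := by
  intro x hx i _
  obtain ⟨t, htx, ht⟩ := exists_le_ne_zero_of_fiberPrimitive_ne_zero hx
  obtain ⟨u, hxu, hu⟩ := exists_ge_ne_zero_of_fiberPrimitive_ne_zero hx (congrFun hF0 x)
  obtain rfl | hik := eq_or_ne i k
  · have htK : t ∈ K i := by simpa using hF ht i trivial
    have huK : u ∈ K i := by simpa using hF hu i trivial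
    exact hK.out htK huK ⟨htx, hxu⟩
  · simpa [hik] using hF ht i trivial

lemma fiberIntegral_fiberSpread [CompleteSpace E] (hη : ∫ t, η t = 1) :
    fiberIntegral k (fiberSpread η k F) = fiberIntegral k F := by
  ext x
  simp only [fiberSpread, fiberIntegral, update_self, update_idem, integral_smul_const, hη,
    one_smul]

lemma hasDerivAt_fiberPrimitive_update [CompleteSpace E] (hF : Continuous F)
    (hK : IsCompact (K k)) (hFK : support F ⊆ univ.pi K) (x : ι → ℝ) :
    HasDerivAt (fun t ↦ fiberPrimitive k F (update x k t)) (F x) (x k) := by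
  have hline : Continuous fun t ↦ F (update x k t) :=
    hF.comp (continuous_const.update k continuous_id)
  have hint := integrable_comp_update hF hK hFK x
  have hsplit (t : ℝ) : fiberPrimitive k F (update x k t) =
      (∫ u in Iic 0, F (update x k u)) + ∫ u in (0 : ℝ)..t, F (update x k u) := by
    rw [← intervalIntegral.integral_Iic_sub_Iic hint.integrableOn hint.integrableOn]
    simp [fiberPrimitive]
  simp only [hsplit]
  simpa using (hline.integral_hasStrictDerivAt 0 (x k)).hasDerivAt.const_add
    (∫ u in Iic 0, F (update x k u))

end Fiber

section FiberSmoothness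

variable {ι E : Type*} [Fintype ι] [DecidableEq ι] [NormedAddCommGroup E] [NormedSpace ℝ E]
  {k : ι} {F : (ι → ℝ) → E} {K : ι → Set ℝ} {η : ℝ → ℝ} {m : ℕ∞}

lemma contDiff_uncurry_update {m : WithTop ℕ∞} (k : ι) :
    ContDiff ℝ m fun p : (ι → ℝ) × ℝ ↦ update p.1 k p.2 := by
  refine contDiff_pi.2 fun i ↦ ?_
  obtain rfl | hik := eq_or_ne i k
  · simpa using contDiff_snd
  · simpa [hik] using contDiff_pi.1 contDiff_fst i

lemma contDiff_integral_smul_comp_update {w : ℝ → ℝ} (hw : LocallyIntegrable w)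
    (hF : ContDiff ℝ m F) (hK : IsCompact (K k)) (hFK : support F ⊆ univ.pi K) :
    ContDiff ℝ m fun x ↦ ∫ t, w (x k - t) • F (update x k t) := by
  have hvanish (x : ι → ℝ) (t : ℝ) (_ : x ∈ univ) (ht : t ∉ K k) : F (update x k t) = 0 := by
    contrapose! ht
    simpa using hFK ht k trivial
  have hconv := contDiffOn_convolution_right_with_param_comp (μ := volume)
    (ContinuousLinearMap.lsmul ℝ ℝ) (contDiff_apply ℝ ℝ k).contDiffOn isOpen_univ hK hvanish hw
    (hF.comp (contDiff_uncurry_update k)).contDiffOn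
  simpa [contDiffOn_univ, convolution_eq_swap] using hconv

lemma contDiff_fiberIntegral (hF : ContDiff ℝ m F) (hK : IsCompact (K k))
    (hFK : support F ⊆ univ.pi K) : ContDiff ℝ m (fiberIntegral k F) := by
  unfold fiberIntegral
  simpa using contDiff_integral_smul_comp_update (locallyIntegrable_const 1) hF hK hFK

lemma contDiff_fiberPrimitive (hF : ContDiff ℝ m F) (hK : IsCompact (K k))
    (hFK : support F ⊆ univ.pi K) : ContDiff ℝ m (fiberPrimitive k F) := by
  -- In the `k`-th coordinate, `fiberPrimitive` is the convolution with the Heaviside function.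
  have hheaviside : LocallyIntegrable ((Ici (0 : ℝ)).indicator fun _ ↦ (1 : ℝ)) :=
    (locallyIntegrable_const 1).indicator measurableSet_Ici
  convert contDiff_integral_smul_comp_update hheaviside hF hK hFK with x
  rw [fiberPrimitive, ← integral_indicator measurableSet_Iic]
  congr with t
  by_cases h : t ≤ x k <;> simp [indicator, h]

lemma contDiff_fiberSpread (hη : ContDiff ℝ m η) (hF : ContDiff ℝ m F) (hK : IsCompact (K k))
    (hFK : support F ⊆ univ.pi K) : ContDiff ℝ m (fiberSpread η k F) :=
  (hη.comp (contDiff_apply ℝ ℝ k)).smul (contDiff_fiberIntegral hF hK hFK)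

variable [CompleteSpace E]

lemma fderiv_fiberPrimitive_single (hm : m ≠ 0) (hF : ContDiff ℝ m F) (hK : IsCompact (K k))
    (hFK : support F ⊆ univ.pi K) (x : ι → ℝ) :
    fderiv ℝ (fiberPrimitive k F) x (Pi.single k 1) = F x := by
  have hdiff : Differentiable ℝ (fiberPrimitive k F) :=
    (contDiff_fiberPrimitive hF hK hFK).differentiable (mod_cast hm)
  have hchain := (hdiff (update x k (x k))).hasFDerivAt.comp_hasDerivAt (x k)
    (hasDerivAt_update x k (x k))
  rw [update_eq_self] at hchain
  exact hchain.unique (hasDerivAt_fiberPrimitive_update hF.continuous hK hFK x)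

lemma exists_fderiv_single_eq_sub_fiberSpread (hm : m ≠ 0) (hK : IsCompact (K k))
    (hKc : (K k).OrdConnected) (hη : ContDiff ℝ m η) (hηK : support η ⊆ K k)
    (hη1 : ∫ t, η t = 1) (hF : ContDiff ℝ m F) (hFK : support F ⊆ univ.pi K) :
    ∃ ψ : (ι → ℝ) → E, ContDiff ℝ m ψ ∧ support ψ ⊆ univ.pi K ∧
      ∀ x, fderiv ℝ ψ x (Pi.single k 1) = F x - fiberSpread η k F x := by
  have hA : ContDiff ℝ m (fiberSpread η k F) := contDiff_fiberSpread hη hF hK hFK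
  have hAK : support (fiberSpread η k F) ⊆ univ.pi K := support_fiberSpread_subset hηK hFK
  have hG : ContDiff ℝ m (F - fiberSpread η k F) := hF.sub hA
  have hGK : support (F - fiberSpread η k F) ⊆ univ.pi K :=
    (support_sub F _).trans (union_subset hFK hAK)
  have hG0 : fiberIntegral k (F - fiberSpread η k F) = 0 := by
    ext x
    calc fiberIntegral k (F - fiberSpread η k F) x
        = fiberIntegral k F x - fiberIntegral k (fiberSpread η k F) x :=
          integral_sub (integrable_comp_update hF.continuous hK hFK x)
            (integrable_comp_update hA.continuous hK hAK x)
      _ = 0 := by rw [fiberIntegral_fiberSpread hη1, sub_self]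
  exact ⟨fiberPrimitive k (F - fiberSpread η k F), contDiff_fiberPrimitive hG hK hGK,
    support_fiberPrimitive_subset hKc hGK hG0, fderiv_fiberPrimitive_single hm hG hK hGK⟩

end FiberSmoothness

section Box

variable {ι E : Type*} [Fintype ι] [DecidableEq ι]
  [NormedAddCommGroup E] [NormedSpace ℝ E] [CompleteSpace E] {m : ℕ∞} {K : ι → Set ℝ}
  {η : ι → ℝ → ℝ} {φ : (ι → ℝ) → E}

lemma exists_eq_sum_fderiv_single_add_prod_smul (hm : m ≠ 0) (hK : ∀ i, IsCompact (K i))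
    (hKc : ∀ i, (K i).OrdConnected) (hη : ∀ i, ContDiff ℝ m (η i))
    (hηK : ∀ i, support (η i) ⊆ K i) (hη1 : ∀ i, ∫ t, η i t = 1) (hφ : ContDiff ℝ m φ)
    (hφK : support φ ⊆ univ.pi K) (S : Finset ι) :
    ∃ (ψ : ι → (ι → ℝ) → E) (f g : (ι → ℝ) → E),
      (∀ k, ContDiff ℝ m (ψ k) ∧ support (ψ k) ⊆ univ.pi K) ∧
      (ContDiff ℝ m f ∧ support f ⊆ univ.pi K) ∧
      (f = fun x ↦ (∏ i ∈ S, η i (x i)) • g x) ∧ DependsOn g (S : Set ι)ᶜ ∧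
      ∀ x, φ x = ∑ k ∈ S, fderiv ℝ (ψ k) x (Pi.single k 1) + f x := by
  induction S using Finset.induction_on with
  | empty =>
    exact ⟨0, φ, φ, fun _ ↦ ⟨contDiff_const, by simp⟩, ⟨hφ, hφK⟩, by simp,
      by simpa using dependsOn_univ φ, by simp⟩
  | insert k S hk ih =>
    obtain ⟨ψ, f, g, hψ, ⟨hf, hfK⟩, hfg, hg, hφ_eq⟩ := ih
    obtain ⟨ψk, hψk, hψkK, hψk_eq⟩ := exists_fderiv_single_eq_sub_fiberSpread hm (hK k)
      (hKc k) (hη k) (hηK k) (hη1 k) hf hfK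
    refine ⟨update ψ k ψk, fiberSpread (η k) k f, fiberIntegral k g, ?_,
      ⟨contDiff_fiberSpread (hη k) hf (hK k) hfK, support_fiberSpread_subset (hηK k) hfK⟩,
      by rw [hfg, fiberSpread_prod_smul hk], ?_, fun x ↦ ?_⟩
    · exact (forall_update_iff ψ fun _ f ↦ ContDiff ℝ m f ∧ support f ⊆ univ.pi K).2
        ⟨⟨hψk, hψkK⟩, fun j _ ↦ hψ j⟩
    · have hcompl : ((insert k S : Finset ι) : Set ι)ᶜ = (S : Set ι)ᶜ \ {k} := by
        ext; simp [and_comm]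
      rw [hcompl]
      exact dependsOn_fiberIntegral hg
    · have hsum : ∑ j ∈ S, fderiv ℝ (update ψ k ψk j) x (Pi.single j 1) =
          ∑ j ∈ S, fderiv ℝ (ψ j) x (Pi.single j 1) :=
        Finset.sum_congr rfl fun j hj ↦ by rw [update_of_ne (ne_of_mem_of_not_mem hj hk)]
      rw [Finset.sum_insert hk, hsum, update_self, hψk_eq, hφ_eq x]
      abel

theorem exists_eq_sum_fderiv_single_add_prod_smul_integral (hm : m ≠ 0)
    (hK : ∀ i, IsCompact (K i)) (hKc : ∀ i, (K i).OrdConnected)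
    (hη : ∀ i, ContDiff ℝ m (η i)) (hηK : ∀ i, support (η i) ⊆ K i)
    (hη1 : ∀ i, ∫ t, η i t = 1) (hφ : ContDiff ℝ m φ) (hφK : support φ ⊆ univ.pi K) :
    ∃ ψ : ι → (ι → ℝ) → E, (∀ k, ContDiff ℝ m (ψ k) ∧ support (ψ k) ⊆ univ.pi K) ∧
      ∀ x, φ x = ∑ k, fderiv ℝ (ψ k) x (Pi.single k 1) + (∏ i, η i (x i)) • ∫ y, φ y := by
  obtain ⟨ψ, f, g, hψ, ⟨hf, hfK⟩, rfl, hg, hφ_eq⟩ :=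
    exists_eq_sum_fderiv_single_add_prod_smul hm hK hKc hη hηK hη1 hφ hφK Finset.univ
  refine ⟨ψ, hψ, fun x ↦ ?_⟩
  have hm' : (m : WithTop ℕ∞) ≠ 0 := mod_cast hm
  have hbox : IsCompact (univ.pi K) := isCompact_univ_pi hK
  have hψc (k : ι) : HasCompactSupport (ψ k) := .of_support_subset_isCompact hbox (hψ k).2
  have hg_const (y : ι → ℝ) : g y = g x := hg (by simp)
  have hint_residual : ∫ y, (∏ i, η i (y i)) • g y = g x := by
    simp only [hg_const, integral_smul_const, integral_fintype_prod_volume_eq_prod, hη1,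
      Finset.prod_const_one, one_smul]
  have hint : ∫ y, φ y = g x := by
    simp only [hφ_eq]
    rw [integral_add (integrable_finsetSum _ fun k _ ↦
        integrable_fderiv_apply_of_hasCompactSupport hm' (hψ k).1 (hψc k) _)
      (hf.continuous.integrable_of_hasCompactSupport (.of_support_subset_isCompact hbox hfK)),
      integral_sum_fderiv_apply_eq_zero hm' (fun k _ ↦ (hψ k).1) (fun k _ ↦ hψc k),
      hint_residual, zero_add]
  rw [hint, ← hφ_eq]

theorem exists_eq_sum_fderiv_single_of_integral_eq_zero (hm : m ≠ 0) {I : ι → Set ℝ}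
    (hI : ∀ i, IsOpen (I i)) (hIc : ∀ i, (I i).OrdConnected) (hIne : ∀ i, (I i).Nonempty)
    (hφ : ContDiff ℝ m φ) (hφc : HasCompactSupport φ) (hφI : tsupport φ ⊆ univ.pi I)
    (hφ0 : ∫ x, φ x = 0) :
    ∃ ψ : ι → (ι → ℝ) → E,
      (∀ k, ContDiff ℝ m (ψ k) ∧ HasCompactSupport (ψ k) ∧ tsupport (ψ k) ⊆ univ.pi I) ∧
      ∀ x, φ x = ∑ k, fderiv ℝ (ψ k) x (Pi.single k 1) := by
  choose η hη hηc hηI hη1 using fun i ↦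
    exists_contDiff_tsupport_subset_integral_eq_one (μ := volume) m (hI i) (hIne i)
  have hproj (i : ι) : MapsTo (eval i) (tsupport φ) (I i) := fun x hx ↦ hφI hx i trivial
  choose K hK hKc hTK hKI using fun i ↦ exists_isCompact_ordConnected_between
    ((hφc.isCompact.image (continuous_apply i)).union (hηc i)) (hIc i)
    (union_subset (hproj i).image_subset (hηI i))
  have hφK : support φ ⊆ univ.pi K := fun x hx i _ ↦
    hTK i (.inl (mem_image_of_mem _ (subset_tsupport φ hx)))
  have hηK (i : ι) : support (η i) ⊆ K i := fun t ht ↦ hTK i (.inr (subset_tsupport _ ht))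
  obtain ⟨ψ, hψ, hφ_eq⟩ :=
    exists_eq_sum_fderiv_single_add_prod_smul_integral hm hK hKc hη hηK hη1 hφ hφK
  have hbox : IsCompact (univ.pi K) := isCompact_univ_pi hK
  refine ⟨ψ, fun k ↦ ⟨(hψ k).1, .of_support_subset_isCompact hbox (hψ k).2, ?_⟩, ?_⟩
  · exact (closure_minimal (hψ k).2 hbox.isClosed).trans (pi_mono fun i _ ↦ hKI i)
  · simpa [hφ0] using hφ_eq

end Box

section Euclidean

variable {ι E : Type*} [DecidableEq ι] [NormedAddCommGroup E] [NormedSpace ℝ E]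

lemma fderiv_comp_equiv_single [Finite ι] (f : (ι → ℝ) → E) (x : EuclideanSpace ℝ ι) (k : ι) :
    fderiv ℝ (f ∘ EuclideanSpace.equiv ι ℝ) x (EuclideanSpace.single k 1) =
      fderiv ℝ f (EuclideanSpace.equiv ι ℝ x) (Pi.single k 1) := by
  have := Fintype.ofFinite ι
  exact DFunLike.congr_fun (EuclideanSpace.equiv ι ℝ).comp_right_fderiv (EuclideanSpace.single k 1)

theorem divergence_decomposition_in_cube_general [Fintype ι] [CompleteSpace E] {m : ℕ∞} (hm : m ≠ 0)
    {I : ι → Set ℝ} (hI : ∀ i, IsOpen (I i)) (hIc : ∀ i, (I i).OrdConnected)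
    (hIne : ∀ i, (I i).Nonempty) {φ : EuclideanSpace ℝ ι → E} (hφ : ContDiff ℝ m φ)
    (hφc : HasCompactSupport φ) (hφI : tsupport φ ⊆ {x | ∀ i, x i ∈ I i}) :
    (∃ ψ : ι → EuclideanSpace ℝ ι → E,
        (∀ k, ContDiff ℝ m (ψ k) ∧ HasCompactSupport (ψ k) ∧
          tsupport (ψ k) ⊆ {x | ∀ i, x i ∈ I i}) ∧
        ∀ x, φ x = ∑ k, fderiv ℝ (ψ k) x (EuclideanSpace.single k 1)) ↔
      ∫ x, φ x = 0 := by
  let e := EuclideanSpace.equiv ι ℝ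
  constructor
  · rintro ⟨ψ, hψ, hφ_eq⟩
    simp only [hφ_eq]
    exact integral_sum_fderiv_apply_eq_zero (mod_cast hm) (fun k _ ↦ (hψ k).1)
      (fun k _ ↦ (hψ k).2.1) _
  · intro hφ0
    have hφe0 : ∫ y, (φ ∘ e.symm) y = 0 :=
      ((PiLp.volume_preserving_toLp ι).integral_comp
        (MeasurableEquiv.toLp 2 (ι → ℝ)).measurableEmbedding φ).trans hφ0
    have hφeI : tsupport (φ ∘ e.symm) ⊆ univ.pi I :=
      (tsupport_comp_eq_preimage φ e.symm.toHomeomorph).trans_subset fun y hy i _ ↦ hφI hy i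
    obtain ⟨ψ, hψ, hφ_eq⟩ := exists_eq_sum_fderiv_single_of_integral_eq_zero hm hI hIc hIne
      (hφ.comp e.symm.contDiff) (hφc.comp_homeomorph e.symm.toHomeomorph) hφeI hφe0
    refine ⟨fun k ↦ ψ k ∘ e, fun k ↦ ⟨(hψ k).1.comp e.contDiff,
      (hψ k).2.1.comp_homeomorph e.toHomeomorph, ?_⟩, fun x ↦ ?_⟩
    · exact (tsupport_comp_eq_preimage (ψ k) e.toHomeomorph).trans_subset
        fun x hx i ↦ (hψ k).2.2 hx i trivial
    · calc φ x = ∑ k, fderiv ℝ (ψ k) (e x) (Pi.single k 1) := hφ_eq (e x)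
        _ = ∑ k, fderiv ℝ (ψ k ∘ e) x (EuclideanSpace.single k 1) :=
          Finset.sum_congr rfl fun k _ ↦ (fderiv_comp_equiv_single (ψ k) x k).symm

end Euclidean

/-- **Lemma 2.5.** A smooth function compactly supported in an open axis-parallel cube
`Q` is a sum of coordinate partial derivatives of smooth functions compactly supported
in `Q` if and only if it has zero mean. -/
theorem divergence_decomposition_in_cube
    (n : ℕ) (hn : 1 ≤ n) (a : Fin n → ℝ) (s : ℝ) (hs : 0 < s)
    (Q : Set (EuclideanSpace ℝ (Fin n)))
    (hQ : Q = {x : EuclideanSpace ℝ (Fin n) | ∀ i, x i ∈ Ioo (a i) (a i + s)})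
    (φ : EuclideanSpace ℝ (Fin n) → ℝ) (hφ : ContDiff ℝ (⊤ : ℕ∞) φ)
    (hφc : HasCompactSupport φ) (hφQ : tsupport φ ⊆ Q) :
    (∃ ψ : Fin n → EuclideanSpace ℝ (Fin n) → ℝ,
        (∀ k, ContDiff ℝ (⊤ : ℕ∞) (ψ k) ∧ HasCompactSupport (ψ k) ∧ tsupport (ψ k) ⊆ Q) ∧
        ∀ x, φ x = ∑ k : Fin n, pderivIdx n k (ψ k) x) ↔
      ∫ x, φ x = 0 := by
  subst hQ
  exact divergence_decomposition_in_cube_general (by simp) (fun _ ↦ isOpen_Ioo)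
    (fun _ ↦ ordConnected_Ioo) (fun _ ↦ nonempty_Ioo.2 (lt_add_of_pos_right _ hs)) hφ hφc hφQ
end
end

section
/- Let n ≥ 1 and N ≥ 1 be integers. There exists a constant c = c(N,n) with the following property: for every ball B = B(x₀, r₀) ⊆ ℝⁿ and every f ∈ L¹(2B) there is a set E ⊆ B of Lebesgue measure zero such that for all x, y ∈ B ∖ E one has |f(x) − f(y)| ≤ c · |x − y| · ( 𝔐_{|x−y|,N} f(x) + 𝔐_{|x−y|,N} f(y) ), where for z ∈ B and ρ > 0, 𝔐_{ρ,N} f(z) := max_{1≤j≤n} sup { |∫_{2B} f ∂_j φ dm| : 0 < r' ≤ ρ, φ ∈ A_N(B(z,r')) }. -/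
open MeasureTheory Metric Set ENNReal NNReal

noncomputable section

/-- The multi-index partial derivative `∂^α φ`. -/
def multiPartial (n : ℕ) (α : Fin n → ℕ) (φ : EuclideanSpace ℝ (Fin n) → ℝ) :
    EuclideanSpace ℝ (Fin n) → ℝ :=
  (List.finRange n).foldr (fun j ψ => (pderivIdx n j)^[α j] ψ) φ

/-- The class `A_N(B(z,r'))` of smooth test functions supported in `B(z,r')` with
`|∂^α φ| ≤ r'^{-n-|α|}` for every multi-index `α` with `|α| ≤ N`. -/
def memTestClass (n N : ℕ) (z : EuclideanSpace ℝ (Fin n)) (r' : ℝ)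
    (φ : EuclideanSpace ℝ (Fin n) → ℝ) : Prop :=
  ContDiff ℝ (⊤ : ℕ∞) φ ∧ tsupport φ ⊆ ball z r' ∧
    ∀ α : Fin n → ℕ, (∑ j, α j) ≤ N →
      ∀ x, |multiPartial n α φ x| ≤ (r'⁻¹) ^ (n + ∑ j, α j)

/-- The local grand maximal function of the (distributional) gradient of `f`:
`𝔐_{ρ,N} f(z) = max_j sup { |∫_S f ∂_j φ| : 0 < r' ≤ ρ, φ ∈ A_N(B(z,r')) }`. -/
def grandMaxOn (n N : ℕ) (S : Set (EuclideanSpace ℝ (Fin n)))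
    (f : EuclideanSpace ℝ (Fin n) → ℝ) (ρ : ℝ) (z : EuclideanSpace ℝ (Fin n)) : ℝ≥0∞ :=
  ⨆ j : Fin n, ⨆ (r' : {s : ℝ // 0 < s ∧ s ≤ ρ}),
    ⨆ (φ : {φ : EuclideanSpace ℝ (Fin n) → ℝ // memTestClass n N z r'.1 φ}),
      ENNReal.ofReal |∫ y in S, f y * pderivIdx n j φ.1 y|

/-!
Fix a smooth profile `θ` of integral one supported in the unit ball and let `θ_{x,s}` be its
`L¹`-normalised dilation to scale `s` about `x`. Its derivative in `s` is minus the divergence of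
the field `z ↦ s⁻ⁿ θ(u) u`, `u = (z - x) / s`, whose components are constant multiples of elements
of `A_N(B(x,s))`. So `s ↦ ∫ f θ_{x,s}` is Lipschitz on `(0, d]` with constant at most a multiple of
`𝔐_{d,N} f(x)`, and at a Lebesgue point it tends to `f x` as `s → 0`.

Given `x` and `y` at distance `d`, translating the profile by a vector of length `1/2` makes the
dilation to scale `d` about `x` coincide with the one about `y`: both are a fixed kernel centred at
the midpoint. Comparing `f x` and `f y` with this common average gives the estimate.
-/

open Filter Module
open scoped Topology

section SmoothBounds

variable {E G : Type*} [NormedAddCommGroup E] [NormedSpace ℝ E] [NormedAddCommGroup G]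
  [NormedSpace ℝ G] {N : ℕ}

lemma exists_norm_iteratedFDeriv_le {g : E → G} (hg : ContDiff ℝ N g)
    (hc : HasCompactSupport g) :
    ∃ C, 0 ≤ C ∧ ∀ k ≤ N, ∀ x, ‖iteratedFDeriv ℝ k g x‖ ≤ C := by
  have bound (k : ℕ) (hk : k ≤ N) : ∃ B, ∀ x, ‖iteratedFDeriv ℝ k g x‖ ≤ B :=
    (hc.iteratedFDeriv k).exists_bound_of_continuous
      (hg.continuous_iteratedFDeriv (by exact_mod_cast hk))
  choose! B hB using bound
  have hB0 (k : ℕ) (hk : k ∈ Finset.range (N + 1)) : 0 ≤ B k :=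
    (norm_nonneg _).trans (hB k (Finset.mem_range_succ_iff.1 hk) 0)
  exact ⟨∑ k ∈ Finset.range (N + 1), B k, Finset.sum_nonneg hB0, fun k hk x =>
    (hB k hk x).trans (Finset.single_le_sum hB0 (Finset.mem_range_succ_iff.2 hk))⟩

lemma norm_iteratedFDeriv_smul_const_le {ψ : E → ℝ} (hψ : ContDiff ℝ N ψ) {k : ℕ} (hk : k ≤ N)
    (v : G) (x : E) :
    ‖iteratedFDeriv ℝ k (fun y => ψ y • v) x‖ ≤ ‖v‖ * ‖iteratedFDeriv ℝ k ψ x‖ := by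
  rw [← ContinuousLinearMap.norm_toSpanSingleton (𝕜 := ℝ) v]
  exact (ContinuousLinearMap.toSpanSingleton ℝ v).norm_iteratedFDeriv_comp_left
    hψ.contDiffAt (by exact_mod_cast hk)

/- In the variable `w = u - v` the field is `ψ w • w + ψ w • v`, which is affine in `v`. -/
lemma exists_norm_iteratedFDeriv_comp_sub_smul_id_le {ψ : E → ℝ} (hψ : ContDiff ℝ N ψ)
    (hc : HasCompactSupport ψ) {R : ℝ} (hR : 0 ≤ R) :
    ∃ C, 0 < C ∧ ∀ v, ‖v‖ ≤ R → ∀ k ≤ N, ∀ u,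
      ‖iteratedFDeriv ℝ k (fun u => ψ (u - v) • u) u‖ ≤ C := by
  obtain ⟨A, hA0, hA⟩ := exists_norm_iteratedFDeriv_le hψ hc
  obtain ⟨B, hB0, hB⟩ := exists_norm_iteratedFDeriv_le (hψ.smul contDiff_id) hc.smul_right
  refine ⟨B + R * A + 1, by positivity, fun v hv k hk u => ?_⟩
  have translate : (fun u => ψ (u - v) • u) =
      fun u => ((fun w => ψ w • w) + fun w => ψ w • v) (u - v) := by
    funext u
    simp [← smul_add]
  have hψk : ContDiff ℝ k ψ := hψ.of_le (by exact_mod_cast hk)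
  rw [translate, iteratedFDeriv_comp_sub,
    iteratedFDeriv_add_apply (by fun_prop) (by fun_prop)]
  calc _ ≤ ‖iteratedFDeriv ℝ k (fun w => ψ w • w) (u - v)‖ +
        ‖iteratedFDeriv ℝ k (fun w => ψ w • v) (u - v)‖ := norm_add_le _ _
    _ ≤ B + R * A := by
        gcongr
        · exact hB k hk _
        · exact (norm_iteratedFDeriv_smul_const_le hψ hk v _).trans
            (mul_le_mul hv (hA k hk _) (norm_nonneg _) hR)
    _ ≤ B + R * A + 1 := by linarith

end SmoothBounds

section Rescale

variable {E : Type*} [NormedAddCommGroup E] [NormedSpace ℝ E] {θ : E → ℝ} {x : E} {s : ℝ}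

/-- The `L¹`-normalised dilation `z ↦ s⁻ⁿ θ((z - x) / s)` of a profile `θ` about `x`, where `n` is
the dimension of the space. -/
def rescale (θ : E → ℝ) (x : E) (s : ℝ) (z : E) : ℝ :=
  s⁻¹ ^ finrank ℝ E * θ (s⁻¹ • (z - x))

/-- The divergence `n θ(u) + Dθ(u) u` of the vector field `u ↦ θ(u) u`, which generates the
dilations of `θ`; it is written without coordinates. -/
def radialDiv (θ : E → ℝ) (u : E) : ℝ :=
  finrank ℝ E * θ u + fderiv ℝ θ u u

lemma rescale_const_smul (c : ℝ) (θ : E → ℝ) (x : E) (s : ℝ) :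
    rescale (c • θ) x s = c • rescale θ x s := by
  funext z
  exact mul_left_comm _ _ _

lemma rescale_comp_sub (θ : E → ℝ) (x v : E) (hs : s ≠ 0) :
    rescale (fun u => θ (u - v)) x s = rescale θ (x + s • v) s := by
  funext z
  simp only [rescale, ← sub_sub, smul_sub, inv_smul_smul₀ hs]

lemma contDiff_rescale {m : WithTop ℕ∞} (hθ : ContDiff ℝ m θ) (x : E) (s : ℝ) :
    ContDiff ℝ m (rescale θ x s) := by
  unfold rescale
  fun_prop

lemma continuous_rescale (hθ : Continuous θ) (x : E) (s : ℝ) : Continuous (rescale θ x s) := by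
  unfold rescale
  fun_prop

lemma tsupport_rescale_subset_ball (hs : 0 < s) (hθ : tsupport θ ⊆ ball 0 1) (x : E) :
    tsupport (rescale θ x s) ⊆ ball x s := by
  intro z hz
  have hz' : s⁻¹ • (z - x) ∈ tsupport θ :=
    tsupport_comp_subset_preimage θ (f := fun z => s⁻¹ • (z - x)) (by fun_prop)
      (tsupport_mul_subset_right hz)
  have := hθ hz'
  rwa [mem_ball_zero_iff, norm_smul, norm_inv, Real.norm_of_nonneg hs.le, inv_mul_lt_one₀ hs,
    ← mem_ball_iff_norm] at this

lemma abs_rescale_le {K : ℝ} (hs : 0 < s) (hK : ∀ u, |θ u| ≤ K) (x z : E) :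
    |rescale θ x s z| ≤ s⁻¹ ^ finrank ℝ E * K := by
  rw [rescale, abs_mul, abs_of_pos (by positivity)]
  gcongr
  exact hK _

lemma norm_iteratedFDeriv_rescale {k : ℕ} (hθ : ContDiff ℝ k θ) (hs : 0 < s) (x z : E) :
    ‖iteratedFDeriv ℝ k (rescale θ x s) z‖ =
      s⁻¹ ^ (finrank ℝ E + k) * ‖iteratedFDeriv ℝ k θ (s⁻¹ • (z - x))‖ := by
  have factor : rescale θ x s = s⁻¹ ^ finrank ℝ E • fun z => θ (s⁻¹ • (z - x)) := rfl
  rw [factor, iteratedFDeriv_const_smul_apply (by fun_prop),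
    iteratedFDeriv_comp_sub (f := fun w => θ (s⁻¹ • w)), iteratedFDeriv_comp_const_smul _ hθ,
    norm_smul, norm_smul, ← mul_assoc, ← norm_mul, ← pow_add,
    Real.norm_of_nonneg (by positivity)]

lemma fderiv_rescale (θ : E → ℝ) (x : E) (s : ℝ) (z : E) :
    fderiv ℝ (rescale θ x s) z = (s⁻¹ ^ (finrank ℝ E + 1)) • fderiv ℝ θ (s⁻¹ • (z - x)) := by
  have factor : rescale θ x s = s⁻¹ ^ finrank ℝ E • fun z => θ (s⁻¹ • (z - x)) := rfl
  rw [factor, fderiv_const_smul_field, Pi.smul_apply, fderiv_comp_sub (f := fun w => θ (s⁻¹ • w)),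
    fderiv_comp_smul, smul_smul, pow_succ]

lemma hasDerivAt_rescale (hθ : Differentiable ℝ θ) (hs : s ≠ 0) (x z : E) :
    HasDerivAt (fun t => rescale θ x t z) (-(s⁻¹ * rescale (radialDiv θ) x s z)) s := by
  have hinv : HasDerivAt (fun t : ℝ => t⁻¹) (-(s ^ 2)⁻¹) s := hasDerivAt_inv hs
  have hprofile : HasDerivAt (fun t : ℝ => θ (t⁻¹ • (z - x)))
      (fderiv ℝ θ (s⁻¹ • (z - x)) (-(s ^ 2)⁻¹ • (z - x))) s :=
    (hθ _).hasFDerivAt.comp_hasDerivAt s (hinv.smul_const (z - x))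
  refine ((hinv.fun_pow (finrank ℝ E)).mul hprofile).congr_deriv ?_
  simp only [rescale, radialDiv, map_smul, smul_eq_mul, ← inv_pow]
  rcases finrank ℝ E with _ | n
  · simp only [CharP.cast_eq_zero]; ring
  · simp only [Nat.add_sub_cancel]; ring

lemma continuous_radialDiv (hθ : ContDiff ℝ 1 θ) : Continuous (radialDiv θ) :=
  (continuous_const.mul hθ.continuous).add
    ((hθ.continuous_fderiv one_ne_zero).clm_apply continuous_id)

lemma hasCompactSupport_radialDiv (hθ : HasCompactSupport θ) :
    HasCompactSupport (radialDiv θ) := by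
  refine hθ.mono' fun u hu => ?_
  contrapose! hu
  simp [radialDiv, image_eq_zero_of_notMem_tsupport hu,
    image_eq_zero_of_notMem_tsupport fun h => hu (tsupport_fderiv_subset ℝ h)]

end Rescale

section MetricSpace

variable {X G : Type*} [PseudoMetricSpace X]

lemma hasCompactSupport_of_tsupport_subset_ball [ProperSpace X] [Zero G] {θ : X → G} {x : X}
    {r : ℝ} (h : tsupport θ ⊆ ball x r) : HasCompactSupport θ :=
  (isCompact_closedBall x r).of_isClosed_subset (isClosed_tsupport θ)
    (h.trans ball_subset_closedBall)

variable [NormedAddCommGroup G]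

/-- `x` is a Lebesgue point of `F`: the mean oscillation of `F` about the value `F x` itself, over
closed balls centred at `x`, tends to zero. -/
def IsLebesguePoint [MeasurableSpace X] (μ : Measure X) (F : X → G) (x : X) : Prop :=
  Tendsto (fun s : ℝ => ⨍ y in closedBall x s, ‖F y - F x‖ ∂μ) (𝓝[>] 0) (𝓝 0)

lemma ae_isLebesguePoint [MeasurableSpace X] [BorelSpace X] [SecondCountableTopology X]
    {μ : Measure X} [IsUnifLocDoublingMeasure μ] [IsLocallyFiniteMeasure μ] {F : X → G}
    (hF : LocallyIntegrable F μ) : ∀ᵐ x ∂μ, IsLebesguePoint μ F x := by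
  filter_upwards [IsUnifLocDoublingMeasure.ae_tendsto_average_norm_sub μ hF 1] with x hx
  refine hx (fun _ => x) id tendsto_id ?_
  filter_upwards [self_mem_nhdsWithin] with s (hs : 0 < s)
  exact mem_closedBall_self (by positivity)

end MetricSpace

section Mollification

variable {E : Type*} [NormedAddCommGroup E] [NormedSpace ℝ E]
  [MeasurableSpace E] [BorelSpace E] {μ : Measure E} {θ F : E → ℝ} {x : E} {s : ℝ}

lemma integrable_mul_rescale (hF : Integrable F μ) (hθ : Continuous θ)
    (hc : HasCompactSupport θ) (hs : 0 < s) (x : E) :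
    Integrable (fun z => F z * rescale θ x s z) μ := by
  obtain ⟨K, hK⟩ := hc.exists_bound_of_continuous hθ
  exact hF.mul_bdd (continuous_rescale hθ x s).aestronglyMeasurable
    (.of_forall fun z => abs_rescale_le hs hK x z)

lemma hasDerivAt_integral_mul_rescale (hF : Integrable F μ) (hθ : ContDiff ℝ 1 θ)
    (hc : HasCompactSupport θ) (hs : 0 < s) (x : E) :
    HasDerivAt (fun t => ∫ z, F z * rescale θ x t z ∂μ)
      (∫ z, F z * -(s⁻¹ * rescale (radialDiv θ) x s z) ∂μ) s := by
  have hdiv := continuous_radialDiv hθ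
  obtain ⟨K, hK⟩ := (hasCompactSupport_radialDiv hc).exists_bound_of_continuous hdiv
  have hs2 : 0 < s / 2 := half_pos hs
  have deriv_bound (z : E) (t : ℝ) (ht : t ∈ Ioi (s / 2)) :
      ‖F z * -(t⁻¹ * rescale (radialDiv θ) x t z)‖ ≤
        ‖F z‖ * ((s / 2)⁻¹ * ((s / 2)⁻¹ ^ finrank ℝ E * K)) := by
    have ht0 : 0 < t := hs2.trans ht
    have hst : s / 2 ≤ t := le_of_lt ht
    have hK0 : 0 ≤ K := (norm_nonneg _).trans (hK 0)
    rw [norm_mul, norm_neg, norm_mul, Real.norm_of_nonneg (inv_pos.2 ht0).le]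
    gcongr
    exact (abs_rescale_le ht0 hK x z).trans (by gcongr)
  exact (hasDerivAt_integral_of_dominated_loc_of_deriv_le (Ioi_mem_nhds (half_lt_self hs))
    (.of_forall fun t => hF.1.mul (continuous_rescale hθ.continuous x t).aestronglyMeasurable)
    (integrable_mul_rescale hF hθ.continuous hc hs x)
    (hF.1.mul (continuous_const.mul (continuous_rescale hdiv x s)).neg.aestronglyMeasurable)
    (.of_forall deriv_bound) (hF.norm.mul_const _)
    (.of_forall fun z t ht => (hasDerivAt_rescale (hθ.differentiable one_ne_zero)
      (hs2.trans ht).ne' x z).const_mul (F z))).2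

variable [FiniteDimensional ℝ E] [μ.IsAddHaarMeasure]

lemma integral_rescale (θ : E → ℝ) (x : E) (hs : 0 < s) :
    ∫ z, rescale θ x s z ∂μ = ∫ u, θ u ∂μ := by
  simp only [rescale]
  rw [integral_const_mul, integral_sub_right_eq_self (fun z => θ (s⁻¹ • z)) x,
    Measure.integral_comp_inv_smul_of_nonneg μ θ hs.le, smul_eq_mul, ← mul_assoc, ← mul_pow,
    inv_mul_cancel₀ hs.ne', one_pow, one_mul]

lemma IsLebesguePoint.tendsto_integral_mul_rescale (hx : IsLebesguePoint μ F x)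
    (hF : LocallyIntegrable F μ) (hθ : Continuous θ) (hsupp : tsupport θ ⊆ ball 0 1)
    (hint : ∫ u, θ u ∂μ = 1) :
    Tendsto (fun s => ∫ z, F z * rescale θ x s z ∂μ) (𝓝[>] 0) (𝓝 (F x)) := by
  obtain ⟨K, hK⟩ :=
    (hasCompactSupport_of_tsupport_subset_ball hsupp).exists_bound_of_continuous hθ
  have unit_ball_pos : 0 < μ.real (ball 0 1) :=
    ENNReal.toReal_pos (measure_ball_pos μ 0 one_pos).ne' measure_ball_lt_top.ne
  simp only [mul_comm (F _)]
  refine tendsto_integral_smul_of_tendsto_average_norm_sub (K * μ.real (ball 0 1)) hx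
    (.of_forall fun s => hF.integrableOn_isCompact (isCompact_closedBall x s)) ?_ ?_ ?_
  · refine tendsto_const_nhds.congr' ?_
    filter_upwards [self_mem_nhdsWithin] with s (hs : 0 < s)
    rw [integral_rescale θ x hs, hint]
  · filter_upwards [self_mem_nhdsWithin] with s (hs : 0 < s)
    exact (subset_tsupport _).trans
      ((tsupport_rescale_subset_ball hs hsupp x).trans ball_subset_closedBall)
  · filter_upwards [self_mem_nhdsWithin] with s (hs : 0 < s) z
    rw [Measure.addHaar_real_closedBall μ x hs.le, mul_div_mul_right _ _ unit_ball_pos.ne',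
      div_eq_inv_mul, ← inv_pow]
    exact abs_rescale_le hs hK x z

lemma IsLebesguePoint.abs_integral_mul_rescale_sub_le (hx : IsLebesguePoint μ F x)
    (hF : Integrable F μ) (hθ : ContDiff ℝ 1 θ) (hsupp : tsupport θ ⊆ ball 0 1)
    (hint : ∫ u, θ u ∂μ = 1) {d M : ℝ} (hd : 0 < d)
    (hM : ∀ s ∈ Ioc 0 d, |∫ z, F z * -(s⁻¹ * rescale (radialDiv θ) x s z) ∂μ| ≤ M) :
    |∫ z, F z * rescale θ x d z ∂μ - F x| ≤ M * d := by
  have hc := hasCompactSupport_of_tsupport_subset_ball hsupp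
  have hM0 : 0 ≤ M := (abs_nonneg _).trans (hM d (right_mem_Ioc.2 hd))
  have hlim := hx.tendsto_integral_mul_rescale hF.locallyIntegrable hθ.continuous hsupp hint
  refine le_of_tendsto (hlim.const_sub _).abs ?_
  filter_upwards [Ioo_mem_nhdsGT hd] with a ⟨ha, had⟩
  calc |∫ z, F z * rescale θ x d z ∂μ - ∫ z, F z * rescale θ x a z ∂μ|
      ≤ M * ‖d - a‖ := (convex_Icc a d).norm_image_sub_le_of_norm_hasDerivWithin_le
        (fun s hs => (hasDerivAt_integral_mul_rescale hF hθ hc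
          (ha.trans_le hs.1) x).hasDerivWithinAt)
        (fun s hs => hM s ⟨ha.trans_le hs.1, hs.2⟩)
        (left_mem_Icc.2 had.le) (right_mem_Icc.2 had.le)
    _ ≤ M * d := by
        rw [Real.norm_of_nonneg (sub_nonneg.2 had.le)]
        gcongr
        linarith

lemma exists_contDiff_tsupport_subset_integral_eq_one_s4 (μ : Measure E) [μ.IsAddHaarMeasure] {r : ℝ}
    (hr : 0 < r) :
    ∃ ψ : E → ℝ, ContDiff ℝ (⊤ : ℕ∞) ψ ∧ tsupport ψ ⊆ ball 0 r ∧ ∫ u, ψ u ∂μ = 1 := by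
  let bump : ContDiffBump (0 : E) := ⟨r / 4, r / 2, by positivity, by linarith⟩
  refine ⟨bump.normed μ, bump.contDiff_normed, ?_, bump.integral_normed⟩
  rw [bump.tsupport_normed_eq]
  exact closedBall_subset_ball (half_lt_self hr)

end Mollification

section PartialDerivatives

variable {n : ℕ} {φ θ : EuclideanSpace ℝ (Fin n) → ℝ}

lemma contDiff_pderivIdx (j : Fin n) (hφ : ContDiff ℝ (⊤ : ℕ∞) φ) :
    ContDiff ℝ (⊤ : ℕ∞) (pderivIdx n j φ) :=
  (hφ.fderiv_right (m := (⊤ : ℕ∞)) le_rfl).clm_apply contDiff_const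

lemma contDiff_foldr_pderivIdx (α : Fin n → ℕ) (l : List (Fin n))
    (hφ : ContDiff ℝ (⊤ : ℕ∞) φ) :
    ContDiff ℝ (⊤ : ℕ∞) (l.foldr (fun j ψ => (pderivIdx n j)^[α j] ψ) φ) := by
  induction l with
  | nil => exact hφ
  | cons j l ih =>
    exact Function.Iterate.rec (ContDiff ℝ (⊤ : ℕ∞)) ih (fun _ => contDiff_pderivIdx j) (α j)

lemma norm_iteratedFDeriv_pderivIdx_le (j : Fin n) (hφ : ContDiff ℝ (⊤ : ℕ∞) φ) (m : ℕ)
    (x : EuclideanSpace ℝ (Fin n)) :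
    ‖iteratedFDeriv ℝ m (pderivIdx n j φ) x‖ ≤ ‖iteratedFDeriv ℝ (m + 1) φ x‖ := by
  let evalBasis : (EuclideanSpace ℝ (Fin n) →L[ℝ] ℝ) →L[ℝ] ℝ :=
    ContinuousLinearMap.apply ℝ ℝ (EuclideanSpace.single j (1 : ℝ))
  have norm_evalBasis : ‖evalBasis‖ ≤ 1 := by
    refine ContinuousLinearMap.opNorm_le_bound _ zero_le_one fun L => ?_
    simpa [evalBasis, mul_comm] using L.le_opNorm (EuclideanSpace.single j (1 : ℝ))
  have hφ' : ContDiff ℝ (⊤ : ℕ∞) (fderiv ℝ φ) := hφ.fderiv_right le_rfl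
  calc ‖iteratedFDeriv ℝ m (evalBasis ∘ fderiv ℝ φ) x‖
      ≤ ‖evalBasis‖ * ‖iteratedFDeriv ℝ m (fderiv ℝ φ) x‖ :=
        evalBasis.norm_iteratedFDeriv_comp_left hφ'.contDiffAt (by exact_mod_cast le_top)
    _ ≤ ‖iteratedFDeriv ℝ m (fderiv ℝ φ) x‖ := mul_le_of_le_one_left (norm_nonneg _) norm_evalBasis
    _ = ‖iteratedFDeriv ℝ (m + 1) φ x‖ := norm_iteratedFDeriv_fderiv

lemma norm_iteratedFDeriv_iterate_pderivIdx_le (j : Fin n) (k : ℕ)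
    (hφ : ContDiff ℝ (⊤ : ℕ∞) φ) (m : ℕ) (x : EuclideanSpace ℝ (Fin n)) :
    ‖iteratedFDeriv ℝ m ((pderivIdx n j)^[k] φ) x‖ ≤ ‖iteratedFDeriv ℝ (m + k) φ x‖ := by
  induction k generalizing φ with
  | zero => exact le_rfl
  | succ k ih =>
    exact (ih (contDiff_pderivIdx j hφ)).trans (norm_iteratedFDeriv_pderivIdx_le j hφ (m + k) x)

lemma norm_iteratedFDeriv_foldr_pderivIdx_le (α : Fin n → ℕ) (l : List (Fin n))
    (hφ : ContDiff ℝ (⊤ : ℕ∞) φ) (m : ℕ) (x : EuclideanSpace ℝ (Fin n)) :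
    ‖iteratedFDeriv ℝ m (l.foldr (fun j ψ => (pderivIdx n j)^[α j] ψ) φ) x‖ ≤
      ‖iteratedFDeriv ℝ (m + (l.map α).sum) φ x‖ := by
  induction l generalizing m with
  | nil => exact le_rfl
  | cons j l ih =>
    rw [List.map_cons, List.sum_cons, ← add_assoc]
    exact (norm_iteratedFDeriv_iterate_pderivIdx_le j (α j)
      (contDiff_foldr_pderivIdx α l hφ) m x).trans (ih (m + α j))

lemma abs_multiPartial_le_norm_iteratedFDeriv (α : Fin n → ℕ) (hφ : ContDiff ℝ (⊤ : ℕ∞) φ)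
    (x : EuclideanSpace ℝ (Fin n)) :
    |multiPartial n α φ x| ≤ ‖iteratedFDeriv ℝ (∑ j, α j) φ x‖ := by
  have := norm_iteratedFDeriv_foldr_pderivIdx_le α (List.finRange n) hφ 0 x
  rwa [zero_add, norm_iteratedFDeriv_zero, ← Fin.sum_univ_def] at this

lemma pderivIdx_const_smul (j : Fin n) (c : ℝ) (φ : EuclideanSpace ℝ (Fin n) → ℝ) :
    pderivIdx n j (c • φ) = c • pderivIdx n j φ := by
  funext x
  simp [pderivIdx, fderiv_const_smul_field]

lemma pderivIdx_rescale (j : Fin n) (θ : EuclideanSpace ℝ (Fin n) → ℝ)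
    (x : EuclideanSpace ℝ (Fin n)) (s : ℝ) (z : EuclideanSpace ℝ (Fin n)) :
    pderivIdx n j (rescale θ x s) z = s⁻¹ * rescale (pderivIdx n j θ) x s z := by
  simp only [pderivIdx, rescale, fderiv_rescale, _root_.smul_apply, smul_eq_mul, pow_succ]
  ring

lemma sum_pderivIdx_coord_mul (hθ : Differentiable ℝ θ) (u : EuclideanSpace ℝ (Fin n)) :
    ∑ j, pderivIdx n j (fun w => w j * θ w) u = radialDiv θ u := by
  have product_rule (j : Fin n) : pderivIdx n j (fun w => w j * θ w) u =
      θ u + fderiv ℝ θ u (u j • EuclideanSpace.single j 1) := by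
    have hcoord : HasFDerivAt (fun w : EuclideanSpace ℝ (Fin n) => w j)
        (EuclideanSpace.proj j : EuclideanSpace ℝ (Fin n) →L[ℝ] ℝ) u :=
      (EuclideanSpace.proj j : EuclideanSpace ℝ (Fin n) →L[ℝ] ℝ).hasFDerivAt
    rw [pderivIdx, (hcoord.fun_mul (hθ u).hasFDerivAt).fderiv]
    simp [add_comm]
  have basis_expansion : ∑ j, u j • EuclideanSpace.single j (1 : ℝ) = u := by
    simpa using (EuclideanSpace.basisFun (Fin n) ℝ).sum_repr u
  simp only [product_rule, Finset.sum_add_distrib, ← map_sum, basis_expansion]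
  simp [radialDiv]

lemma sum_pderivIdx_rescale_coord_mul (hθ : Differentiable ℝ θ) (x : EuclideanSpace ℝ (Fin n))
    (s : ℝ) (z : EuclideanSpace ℝ (Fin n)) :
    ∑ j, pderivIdx n j (rescale (fun u => u j * θ u) x s) z =
      s⁻¹ * rescale (radialDiv θ) x s z := by
  simp only [pderivIdx_rescale, rescale, ← Finset.mul_sum, sum_pderivIdx_coord_mul hθ]

end PartialDerivatives

section GrandMaximal

variable {n N : ℕ} {S : Set (EuclideanSpace ℝ (Fin n))} {f F : EuclideanSpace ℝ (Fin n) → ℝ}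
  {φ θ ψ : EuclideanSpace ℝ (Fin n) → ℝ} {x : EuclideanSpace ℝ (Fin n)} {s ρ C : ℝ}

lemma grandMaxOn_univ_indicator (hS : MeasurableSet S) :
    grandMaxOn n N univ (S.indicator f) ρ x = grandMaxOn n N S f ρ x := by
  simp only [grandMaxOn, setIntegral_univ]
  simp only [← indicator_mul_left, integral_indicator hS]

lemma memTestClass_rescale (hθ : ContDiff ℝ (⊤ : ℕ∞) θ) (hsupp : tsupport θ ⊆ ball 0 1)
    (hbound : ∀ k ≤ N, ∀ u, ‖iteratedFDeriv ℝ k θ u‖ ≤ 1) (hs : 0 < s) :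
    memTestClass n N x s (rescale θ x s) := by
  refine ⟨contDiff_rescale hθ x s, tsupport_rescale_subset_ball hs hsupp x, fun α hα z => ?_⟩
  calc |multiPartial n α (rescale θ x s) z|
      ≤ ‖iteratedFDeriv ℝ (∑ j, α j) (rescale θ x s) z‖ :=
        abs_multiPartial_le_norm_iteratedFDeriv α (contDiff_rescale hθ x s) z
    _ = s⁻¹ ^ (n + ∑ j, α j) * ‖iteratedFDeriv ℝ (∑ j, α j) θ (s⁻¹ • (z - x))‖ := by
        rw [norm_iteratedFDeriv_rescale (hθ.of_le (by exact_mod_cast le_top)) hs,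
          finrank_euclideanSpace_fin]
    _ ≤ s⁻¹ ^ (n + ∑ j, α j) := mul_le_of_le_one_right (by positivity) (hbound _ hα _)

lemma enorm_integral_mul_pderivIdx_le_grandMaxOn (hφ : memTestClass n N x s φ) (hs : 0 < s)
    (hsρ : s ≤ ρ) (j : Fin n) :
    ‖∫ y in S, f y * pderivIdx n j φ y‖ₑ ≤ grandMaxOn n N S f ρ x := by
  rw [Real.enorm_eq_ofReal_abs]
  exact le_iSup_of_le j (le_iSup_of_le ⟨s, hs, hsρ⟩ (le_iSup_of_le ⟨φ, hφ⟩ le_rfl))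

lemma enorm_integral_mul_pderivIdx_rescale_le (hθ : ContDiff ℝ (⊤ : ℕ∞) θ)
    (hsupp : tsupport θ ⊆ ball 0 1) (hC : 0 < C)
    (hbound : ∀ k ≤ N, ∀ u, ‖iteratedFDeriv ℝ k θ u‖ ≤ C) (hs : 0 < s) (hsρ : s ≤ ρ)
    (j : Fin n) :
    ‖∫ y in S, f y * pderivIdx n j (rescale θ x s) y‖ₑ ≤
      ENNReal.ofReal C * grandMaxOn n N S f ρ x := by
  have normalized : memTestClass n N x s (rescale (C⁻¹ • θ) x s) := by
    refine memTestClass_rescale (contDiff_const.smul hθ)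
      ((tsupport_smul_subset_right (fun _ => C⁻¹) θ).trans hsupp) (fun k hk u => ?_) hs
    rw [iteratedFDeriv_const_smul_apply (hθ.contDiffAt.of_le (by exact_mod_cast le_top)),
      norm_smul, norm_inv, Real.norm_of_nonneg hC.le, inv_mul_le_one₀ hC]
    exact hbound k hk u
  have factor : ∫ y in S, f y * pderivIdx n j (rescale θ x s) y =
      C * ∫ y in S, f y * pderivIdx n j (rescale (C⁻¹ • θ) x s) y := by
    rw [← integral_const_mul]
    congr with y
    rw [rescale_const_smul, pderivIdx_const_smul, Pi.smul_apply, smul_eq_mul]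
    field_simp
  rw [factor, enorm_mul, Real.enorm_of_nonneg hC.le]
  gcongr
  exact enorm_integral_mul_pderivIdx_le_grandMaxOn normalized hs hsρ j

lemma norm_iteratedFDeriv_coord_mul_le (hθ : ContDiff ℝ (⊤ : ℕ∞) θ) (j : Fin n) (k : ℕ)
    (u : EuclideanSpace ℝ (Fin n)) :
    ‖iteratedFDeriv ℝ k (fun w => w j * θ w) u‖ ≤ ‖iteratedFDeriv ℝ k (fun w => θ w • w) u‖ := by
  let coord : EuclideanSpace ℝ (Fin n) →L[ℝ] ℝ := EuclideanSpace.proj j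
  have norm_coord : ‖coord‖ ≤ 1 :=
    coord.opNorm_le_bound zero_le_one fun w => by simpa [coord] using PiLp.norm_apply_le w j
  have coord_comp : (fun w => w j * θ w) = coord ∘ fun w => θ w • w := by
    funext w
    simp [coord, mul_comm]
  rw [coord_comp]
  exact (coord.norm_iteratedFDeriv_comp_left (hθ.smul contDiff_id).contDiffAt
    (by exact_mod_cast le_top)).trans (mul_le_of_le_one_left (norm_nonneg _) norm_coord)

lemma enorm_integral_mul_deriv_rescale_le (hF : Integrable F) (hθ : ContDiff ℝ (⊤ : ℕ∞) θ)
    (hsupp : tsupport θ ⊆ ball 0 1) (hC : 0 < C)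
    (hbound : ∀ k ≤ N, ∀ u, ‖iteratedFDeriv ℝ k (fun w => θ w • w) u‖ ≤ C)
    (hs : 0 < s) (hsρ : s ≤ ρ) :
    ‖∫ z, F z * -(s⁻¹ * rescale (radialDiv θ) x s z)‖ₑ ≤
      ENNReal.ofReal (n * C) * grandMaxOn n N univ F ρ x := by
  have coord_smooth (j : Fin n) : ContDiff ℝ (⊤ : ℕ∞) fun u => u j * θ u := by fun_prop
  have coord_supp (j : Fin n) : tsupport (fun u => u j * θ u) ⊆ ball 0 1 :=
    tsupport_mul_subset_right.trans hsupp
  have integrable_term (j : Fin n) :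
      Integrable fun z => F z * pderivIdx n j (rescale (fun u => u j * θ u) x s) z := by
    have hc := hasCompactSupport_of_tsupport_subset_ball (coord_supp j)
    simp only [pderivIdx_rescale, mul_left_comm (F _)]
    exact (integrable_mul_rescale hF (contDiff_pderivIdx j (coord_smooth j)).continuous
      (hc.fderiv_apply (𝕜 := ℝ) _) hs x).const_mul _
  simp only [mul_neg, integral_neg, enorm_neg,
    ← sum_pderivIdx_rescale_coord_mul (hθ.differentiable (by simp)), Finset.mul_sum]
  rw [integral_finsetSum _ fun j _ => integrable_term j]
  calc _ ≤ ∑ j, ‖∫ z, F z * pderivIdx n j (rescale (fun u => u j * θ u) x s) z‖ₑ :=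
        enorm_sum_le _ _
    _ ≤ ∑ _j : Fin n, ENNReal.ofReal C * grandMaxOn n N univ F ρ x := by
        refine Finset.sum_le_sum fun j _ => ?_
        rw [← setIntegral_univ]
        exact enorm_integral_mul_pderivIdx_rescale_le (coord_smooth j) (coord_supp j) hC
          (fun k hk u => (norm_iteratedFDeriv_coord_mul_le hθ j k u).trans (hbound k hk u))
          hs hsρ j
    _ = ENNReal.ofReal (n * C) * grandMaxOn n N univ F ρ x := by
        simp [ENNReal.ofReal_mul, mul_assoc]

lemma IsLebesguePoint.enorm_integral_mul_rescale_sub_le (hx : IsLebesguePoint volume F x)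
    (hF : Integrable F) (hθ : ContDiff ℝ (⊤ : ℕ∞) θ) (hsupp : tsupport θ ⊆ ball 0 1)
    (hint : ∫ u, θ u = 1) (hn : 1 ≤ n) (hC : 0 < C)
    (hbound : ∀ k ≤ N, ∀ u, ‖iteratedFDeriv ℝ k (fun w => θ w • w) u‖ ≤ C)
    {d : ℝ} (hd : 0 < d) :
    ‖(∫ z, F z * rescale θ x d z) - F x‖ₑ ≤
      ENNReal.ofReal (n * C * d) * grandMaxOn n N univ F d x := by
  obtain hM | hM := eq_or_ne (grandMaxOn n N univ F d x) ⊤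
  · rw [hM, ENNReal.mul_top (ENNReal.ofReal_pos.2 (by positivity)).ne']
    exact le_top
  have hM' : ENNReal.ofReal (n * C) * grandMaxOn n N univ F d x ≠ ⊤ :=
    ENNReal.mul_ne_top ENNReal.ofReal_ne_top hM
  have := hx.abs_integral_mul_rescale_sub_le hF (hθ.of_le (by simp)) hsupp hint
    (M := (ENNReal.ofReal (n * C) * grandMaxOn n N univ F d x).toReal) hd fun s hs => by
      rw [← Real.norm_eq_abs, ← toReal_enorm]
      exact ENNReal.toReal_mono hM'
        (enorm_integral_mul_deriv_rescale_le hF hθ hsupp hC hbound hs.1 hs.2)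
  rw [Real.enorm_eq_ofReal_abs, ENNReal.ofReal_mul (by positivity), mul_right_comm,
    ← ENNReal.ofReal_toReal hM', ← ENNReal.ofReal_mul ENNReal.toReal_nonneg]
  exact ENNReal.ofReal_le_ofReal this

lemma exists_enorm_integral_mul_rescale_sub_le (hn : 1 ≤ n) (N : ℕ)
    (hψ : ContDiff ℝ (⊤ : ℕ∞) ψ) (hsupp : tsupport ψ ⊆ ball 0 (1 / 2)) (hint : ∫ u, ψ u = 1) :
    ∃ c, 0 < c ∧ ∀ F, Integrable F → ∀ x, IsLebesguePoint volume F x → ∀ m d, 0 < d →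
      dist m x ≤ d / 2 → ‖(∫ z, F z * rescale ψ m d z) - F x‖ₑ ≤
        ENNReal.ofReal (c * d) * grandMaxOn n N univ F d x := by
  obtain ⟨C, hC, hbound⟩ := exists_norm_iteratedFDeriv_comp_sub_smul_id_le
    (hψ.of_le (m := N) (by exact_mod_cast le_top))
    (hasCompactSupport_of_tsupport_subset_ball hsupp) (R := 1 / 2) (by norm_num)
  refine ⟨n * C, by positivity, fun F hF x hx m d hd hm => ?_⟩
  let v := d⁻¹ • (m - x)
  have hv : ‖v‖ ≤ 1 / 2 := by
    rw [norm_smul, norm_inv, Real.norm_of_nonneg hd.le, inv_mul_le_iff₀ hd, ← dist_eq_norm]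
    linarith
  have supp_translate : tsupport (fun u => ψ (u - v)) ⊆ ball 0 1 := fun u hu => by
    have huv : ‖u - v‖ < 1 / 2 := mem_ball_zero_iff.1 <|
      hsupp (tsupport_comp_subset_preimage ψ (f := (· - v)) (by fun_prop) hu)
    rw [mem_ball_zero_iff]
    linarith [norm_le_norm_sub_add u v]
  have center : x + d • v = m := by simp [v, smul_inv_smul₀ hd.ne']
  have := hx.enorm_integral_mul_rescale_sub_le hF (by fun_prop) supp_translate
    (by rwa [integral_sub_right_eq_self]) hn hC (hbound v hv) hd
  rwa [rescale_comp_sub ψ x v hd.ne', center] at this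

lemma exists_enorm_sub_le_of_isLebesguePoint (hn : 1 ≤ n) (N : ℕ) :
    ∃ c, 0 < c ∧ ∀ F : EuclideanSpace ℝ (Fin n) → ℝ, Integrable F →
      ∀ x, IsLebesguePoint volume F x → ∀ y, IsLebesguePoint volume F y →
        ‖F x - F y‖ₑ ≤ ENNReal.ofReal (c * ‖x - y‖) *
          (grandMaxOn n N univ F ‖x - y‖ x + grandMaxOn n N univ F ‖x - y‖ y) := by
  obtain ⟨ψ, hψ, hsupp, hint⟩ := exists_contDiff_tsupport_subset_integral_eq_one_s4
    (volume : Measure (EuclideanSpace ℝ (Fin n))) one_half_pos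
  obtain ⟨c, hc, estimate⟩ := exists_enorm_integral_mul_rescale_sub_le hn N hψ hsupp hint
  refine ⟨c, hc, fun F hF x hx y hy => ?_⟩
  obtain rfl | hxy := eq_or_ne x y
  · simp
  have hd : 0 < ‖x - y‖ := norm_sub_pos_iff.2 hxy
  have dist_mid_x : dist (midpoint ℝ x y) x ≤ ‖x - y‖ / 2 := by
    simp [← dist_eq_norm x y, div_eq_inv_mul]
  have dist_mid_y : dist (midpoint ℝ x y) y ≤ ‖x - y‖ / 2 := by
    simp [← dist_eq_norm x y, div_eq_inv_mul]
  let average := ∫ z, F z * rescale ψ (midpoint ℝ x y) ‖x - y‖ z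
  calc ‖F x - F y‖ₑ = ‖(average - F y) - (average - F x)‖ₑ := by
        rw [_root_.sub_sub_sub_cancel_left]
    _ ≤ ‖average - F y‖ₑ + ‖average - F x‖ₑ := enorm_sub_le
    _ ≤ _ := by
        rw [mul_add, add_comm]
        exact add_le_add (estimate F hF x hx _ _ hd dist_mid_x)
          (estimate F hF y hy _ _ hd dist_mid_y)

theorem pointwise_grand_maximal_estimate_general (n N : ℕ) (hn : 1 ≤ n) :
    ∃ c : ℝ, 0 < c ∧ ∀ S : Set (EuclideanSpace ℝ (Fin n)), MeasurableSet S →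
      ∀ f : EuclideanSpace ℝ (Fin n) → ℝ, IntegrableOn f S →
        ∃ E ⊆ S, volume E = 0 ∧ ∀ x ∈ S \ E, ∀ y ∈ S \ E,
          ENNReal.ofReal |f x - f y| ≤ ENNReal.ofReal (c * ‖x - y‖) *
            (grandMaxOn n N S f ‖x - y‖ x + grandMaxOn n N S f ‖x - y‖ y) := by
  obtain ⟨c, hc, estimate⟩ := exists_enorm_sub_le_of_isLebesguePoint hn N
  refine ⟨c, hc, fun S hS f hf => ?_⟩
  have hF : Integrable (S.indicator f) := (integrable_indicator_iff hS).2 hf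
  refine ⟨S \ {x | IsLebesguePoint volume (S.indicator f) x}, sdiff_subset,
    measure_mono_null (fun _ hx => hx.2) (ae_isLebesguePoint hF.locallyIntegrable), ?_⟩
  rw [sdiff_sdiff_right_self]
  rintro x ⟨hxS, hx⟩ y ⟨hyS, hy⟩
  have := estimate _ hF x hx y hy
  rwa [indicator_of_mem hxS, indicator_of_mem hyS, grandMaxOn_univ_indicator hS,
    grandMaxOn_univ_indicator hS, Real.enorm_eq_ofReal_abs] at this

end GrandMaximal

/-- **Theorem 2.6.** Pointwise Hajlasz-type estimate in terms of the local grand maximal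
function of the gradient: for `f ∈ L¹(2B)`, a.e. `x, y ∈ B` satisfy
`|f x - f y| ≤ c ‖x - y‖ (𝔐_{‖x-y‖,N} f(x) + 𝔐_{‖x-y‖,N} f(y))`. -/
theorem pointwise_grand_maximal_estimate (n N : ℕ) (hn : 1 ≤ n) (hN : 1 ≤ N) :
    ∃ c : ℝ, 0 < c ∧
      ∀ (x₀ : EuclideanSpace ℝ (Fin n)) (r₀ : ℝ), 0 < r₀ →
        ∀ f : EuclideanSpace ℝ (Fin n) → ℝ, IntegrableOn f (ball x₀ (2 * r₀)) →
          ∃ E : Set (EuclideanSpace ℝ (Fin n)), E ⊆ ball x₀ r₀ ∧ volume E = 0 ∧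
            ∀ x ∈ ball x₀ r₀ \ E, ∀ y ∈ ball x₀ r₀ \ E,
              ENNReal.ofReal |f x - f y| ≤
                ENNReal.ofReal (c * ‖x - y‖) *
                  (grandMaxOn n N (ball x₀ (2 * r₀)) f ‖x - y‖ x +
                    grandMaxOn n N (ball x₀ (2 * r₀)) f ‖x - y‖ y) := by
  obtain ⟨c, hc, estimate⟩ := pointwise_grand_maximal_estimate_general n N hn
  refine ⟨c, hc, fun x₀ r₀ hr₀ f hf => ?_⟩
  obtain ⟨E, -, hE, hxy⟩ := estimate _ measurableSet_ball f hf
  have hB : ball x₀ r₀ \ (ball x₀ r₀ ∩ E) ⊆ ball x₀ (2 * r₀) \ E := fun x hx =>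
    ⟨ball_subset_ball (by linarith) hx.1, fun hxE => hx.2 ⟨hx.1, hxE⟩⟩
  exact ⟨ball x₀ r₀ ∩ E, inter_subset_left, measure_mono_null inter_subset_right hE,
    fun x hx y hy => hxy x (hB hx) y (hB hy)⟩
end
end

section
/- Let n ≥ 1 and fix ψ as in the context. There is a constant C = C(n,ψ) such that for every locally integrable f : ℝⁿ → ℝ, every Hajlasz gradient g of f on ℝⁿ, every x ∈ ℝⁿ, and every j ∈ {1,…,n}, one has sup_{t>0} t^{−n−1} |∫_{ℝⁿ} f(y) (∂_j ψ)((x−y)/t) dy| ≤ C · ( M( g^{n/(n+1)} )(x) )^{(n+1)/n}, where both sides are interpreted as values in [0,∞]. -/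
open MeasureTheory Metric Set ENNReal NNReal

noncomputable section

/-- `g` is a Hajlasz gradient of `u` on `U ⊆ ℝⁿ`: `g` is measurable, nonnegative, and
off a set of measure zero `|u x - u y| ≤ ‖x - y‖ (g x + g y)` for `x, y ∈ U`. -/
def IsHajlaszGradientOn (n : ℕ) (u g : EuclideanSpace ℝ (Fin n) → ℝ)
    (U : Set (EuclideanSpace ℝ (Fin n))) : Prop :=
  Measurable g ∧ (∀ x, 0 ≤ g x) ∧
    ∃ E : Set (EuclideanSpace ℝ (Fin n)), MeasureTheory.volume E = 0 ∧
      ∀ x ∈ U \ E, ∀ y ∈ U \ E, |u x - u y| ≤ ‖x - y‖ * (g x + g y)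

/-- The smooth maximal function of the distributional derivative `D_j f`:
`M_ψ(D_j f)(x) = sup_{t>0} t^{-n-1} |∫ f(y) (∂_j ψ)((x-y)/t) dy|`. -/
def smoothMax (n : ℕ) (ψ f : EuclideanSpace ℝ (Fin n) → ℝ) (j : Fin n)
    (x : EuclideanSpace ℝ (Fin n)) : ℝ≥0∞ :=
  ⨆ (t : {s : ℝ // 0 < s}),
    ENNReal.ofReal ((t.1⁻¹) ^ (n + 1) *
      |∫ y, f y * fderiv ℝ ψ (t.1⁻¹ • (x - y)) (EuclideanSpace.single j 1)|)

/-- The Hardy–Littlewood maximal function, with values in `[0,∞]`. -/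
def hlMax (n : ℕ) (h : EuclideanSpace ℝ (Fin n) → ℝ)
    (x : EuclideanSpace ℝ (Fin n)) : ℝ≥0∞ :=
  ⨆ (r : {s : ℝ // 0 < s}),
    (volume (ball x r.1))⁻¹ * ∫⁻ y in ball x r.1, ENNReal.ofReal |h y|

/-!
Let `p = d / (d + 1)`, `d` the dimension, and let `A` be the `p`-mean of `g` over `B(x, 2t)`. A
ball of radius `2⁻ⁱ t` in `B(x, 2t)` contains a point with `g ≲ 2 ^ ((d + 1) * i) * A`. From
`y ∈ B(x, t)` with `g y ≈ 2 ^ ((d + 1) * i) * A`, chain through such points at scales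
`2⁻ⁱ t, …, 2⁻¹ t, t`. The Hajlasz inequality charges `2 ^ (d * k) * t * A` at scale `2⁻ᵏ t`, a
geometric sum of total `2 ^ (d * i) * t * A ≈ t * A ^ (1 - p) * g y ^ p`. Integrating over `y`
gives an endpoint Poincaré inequality: the mean oscillation of `f` on `B(x, t)` is at most a
constant times `t * A`. Derivatives of `ψ` have integral zero, so a constant may be subtracted
from `f` before pairing with the kernel.
-/

section Real

/-- The exponent whose Sobolev conjugate in dimension `d` is `1`. -/
def sobolevExponent (d : ℕ) : ℝ := d / (d + 1)

lemma sobolevExponent_pos {d : ℕ} (hd : 0 < d) : 0 < sobolevExponent d := by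
  unfold sobolevExponent
  positivity

lemma pow_succ_rpow_sobolevExponent {b : ℝ} (hb : 0 ≤ b) (d : ℕ) :
    (b ^ (d + 1)) ^ sobolevExponent d = b ^ d := by
  rw [← Real.rpow_natCast, ← Real.rpow_mul hb, ← Real.rpow_natCast, sobolevExponent]
  congr 1
  push_cast
  field_simp

lemma exists_le_pow_and_rpow_le {u b p : ℝ} (hu : 0 ≤ u) (hb : 1 < b) (hp : 0 ≤ p) :
    ∃ i : ℕ, u ≤ b ^ i ∧ (b ^ i) ^ p ≤ 1 + b ^ p * u ^ p := by
  have hb0 : 0 ≤ b := by linarith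
  rcases le_total u 1 with hu1 | hu1
  · refine ⟨0, by simpa using hu1, ?_⟩
    rw [pow_zero, Real.one_rpow]
    exact le_add_of_nonneg_right (by positivity)
  · obtain ⟨i, hi, hi'⟩ := exists_nat_pow_near hu1 hb
    refine ⟨i + 1, hi'.le, ?_⟩
    calc (b ^ (i + 1)) ^ p = b ^ p * (b ^ i) ^ p := by
          rw [pow_succ', Real.mul_rpow hb0 (by positivity)]
      _ ≤ b ^ p * u ^ p := by gcongr
      _ ≤ 1 + b ^ p * u ^ p := by linarith

end Real

section Chaining

variable {X Y : Type*} [PseudoMetricSpace X] [PseudoMetricSpace Y]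

/-- The Hajlasz inequality for `f` and `g`, required at every pair of points of `S`. In the
almost everywhere notion, `S` is the complement of the exceptional null set. -/
def HajlaszOn (f : X → Y) (g : X → ℝ) (S : Set X) : Prop :=
  ∀ y ∈ S, ∀ z ∈ S, dist (f y) (f z) ≤ dist y z * (g y + g z)

/-- Every ball of radius `t / 2 ^ (i + 1)` inside `ball x (2 * t)` meets `S` in a point where
`g ≤ Λ * b ^ i`. These points serve as the vertices of the chains. -/
def DyadicallySmall (g : X → ℝ) (S : Set X) (x : X) (t Λ b : ℝ) : Prop :=
  ∀ (i : ℕ) (y : X), ball y (t / 2 ^ (i + 1)) ⊆ ball x (2 * t) →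
    ∃ z ∈ ball y (t / 2 ^ (i + 1)), z ∈ S ∧ g z ≤ Λ * b ^ i

namespace HajlaszOn

variable {f : X → Y} {g : X → ℝ} {S : Set X}

lemma dist_le_of_le (hfg : HajlaszOn f g S) {y z : X} (hy : y ∈ S) (hz : z ∈ S) {r K : ℝ}
    (hK : 0 ≤ K) (hyz : dist y z ≤ r) (hgy : g y ≤ K) (hgz : g z ≤ K) :
    dist (f y) (f z) ≤ 2 * r * K :=
  calc dist (f y) (f z) ≤ dist y z * (g y + g z) := hfg y hy z hz
    _ ≤ dist y z * (K + K) := by gcongr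
    _ ≤ r * (K + K) := by gcongr
    _ = 2 * r * K := by ring

variable {x w : X} {t Λ q : ℝ}

/- The link from level `i + 1` to level `i` has length `t / 2 ^ (i + 1)`, so it costs
`2 * Λ * t * q ^ (i + 1)`; since `2 ≤ q`, the last link dominates the sum. The radii
`t + t / 2 ^ i` leave room for all the remaining links. -/
lemma dist_le_of_le_pow (hfg : HajlaszOn f g S) (hsmall : DyadicallySmall g S x t Λ (2 * q))
    (ht : 0 ≤ t) (hΛ : 0 ≤ Λ) (hq : 2 ≤ q) (hwS : w ∈ S) (hwx : w ∈ ball x (2 * t))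
    (hgw : g w ≤ Λ) (i : ℕ) {y : X} (hyS : y ∈ S) (hyx : y ∈ ball x (t + t / 2 ^ i))
    (hgy : g y ≤ Λ * (2 * q) ^ i) :
    dist (f y) (f w) ≤ 8 * Λ * t * q ^ i := by
  induction i generalizing y with
  | zero =>
    have hyw : dist y w ≤ 4 * t := by
      have := dist_triangle_right y w x
      simp only [mem_ball, pow_zero, div_one] at hyx hwx
      linarith
    have := hfg.dist_le_of_le hyS hwS hΛ hyw (by simpa using hgy) hgw
    linarith
  | succ i ih =>
    have hball : ball y (t / 2 ^ (i + 1)) ⊆ ball x (t + t / 2 ^ i) := by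
      refine ball_subset_ball' ?_
      have : t / 2 ^ i = t / 2 ^ (i + 1) + t / 2 ^ (i + 1) := by field_simp; ring
      rw [mem_ball] at hyx
      linarith
    have hradius : t + t / 2 ^ i ≤ 2 * t := by
      have := div_le_self ht (one_le_pow₀ (n := i) (one_le_two (α := ℝ)))
      linarith
    obtain ⟨z, hzy, hzS, hgz⟩ := hsmall i y (hball.trans (ball_subset_ball hradius))
    have hgz' : g z ≤ Λ * (2 * q) ^ (i + 1) := by
      refine hgz.trans ?_
      gcongr
      · linarith
      · lia
    have hlink : dist (f y) (f z) ≤ 2 * (t / 2 ^ (i + 1)) * (Λ * (2 * q) ^ (i + 1)) :=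
      hfg.dist_le_of_le hyS hzS (by positivity) (mem_ball'.1 hzy).le hgy hgz'
    calc dist (f y) (f w) ≤ dist (f y) (f z) + dist (f z) (f w) := dist_triangle _ _ _
      _ ≤ 2 * (t / 2 ^ (i + 1)) * (Λ * (2 * q) ^ (i + 1)) + 8 * Λ * t * q ^ i :=
        add_le_add hlink (ih hzS (hball hzy) hgz)
      _ = 2 * Λ * t * q ^ (i + 1) + 4 * Λ * t * (2 * q ^ i) := by
        rw [mul_pow]
        field_simp
        ring
      _ ≤ 2 * Λ * t * q ^ (i + 1) + 4 * Λ * t * (q * q ^ i) := by gcongr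
      _ ≤ 8 * Λ * t * q ^ (i + 1) := by
        have : 0 ≤ Λ * t * q ^ (i + 1) := by positivity
        rw [← pow_succ']
        linarith

lemma dist_le_one_add_rpow (hfg : HajlaszOn f g S)
    (hsmall : DyadicallySmall g S x t Λ (2 * q)) (ht : 0 ≤ t) (hΛ : 0 < Λ) (hq : 2 ≤ q)
    {p : ℝ} (hp : 0 ≤ p) (hqp : (2 * q) ^ p = q) (hwS : w ∈ S) (hwx : w ∈ ball x (2 * t))
    (hgw : g w ≤ Λ) {y : X} (hyS : y ∈ S) (hyx : y ∈ ball x t) (hgy : 0 ≤ g y) :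
    dist (f y) (f w) ≤ 8 * Λ * t * (1 + q * (g y / Λ) ^ p) := by
  obtain ⟨i, hi, hip⟩ := exists_le_pow_and_rpow_le (u := g y / Λ) (b := 2 * q) (by positivity)
    (by linarith) hp
  have hqi : ((2 * q) ^ i) ^ p = q ^ i := by rw [← Real.rpow_pow_comm (by positivity), hqp]
  rw [hqi, hqp] at hip
  have hyx' : y ∈ ball x (t + t / 2 ^ i) :=
    ball_subset_ball (le_add_of_nonneg_right (by positivity)) hyx
  calc dist (f y) (f w) ≤ 8 * Λ * t * q ^ i :=
        hfg.dist_le_of_le_pow hsmall ht hΛ.le hq hwS hwx hgw i hyS hyx' ((div_le_iff₀' hΛ).1 hi)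
    _ ≤ 8 * Λ * t * (1 + q * (g y / Λ) ^ p) := by gcongr

end HajlaszOn

end Chaining

section Average

lemma exists_mem_and_mem_le_setLAverage {α : Type*} [MeasurableSpace α] {μ : Measure α}
    {s S : Set α} {h : α → ℝ≥0∞} (hs₀ : μ s ≠ 0) (hs : μ s ≠ ∞)
    (hh : AEMeasurable h (μ.restrict s)) (hS : ∀ᵐ y ∂μ, y ∈ S) :
    ∃ z ∈ s, z ∈ S ∧ h z ≤ ⨍⁻ y in s, h y ∂μ := by
  have hfreq : ∃ᵐ z ∂μ, z ∈ s ∧ h z ≤ ⨍⁻ y in s, h y ∂μ :=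
    frequently_ae_iff.2 (measure_le_setLAverage_pos hs₀ hs hh).ne'
  obtain ⟨z, ⟨hzs, hhz⟩, hzS⟩ := (hfreq.and_eventually hS).exists
  exact ⟨z, hzs, hzS, hhz⟩

/-- The centred Hardy–Littlewood maximal function of `h` with respect to `μ`. -/
def maximalAverage {X : Type*} [PseudoMetricSpace X] [MeasurableSpace X] (μ : Measure X)
    (h : X → ℝ≥0∞) (x : X) : ℝ≥0∞ :=
  ⨆ r : {s : ℝ // 0 < s}, ⨍⁻ y in ball x r, h y ∂μ

lemma setLAverage_ball_le_maximalAverage {X : Type*} [PseudoMetricSpace X] [MeasurableSpace X]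
    (μ : Measure X) (h : X → ℝ≥0∞) (x : X) {r : ℝ} (hr : 0 < r) :
    ⨍⁻ y in ball x r, h y ∂μ ≤ maximalAverage μ h x :=
  le_iSup (fun r : {s : ℝ // 0 < s} => ⨍⁻ y in ball x r, h y ∂μ) ⟨r, hr⟩

end Average

local notation "dim" => Module.finrank ℝ

section Poincare

variable {E : Type*} [NormedAddCommGroup E] [NormedSpace ℝ E] [FiniteDimensional ℝ E]
  [MeasurableSpace E] [BorelSpace E] {μ : Measure E} [μ.IsAddHaarMeasure]

lemma measure_ball_eq_mul_measure_ball (x y : E) {r R : ℝ} (hr : 0 < r) (hR : 0 < R) :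
    μ (ball x R) = ENNReal.ofReal ((R / r) ^ dim E) * μ (ball y r) := by
  rw [μ.addHaar_ball_of_pos x hR, μ.addHaar_ball_of_pos y hr, ← mul_assoc,
    ← ENNReal.ofReal_mul (by positivity), ← mul_pow, div_mul_cancel₀ _ hr.ne']

lemma setLAverage_ball_le_of_subset {h : E → ℝ≥0∞} {x y : E} {r R : ℝ} (hr : 0 < r)
    (hR : 0 < R) (hsub : ball y r ⊆ ball x R) :
    ⨍⁻ z in ball y r, h z ∂μ ≤
      ENNReal.ofReal ((R / r) ^ dim E) * ⨍⁻ z in ball x R, h z ∂μ := by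
  rw [setLAverage_eq,
    ENNReal.div_le_iff (measure_ball_pos μ y hr).ne' measure_ball_lt_top.ne]
  calc ∫⁻ z in ball y r, h z ∂μ ≤ ∫⁻ z in ball x R, h z ∂μ := lintegral_mono_set hsub
    _ = μ (ball x R) * ⨍⁻ z in ball x R, h z ∂μ :=
      (measure_mul_setLAverage _ measure_ball_lt_top.ne).symm
    _ = ENNReal.ofReal ((R / r) ^ dim E) * (⨍⁻ z in ball x R, h z ∂μ) * μ (ball y r) := by
      rw [measure_ball_eq_mul_measure_ball x y hr hR, mul_right_comm]

variable {g : E → ℝ} {S : Set E} {x : E} {t A : ℝ}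

lemma dyadicallySmall_of_setLAverage_le [Nontrivial E] (hgm : AEMeasurable g μ) (hg : 0 ≤ g)
    (hS : ∀ᵐ y ∂μ, y ∈ S) (ht : 0 < t) (hA : 0 ≤ A)
    (havg : ⨍⁻ y in ball x (2 * t), ENNReal.ofReal (g y ^ sobolevExponent (dim E)) ∂μ ≤
      ENNReal.ofReal (A ^ sobolevExponent (dim E))) :
    DyadicallySmall g S x t (4 ^ (dim E + 1) * A) (2 * 2 ^ dim E) := by
  intro i y hsub
  have hr : 0 < t / 2 ^ (i + 1) := by positivity
  have hp : 0 < sobolevExponent (dim E) := sobolevExponent_pos Module.finrank_pos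
  obtain ⟨z, hzy, hzS, hgz⟩ := exists_mem_and_mem_le_setLAverage
    (measure_ball_pos μ y hr).ne' measure_ball_lt_top.ne
    (hgm.pow_const (sobolevExponent (dim E))).ennreal_ofReal.restrict hS
  refine ⟨z, hzy, hzS, ?_⟩
  have hle : ENNReal.ofReal (g z ^ sobolevExponent (dim E)) ≤
      ENNReal.ofReal ((2 * t / (t / 2 ^ (i + 1))) ^ dim E * A ^ sobolevExponent (dim E)) := by
    rw [ENNReal.ofReal_mul (by positivity)]
    refine (hgz.trans (setLAverage_ball_le_of_subset hr (by positivity) hsub)).trans ?_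
    gcongr
  have hratio : 2 * t / (t / 2 ^ (i + 1)) = 4 * 2 ^ i := by field_simp; ring
  rw [ENNReal.ofReal_le_ofReal_iff (by positivity), hratio,
    ← pow_succ_rpow_sobolevExponent (by positivity), ← Real.mul_rpow (by positivity) hA,
    Real.rpow_le_rpow_iff (hg z) (by positivity) hp] at hle
  calc g z ≤ (4 * 2 ^ i) ^ (dim E + 1) * A := hle
    _ = 4 ^ (dim E + 1) * A * (2 * 2 ^ dim E) ^ i := by
      rw [mul_pow, ← pow_succ', pow_right_comm]
      ring

variable {Y : Type*} [PseudoMetricSpace Y] {f : E → Y}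

lemma HajlaszOn.edist_le_add_mul_rpow [Nontrivial E] (hfg : HajlaszOn f g S)
    (hgm : AEMeasurable g μ) (hg : 0 ≤ g) (hS : ∀ᵐ y ∂μ, y ∈ S) (ht : 0 < t) (hA : 0 < A)
    (havg : ⨍⁻ y in ball x (2 * t), ENNReal.ofReal (g y ^ sobolevExponent (dim E)) ∂μ ≤
      ENNReal.ofReal (A ^ sobolevExponent (dim E)))
    {w : E} (hwS : w ∈ S) (hwx : w ∈ ball x (2 * t)) (hgw : g w ≤ A) {y : E} (hyS : y ∈ S)
    (hyx : y ∈ ball x t) :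
    edist (f y) (f w) ≤ ENNReal.ofReal (8 * 4 ^ (dim E + 1) * A * t) +
      ENNReal.ofReal (8 * 4 ^ (dim E + 1) * A * t *
        (2 ^ dim E * A ^ sobolevExponent (dim E))⁻¹) *
        ENNReal.ofReal (g y ^ sobolevExponent (dim E)) := by
  have hd : 0 < dim E := Module.finrank_pos
  have hsmall := dyadicallySmall_of_setLAverage_le hgm hg hS ht hA.le havg
  have hgy : 0 ≤ g y := hg y
  have hdist := hfg.dist_le_one_add_rpow hsmall ht.le (by positivity)
    (le_self_pow₀ one_le_two hd.ne') (sobolevExponent_pos hd).le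
    (by rw [← pow_succ', pow_succ_rpow_sobolevExponent zero_le_two]) hwS hwx
    (hgw.trans (le_mul_of_one_le_left hA.le (one_le_pow₀ (by norm_num)))) hyS hyx hgy
  have hfour : (4 : ℝ) ^ dim E = 2 ^ dim E * 2 ^ dim E := by rw [← mul_pow]; norm_num
  rw [edist_dist, ← ENNReal.ofReal_mul (by positivity),
    ← ENNReal.ofReal_add (by positivity) (by positivity)]
  refine ENNReal.ofReal_le_ofReal (hdist.trans_eq ?_)
  rw [Real.div_rpow hgy (by positivity), Real.mul_rpow (by positivity) hA.le,
    pow_succ_rpow_sobolevExponent (by norm_num), hfour]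
  field_simp

lemma HajlaszOn.setLAverage_edist_le [Nontrivial E] (hfg : HajlaszOn f g S)
    (hgm : AEMeasurable g μ) (hg : 0 ≤ g) (hS : ∀ᵐ y ∂μ, y ∈ S) (ht : 0 < t) (hA : 0 < A)
    (havg : ⨍⁻ y in ball x (2 * t), ENNReal.ofReal (g y ^ sobolevExponent (dim E)) ∂μ ≤
      ENNReal.ofReal (A ^ sobolevExponent (dim E)))
    {w : E} (hwS : w ∈ S) (hwx : w ∈ ball x (2 * t)) (hgw : g w ≤ A) :
    ⨍⁻ y in ball x t, edist (f y) (f w) ∂μ ≤ ENNReal.ofReal (4 ^ (dim E + 3) * t * A) := by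
  set p : ℝ := sobolevExponent (dim E)
  set K : ℝ := 8 * 4 ^ (dim E + 1) * A * t with hK
  set L : ℝ := K * (2 ^ dim E * A ^ p)⁻¹ with hL
  have hae : ∀ᵐ y ∂μ.restrict (ball x t), edist (f y) (f w) ≤
      ENNReal.ofReal K + ENNReal.ofReal L * ENNReal.ofReal (g y ^ p) := by
    filter_upwards [ae_restrict_of_ae hS, ae_restrict_mem measurableSet_ball] with y hyS hyx
    exact hfg.edist_le_add_mul_rpow hgm hg hS ht hA havg hwS hwx hgw hyS hyx
  have hgavg : ⨍⁻ y in ball x t, ENNReal.ofReal (g y ^ p) ∂μ ≤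
      ENNReal.ofReal (2 ^ dim E * A ^ p) := by
    have := setLAverage_ball_le_of_subset (μ := μ) (h := fun y => ENNReal.ofReal (g y ^ p)) ht
      (by positivity) (ball_subset_ball (x := x) (by linarith : t ≤ 2 * t))
    rw [mul_div_cancel_right₀ _ ht.ne'] at this
    rw [ENNReal.ofReal_mul (by positivity)]
    exact this.trans (by gcongr)
  calc ⨍⁻ y in ball x t, edist (f y) (f w) ∂μ
      ≤ ⨍⁻ y in ball x t, (ENNReal.ofReal K + ENNReal.ofReal L * ENNReal.ofReal (g y ^ p)) ∂μ :=
        lintegral_mono_ae (Measure.smul_absolutelyContinuous.ae_le hae)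
    _ = ENNReal.ofReal K + ENNReal.ofReal L * ⨍⁻ y in ball x t, ENNReal.ofReal (g y ^ p) ∂μ := by
        rw [laverage, lintegral_add_left measurable_const,
          lintegral_const_mul' _ _ ENNReal.ofReal_ne_top]
        congr 1
        exact setLAverage_const (measure_ball_pos μ x ht).ne' measure_ball_lt_top.ne _
    _ ≤ ENNReal.ofReal K + ENNReal.ofReal L * ENNReal.ofReal (2 ^ dim E * A ^ p) := by gcongr
    _ = ENNReal.ofReal (4 ^ (dim E + 3) * t * A) := by
        rw [← ENNReal.ofReal_mul (by positivity),
          ← ENNReal.ofReal_add (by positivity) (by positivity), hL,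
          inv_mul_cancel_right₀ (by positivity), hK]
        congr 1
        ring

theorem HajlaszOn.exists_setLAverage_edist_le [Nontrivial E] (hfg : HajlaszOn f g S)
    (hgm : AEMeasurable g μ) (hg : 0 ≤ g) (hS : ∀ᵐ y ∂μ, y ∈ S) (x : E) (ht : 0 < t) :
    ∃ c : Y, ⨍⁻ y in ball x t, edist (f y) c ∂μ ≤
      ENNReal.ofReal (4 ^ (dim E + 3) * t) *
        (⨍⁻ y in ball x (2 * t), ENNReal.ofReal (g y ^ sobolevExponent (dim E)) ∂μ) ^
          (sobolevExponent (dim E))⁻¹ := by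
  have hp : 0 < sobolevExponent (dim E) := sobolevExponent_pos Module.finrank_pos
  obtain ⟨w, hwx, hwS, hgw⟩ := exists_mem_and_mem_le_setLAverage (s := ball x (2 * t))
    (measure_ball_pos μ x (by positivity)).ne' measure_ball_lt_top.ne
    (hgm.pow_const (sobolevExponent (dim E))).ennreal_ofReal.restrict hS
  refine ⟨f w, ENNReal.le_mul_of_forall_lt (.inl ?_) (.inl ENNReal.ofReal_ne_top) ?_⟩
  · exact (ENNReal.ofReal_pos.2 (by positivity)).ne'
  intro K hK B hB
  rcases eq_or_ne B ∞ with rfl | hB_top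
  · simp [ENNReal.mul_top hK.ne_bot]
  have hB_pos : 0 < B.toReal := ENNReal.toReal_pos hB.ne_bot hB_top
  have havg : ⨍⁻ y in ball x (2 * t), ENNReal.ofReal (g y ^ sobolevExponent (dim E)) ∂μ ≤
      ENNReal.ofReal (B.toReal ^ sobolevExponent (dim E)) := by
    rw [← ENNReal.ofReal_rpow_of_pos hB_pos, ENNReal.ofReal_toReal hB_top,
      ← ENNReal.rpow_inv_le_iff hp]
    exact hB.le
  have hgw' : g w ≤ B.toReal := by
    have := hgw.trans havg
    rwa [ENNReal.ofReal_le_ofReal_iff (by positivity),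
      Real.rpow_le_rpow_iff (hg w) hB_pos.le hp] at this
  calc ⨍⁻ y in ball x t, edist (f y) (f w) ∂μ
      ≤ ENNReal.ofReal (4 ^ (dim E + 3) * t * B.toReal) :=
        hfg.setLAverage_edist_le hgm hg hS ht hB_pos havg hwS hwx hgw'
    _ = ENNReal.ofReal (4 ^ (dim E + 3) * t) * B := by
        rw [ENNReal.ofReal_mul (by positivity), ENNReal.ofReal_toReal hB_top]
    _ ≤ K * B := by gcongr

lemma HajlaszOn.exists_setLIntegral_edist_le_maximalAverage [Nontrivial E] {R : ℝ}
    (hfg : HajlaszOn f g S) (hgm : AEMeasurable g μ) (hg : 0 ≤ g) (hS : ∀ᵐ y ∂μ, y ∈ S)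
    (hR : 0 < R) (ht : 0 < t) (x : E) :
    ∃ c : Y, ENNReal.ofReal (t⁻¹ ^ (dim E + 1)) * ∫⁻ y in ball x (R * t), edist (f y) c ∂μ ≤
      ENNReal.ofReal (4 ^ (dim E + 3) * R ^ (dim E + 1)) * μ (ball 0 1) *
        maximalAverage μ (fun y => ENNReal.ofReal (g y ^ sobolevExponent (dim E))) x ^
          (sobolevExponent (dim E))⁻¹ := by
  have hRt : 0 < R * t := by positivity
  have hp : 0 < sobolevExponent (dim E) := sobolevExponent_pos Module.finrank_pos
  obtain ⟨c, hc⟩ := hfg.exists_setLAverage_edist_le hgm hg hS x hRt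
  set M := maximalAverage μ (fun y => ENNReal.ofReal (g y ^ sobolevExponent (dim E))) x
  refine ⟨c, ?_⟩
  calc ENNReal.ofReal (t⁻¹ ^ (dim E + 1)) * ∫⁻ y in ball x (R * t), edist (f y) c ∂μ
      = ENNReal.ofReal (t⁻¹ ^ (dim E + 1)) * (ENNReal.ofReal ((R * t) ^ dim E) * μ (ball 0 1) *
          ⨍⁻ y in ball x (R * t), edist (f y) c ∂μ) := by
        rw [← μ.addHaar_ball_of_pos x hRt, measure_mul_setLAverage _ measure_ball_lt_top.ne]
    _ ≤ ENNReal.ofReal (t⁻¹ ^ (dim E + 1)) * (ENNReal.ofReal ((R * t) ^ dim E) * μ (ball 0 1) *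
          (ENNReal.ofReal (4 ^ (dim E + 3) * (R * t)) * M ^ (sobolevExponent (dim E))⁻¹)) := by
        gcongr
        refine hc.trans ?_
        gcongr
        exact setLAverage_ball_le_maximalAverage μ _ x (by positivity)
    _ = ENNReal.ofReal (t⁻¹ ^ (dim E + 1) * (R * t) ^ dim E * (4 ^ (dim E + 3) * (R * t))) *
          μ (ball 0 1) * M ^ (sobolevExponent (dim E))⁻¹ := by
        rw [ENNReal.ofReal_mul (p := t⁻¹ ^ (dim E + 1) * (R * t) ^ dim E) (by positivity),
          ENNReal.ofReal_mul (p := t⁻¹ ^ (dim E + 1)) (by positivity)]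
        ring
    _ = ENNReal.ofReal (4 ^ (dim E + 3) * R ^ (dim E + 1)) * μ (ball 0 1) *
          M ^ (sobolevExponent (dim E))⁻¹ := by
        congr 3
        rw [inv_pow, mul_pow]
        field_simp
        ring

end Poincare

section Kernel

lemma hasCompactSupport_of_tsupport_subset_ball_s5 {X V : Type*} [PseudoMetricSpace X]
    [ProperSpace X] [Zero V] {ψ : X → V} {x : X} {R : ℝ} (hψ : tsupport ψ ⊆ ball x R) :
    HasCompactSupport ψ :=
  .of_support_subset_isCompact (isCompact_closedBall x R)
    ((subset_tsupport ψ).trans (hψ.trans ball_subset_closedBall))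

lemma enorm_integral_smul_le_of_integral_eq_zero {α F : Type*} [MeasurableSpace α]
    {μ : Measure α} [NormedAddCommGroup F] [NormedSpace ℝ F] [CompleteSpace F] {k : α → ℝ}
    {f : α → F} {s : Set α} {K : ℝ≥0∞} (hK : K ≠ ∞) (hs : MeasurableSet s) (hk : Integrable k μ)
    (hkf : Integrable (fun y => k y • f y) μ) (hk_zero : ∫ y, k y ∂μ = 0)
    (hk_supp : ∀ y ∉ s, k y = 0) (hk_le : ∀ y, ‖k y‖ₑ ≤ K) (c : F) :
    ‖∫ y, k y • f y ∂μ‖ₑ ≤ K * ∫⁻ y in s, edist (f y) c ∂μ := by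
  have hcancel : ∫ y, k y • f y ∂μ = ∫ y, k y • (f y - c) ∂μ := by
    simp_rw [smul_sub]
    rw [integral_sub hkf (hk.smul_const c), integral_smul_const, hk_zero, zero_smul, sub_zero]
  rw [hcancel, ← lintegral_const_mul' _ _ hK, ← lintegral_indicator hs]
  refine (enorm_integral_le_lintegral_enorm _).trans (lintegral_mono fun y => ?_)
  by_cases hy : y ∈ s
  · rw [indicator_of_mem hy, enorm_smul, edist_eq_enorm_sub]
    gcongr
    exact hk_le y
  · simp [hk_supp y hy]

variable {E : Type*} [NormedAddCommGroup E] [NormedSpace ℝ E] {ψ : E → ℝ} {R t : ℝ}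

lemma fderiv_inv_smul_sub_eq_zero (hψ : tsupport ψ ⊆ ball 0 R) (ht : 0 < t) {x y : E}
    (hy : y ∉ ball x (R * t)) :
    fderiv ℝ ψ (t⁻¹ • (x - y)) = 0 := by
  by_contra hne
  have hmem := hψ (support_fderiv_subset ℝ hne)
  rw [mem_ball_zero_iff, norm_smul, norm_inv, Real.norm_of_nonneg ht.le, inv_mul_lt_iff₀ ht,
    mul_comm t, ← dist_eq_norm] at hmem
  exact hy (mem_ball'.2 hmem)

variable [FiniteDimensional ℝ E] [MeasurableSpace E] [BorelSpace E] {μ : Measure E}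
  [μ.IsAddHaarMeasure]

lemma integral_fderiv_apply_eq_zero_s5 (hψ : ContDiff ℝ 1 ψ) (hc : HasCompactSupport ψ) (v : E) :
    ∫ y, fderiv ℝ ψ y v ∂μ = 0 := by
  have hcont : Continuous fun y => fderiv ℝ ψ y v :=
    (hψ.continuous_fderiv one_ne_zero).clm_apply continuous_const
  have hparts := integral_mul_fderiv_eq_neg_fderiv_mul_of_integrable (μ := μ)
    (f := fun _ => (1 : ℝ)) (g := ψ) (v := v) (by simp)
    (by simpa using hcont.integrable_of_hasCompactSupport (hc.fderiv_apply (𝕜 := ℝ) v))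
    (by simpa using hψ.continuous.integrable_of_hasCompactSupport hc)
    (fun _ _ => by fun_prop) (fun y _ => hψ.differentiable one_ne_zero y)
  simpa using hparts

lemma integral_fderiv_inv_smul_sub_apply_eq_zero (hψ : ContDiff ℝ 1 ψ)
    (hc : HasCompactSupport ψ) (v x : E) (t : ℝ) :
    ∫ y, fderiv ℝ ψ (t⁻¹ • (x - y)) v ∂μ = 0 := by
  rw [integral_sub_left_eq_self (fun z => fderiv ℝ ψ (t⁻¹ • z) v) μ x,
    Measure.integral_comp_smul μ (fun z => fderiv ℝ ψ z v) t⁻¹,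
    integral_fderiv_apply_eq_zero_s5 hψ hc v, smul_zero]

variable {F : Type*} [NormedAddCommGroup F] [NormedSpace ℝ F] [CompleteSpace F] {f : E → F}

lemma enorm_integral_fderiv_smul_le {K : ℝ} (hψ : ContDiff ℝ 1 ψ)
    (hψsupp : tsupport ψ ⊆ ball 0 R) (hK : ∀ y, ‖fderiv ℝ ψ y‖ ≤ K)
    (hf : LocallyIntegrable f μ) (ht : 0 < t) (x v : E) (c : F) :
    ‖∫ y, fderiv ℝ ψ (t⁻¹ • (x - y)) v • f y ∂μ‖ₑ ≤
      ENNReal.ofReal K * ‖v‖ₑ * ∫⁻ y in ball x (R * t), edist (f y) c ∂μ := by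
  have hc : HasCompactSupport ψ := hasCompactSupport_of_tsupport_subset_ball_s5 hψsupp
  have hcont : Continuous fun y => fderiv ℝ ψ (t⁻¹ • (x - y)) v :=
    ((hψ.continuous_fderiv one_ne_zero).comp (by fun_prop)).clm_apply continuous_const
  have hsupp : ∀ y ∉ ball x (R * t), fderiv ℝ ψ (t⁻¹ • (x - y)) v = 0 := fun y hy => by
    simp [fderiv_inv_smul_sub_eq_zero hψsupp ht hy]
  have hcompact : HasCompactSupport fun y => fderiv ℝ ψ (t⁻¹ • (x - y)) v :=
    .intro (isCompact_closedBall x (R * t)) fun y hy =>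
      hsupp y (notMem_subset ball_subset_closedBall hy)
  refine enorm_integral_smul_le_of_integral_eq_zero (by finiteness) measurableSet_ball
    (hcont.integrable_of_hasCompactSupport hcompact)
    (hf.integrable_smul_left_of_hasCompactSupport hcont hcompact)
    (integral_fderiv_inv_smul_sub_apply_eq_zero hψ hc v x t) hsupp (fun y => ?_) c
  refine (ContinuousLinearMap.le_opENorm _ v).trans ?_
  gcongr
  rw [← ofReal_norm]
  exact ENNReal.ofReal_le_ofReal (hK _)

/-- The smooth maximal function of the distributional derivative of `f` in the direction `v`,
with test function `ψ`. The factor `t⁻¹ ^ (dim E + 1)` normalizes the derivative of the dilated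
kernel `t⁻¹ ^ dim E * ψ (t⁻¹ • ·)`. -/
def smoothDerivMax (μ : Measure E) (ψ : E → ℝ) (f : E → F) (v x : E) : ℝ≥0∞ :=
  ⨆ t : {s : ℝ // 0 < s}, ENNReal.ofReal (t.1⁻¹ ^ (dim E + 1)) *
    ‖∫ y, fderiv ℝ ψ (t.1⁻¹ • (x - y)) v • f y ∂μ‖ₑ

variable (F) (μ) in
theorem smooth_maximal_le_iterated_maximal_of_hajlasz_general [Nontrivial E]
    (hψ : ContDiff ℝ 1 ψ) (hc : HasCompactSupport ψ) :
    ∃ C : ℝ≥0∞, C ≠ ∞ ∧ ∀ f : E → F, LocallyIntegrable f μ →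
      ∀ (g : E → ℝ) (S : Set E), AEMeasurable g μ → 0 ≤ g → (∀ᵐ y ∂μ, y ∈ S) →
        HajlaszOn f g S → ∀ v x : E,
          smoothDerivMax μ ψ f v x ≤ C * ‖v‖ₑ *
            maximalAverage μ (fun y => ENNReal.ofReal (g y ^ sobolevExponent (dim E))) x ^
              (sobolevExponent (dim E))⁻¹ := by
  obtain ⟨K, hK⟩ := (hc.fderiv (𝕜 := ℝ)).exists_bound_of_continuous
    (hψ.continuous_fderiv one_ne_zero)
  obtain ⟨R, hR, hψsupp⟩ := hc.isCompact.isBounded.subset_ball_lt 0 0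
  refine ⟨ENNReal.ofReal K * (ENNReal.ofReal (4 ^ (dim E + 3) * R ^ (dim E + 1)) * μ (ball 0 1)),
    ENNReal.mul_ne_top (by finiteness) (ENNReal.mul_ne_top (by finiteness) measure_ball_lt_top.ne),
    fun f hf g S hgm hg hS hfg v x => iSup_le fun ⟨t, ht⟩ => ?_⟩
  obtain ⟨c, hosc⟩ := hfg.exists_setLIntegral_edist_le_maximalAverage hgm hg hS hR ht x
  set B := maximalAverage μ (fun y => ENNReal.ofReal (g y ^ sobolevExponent (dim E))) x ^
    (sobolevExponent (dim E))⁻¹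
  set D := ENNReal.ofReal (4 ^ (dim E + 3) * R ^ (dim E + 1)) * μ (ball 0 1)
  calc ENNReal.ofReal (t⁻¹ ^ (dim E + 1)) * ‖∫ y, fderiv ℝ ψ (t⁻¹ • (x - y)) v • f y ∂μ‖ₑ
      ≤ ENNReal.ofReal (t⁻¹ ^ (dim E + 1)) *
          (ENNReal.ofReal K * ‖v‖ₑ * ∫⁻ y in ball x (R * t), edist (f y) c ∂μ) := by
        gcongr
        exact enorm_integral_fderiv_smul_le hψ hψsupp hK hf ht x v c
    _ = ENNReal.ofReal K * ‖v‖ₑ *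
          (ENNReal.ofReal (t⁻¹ ^ (dim E + 1)) * ∫⁻ y in ball x (R * t), edist (f y) c ∂μ) :=
        mul_left_comm _ _ _
    _ ≤ ENNReal.ofReal K * ‖v‖ₑ * (D * B) := by gcongr
    _ = ENNReal.ofReal K * D * ‖v‖ₑ * B := by ring

end Kernel

section Euclidean

variable {n : ℕ}

lemma IsHajlaszGradientOn.exists_hajlaszOn {f g : EuclideanSpace ℝ (Fin n) → ℝ}
    (h : IsHajlaszGradientOn n f g univ) :
    ∃ S : Set (EuclideanSpace ℝ (Fin n)), (∀ᵐ y, y ∈ S) ∧ HajlaszOn f g S := by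
  obtain ⟨-, -, N, hN, hfg⟩ := h
  refine ⟨Nᶜ, measure_eq_zero_iff_ae_notMem.1 hN, fun y hy z hz => ?_⟩
  rw [Real.dist_eq, dist_eq_norm]
  exact hfg y ⟨mem_univ y, hy⟩ z ⟨mem_univ z, hz⟩

lemma hlMax_eq_maximalAverage {h : EuclideanSpace ℝ (Fin n) → ℝ} (hh : ∀ y, 0 ≤ h y)
    (x : EuclideanSpace ℝ (Fin n)) :
    hlMax n h x = maximalAverage volume (fun y => ENNReal.ofReal (h y)) x := by
  simp only [hlMax, maximalAverage, setLAverage_eq, ENNReal.div_eq_inv_mul, abs_of_nonneg (hh _)]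

lemma smoothMax_eq_smoothDerivMax (ψ f : EuclideanSpace ℝ (Fin n) → ℝ) (j : Fin n)
    (x : EuclideanSpace ℝ (Fin n)) :
    smoothMax n ψ f j x = smoothDerivMax volume ψ f (EuclideanSpace.single j 1) x := by
  refine iSup_congr fun t => ?_
  have ht : 0 < t.1 := t.2
  rw [ENNReal.ofReal_mul (by positivity), finrank_euclideanSpace_fin, Real.enorm_eq_ofReal_abs]
  simp only [smul_eq_mul, mul_comm]

end Euclidean

/-- **Key pointwise estimate in the proof of Theorem 1.1.** The smooth maximal function
of `D_j f` is dominated by an iterated Hardy–Littlewood maximal function of any Hajlasz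
gradient: `M_ψ(D_j f)(x) ≤ C (M(g^{n/(n+1)})(x))^{(n+1)/n}`. -/
theorem smooth_maximal_le_iterated_maximal_of_hajlasz
    (n : ℕ) (hn : 1 ≤ n)
    (ψ : EuclideanSpace ℝ (Fin n) → ℝ) (hψ : ContDiff ℝ (⊤ : ℕ∞) ψ)
    (hψsupp : tsupport ψ ⊆ ball 0 1) (hψint : ∫ x, ψ x = 1) :
    ∃ C : ℝ≥0∞, C ≠ ⊤ ∧
      ∀ f : EuclideanSpace ℝ (Fin n) → ℝ, LocallyIntegrable f →
        ∀ g : EuclideanSpace ℝ (Fin n) → ℝ, IsHajlaszGradientOn n f g univ →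
          ∀ (x : EuclideanSpace ℝ (Fin n)) (j : Fin n),
            smoothMax n ψ f j x ≤
              C * (hlMax n (fun y => g y ^ ((n : ℝ) / (n + 1))) x) ^ ((n + 1 : ℝ) / n) := by
  have : Nontrivial (EuclideanSpace ℝ (Fin n)) :=
    Module.nontrivial_of_finrank_pos (R := ℝ) (by rwa [finrank_euclideanSpace_fin])
  obtain ⟨C, hC, hbound⟩ := smooth_maximal_le_iterated_maximal_of_hajlasz_general volume ℝ
    (hψ.of_le (mod_cast le_top)) (hasCompactSupport_of_tsupport_subset_ball_s5 hψsupp)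
  refine ⟨C, hC, fun f hf g hg x j => ?_⟩
  obtain ⟨S, hS, hfg⟩ := hg.exists_hajlaszOn
  rw [smoothMax_eq_smoothDerivMax, hlMax_eq_maximalAverage fun y => Real.rpow_nonneg (hg.2.1 y) _]
  simpa [sobolevExponent, ← ofReal_norm (EuclideanSpace.single j _)] using
    hbound f hf g S hg.1.aemeasurable hg.2.1 hS hfg (EuclideanSpace.single j 1) x
end
end

section
/- Let n ≥ 1, p > n/(n+1) and K < ∞. Suppose (f_k)_{k∈ℕ} is a sequence of locally integrable functions in L^p(ℝⁿ) and for each k there is a Hajlasz gradient g_k of f_k on ℝⁿ with ‖f_k‖_{L^p(ℝⁿ)} + ‖g_k‖_{L^p(ℝⁿ)} ≤ K. Then there exist a function f ∈ L^p(ℝⁿ) admitting a Hajlasz gradient on ℝⁿ lying in L^p(ℝⁿ), and a subsequence (f_{k_ℓ}) such that ∫_B |f_{k_ℓ} − f| dm → 0 as ℓ → ∞ for every ball B ⊆ ℝⁿ. -/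
open MeasureTheory Metric Set ENNReal NNReal

noncomputable section

/-- The `L^p` quasinorm (for a positive real exponent `p`) of a real function
with respect to the measure `μ`. -/
def lpNorm (n : ℕ) (p : ℝ) (g : EuclideanSpace ℝ (Fin n) → ℝ)
    (μ : Measure (EuclideanSpace ℝ (Fin n))) : ℝ≥0∞ :=
  (∫⁻ x, ENNReal.ofReal |g x| ^ p ∂μ) ^ (1 / p)

/-!
A Hajlasz gradient in `L^q`, with `n/(n+1) ≤ q < 1`, controls the `L¹` oscillation on a convex set:
along a chain of geometrically shrinking homothetic copies of the set towards a given point, picking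
in each copy a point where the gradient is at most a multiple of its `L^q` average there gives a
Poincaré inequality. Its constant on cells of a grid of mesh `t` is of order `t ^ (n + 1 - n / q)`,
which tends to `0` with `t` as soon as `n/(n+1) < q`. So a bounded sequence is uniformly close in
`L¹_loc` to step functions on a fine grid, and a diagonal subsequence is Cauchy in `L¹_loc`.

For the limit gradient no weak compactness is available in `L^p` when `p ≤ 1`. Instead the defining
inequality is raised to the power `p / 2`: it becomes a closed convex condition on `g ^ (p / 2)`,
which lives in the Hilbert space `L²`, where bounded nested closed convex sets intersect.
-/

section HajlaszCompactness

open Filter Module Topology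

theorem exists_forall_mem_of_antitone_convex {H : Type*} [NormedAddCommGroup H]
    [InnerProductSpace ℝ H] [CompleteSpace H] {T : ℕ → Set H} (hanti : Antitone T)
    (hconv : ∀ m, Convex ℝ (T m)) (hclosed : ∀ m, IsClosed (T m)) {R : ℝ}
    (hR : ∀ m, ∃ x ∈ T m, ‖x‖ ≤ R) : ∃ x, ∀ m, x ∈ T m := by
  have exists_minimal (m : ℕ) :
      ∃ v ∈ T m, ∀ w ∈ T m, ‖v‖ ^ 2 + ‖w - v‖ ^ 2 ≤ ‖w‖ ^ 2 := by
    obtain ⟨x, hx, -⟩ := hR m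
    obtain ⟨v, hv, hmin⟩ := exists_norm_eq_iInf_of_complete_convex ⟨x, hx⟩
      (hclosed m).isComplete (hconv m) 0
    refine ⟨v, hv, fun w hw ↦ ?_⟩
    have hinner := (norm_eq_iInf_iff_real_inner_le_zero (hconv m) hv).1 hmin w hw
    have hexpand := norm_add_sq_real v (w - v)
    rw [add_sub_cancel] at hexpand
    rw [zero_sub, inner_neg_left] at hinner
    linarith
  choose v hv hpyth using exists_minimal
  have hdist {m l : ℕ} (hml : m ≤ l) : ‖v l - v m‖ ^ 2 ≤ ‖v l‖ ^ 2 - ‖v m‖ ^ 2 := by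
    linarith [hpyth m (v l) (hanti hml (hv l))]
  have hmono : Monotone fun m ↦ ‖v m‖ ^ 2 := fun m l hml ↦ by
    linarith [hdist hml, sq_nonneg ‖v l - v m‖]
  have hbdd : BddAbove (range fun m ↦ ‖v m‖ ^ 2) := by
    refine ⟨R ^ 2, forall_mem_range.2 fun m ↦ ?_⟩
    obtain ⟨x, hx, hxR⟩ := hR m
    have := pow_le_pow_left₀ (norm_nonneg x) hxR 2
    linarith [hpyth m x hx, sq_nonneg ‖x - v m‖]
  have hcauchy : CauchySeq v := by
    have hnorm := (tendsto_atTop_ciSup hmono hbdd).cauchySeq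
    refine Metric.cauchySeq_iff'.2 fun ε hε ↦ ?_
    obtain ⟨m, hm⟩ := Metric.cauchySeq_iff'.1 hnorm (ε ^ 2) (by positivity)
    refine ⟨m, fun l hl ↦ ?_⟩
    rw [dist_eq_norm]
    exact lt_of_pow_lt_pow_left₀ 2 hε.le
      ((hdist hl).trans_lt ((le_abs_self _).trans_lt (hm l hl)))
  obtain ⟨x, hx⟩ := cauchySeq_tendsto_of_complete hcauchy
  exact ⟨x, fun m ↦ (hclosed m).mem_of_tendsto hx
    ((eventually_ge_atTop m).mono fun l hl ↦ hanti hl (hv l))⟩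

section PairMajorants

variable {X : Type*} [MeasurableSpace X] {μ : Measure X}

/-- The square-integrable functions `h` with `w x y ≤ h x + h y` for all `x`, `y` outside a
`μ`-null set. Snowflaking turns `L^p` Hajlasz gradients into such majorants, for which the Hilbert
space structure of `L²` is available whatever the value of `p`. -/
def pairMajorants (μ : Measure X) (w : X → X → ℝ) : Set (Lp ℝ 2 μ) :=
  {h | ∃ s ∈ ae μ, ∀ x ∈ s, ∀ y ∈ s, w x y ≤ h x + h y}

theorem pairMajorants_anti {w w' : X → X → ℝ} (hw : w ≤ w') :
    pairMajorants μ w' ⊆ pairMajorants μ w := fun _ ⟨s, hs, hmaj⟩ ↦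
  ⟨s, hs, fun x hx y hy ↦ (hw x y).trans (hmaj x hx y hy)⟩

theorem convex_pairMajorants (w : X → X → ℝ) : Convex ℝ (pairMajorants μ w) := by
  rintro h₁ ⟨s₁, hs₁, hmaj₁⟩ h₂ ⟨s₂, hs₂, hmaj₂⟩ a b ha hb hab
  have hcoe : ∀ᵐ x ∂μ, (a • h₁ + b • h₂ : Lp ℝ 2 μ) x = a * h₁ x + b * h₂ x := by
    filter_upwards [Lp.coeFn_add (a • h₁) (b • h₂), Lp.coeFn_smul a h₁, Lp.coeFn_smul b h₂]
      with x hadd hsmul₁ hsmul₂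
    simp only [hadd, Pi.add_apply, hsmul₁, hsmul₂, Pi.smul_apply, smul_eq_mul]
  refine ⟨_, inter_mem (inter_mem hs₁ hs₂) hcoe, ?_⟩
  rintro x ⟨⟨hx₁, hx₂⟩, hx⟩ y ⟨⟨hy₁, hy₂⟩, hy⟩
  calc w x y = a * w x y + b * w x y := by rw [← add_mul, hab, one_mul]
    _ ≤ a * (h₁ x + h₁ y) + b * (h₂ x + h₂ y) := by
      gcongr
      exacts [hmaj₁ x hx₁ y hy₁, hmaj₂ x hx₂ y hy₂]
    _ = _ := by rw [hx.out, hy.out]; ring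

theorem isClosed_pairMajorants (w : X → X → ℝ) : IsClosed (pairMajorants μ w) := by
  refine IsSeqClosed.isClosed fun h h' hh hlim ↦ ?_
  obtain ⟨φ, -, hφ⟩ := (tendstoInMeasure_of_tendsto_Lp hlim).exists_seq_tendsto_ae
  choose s hs hmaj using hh
  refine ⟨_, inter_mem hφ (countable_iInter_mem.2 hs), ?_⟩
  rintro x ⟨hx, hxs⟩ y ⟨hy, hys⟩
  exact ge_of_tendsto' (hx.out.add hy.out) fun i ↦
    hmaj (φ i) x (mem_iInter.1 hxs _) y (mem_iInter.1 hys _)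

theorem pairMajorants_nonempty_of_tendsto {w : ℕ → X → X → ℝ} {w' : X → X → ℝ}
    (hnonneg : ∀ k x y, 0 ≤ w k x y) {h : ℕ → Lp ℝ 2 μ} (hmem : ∀ k, h k ∈ pairMajorants μ (w k))
    {R : ℝ} (hR : ∀ k, ‖h k‖ ≤ R)
    (hlim : ∃ s ∈ ae μ, ∀ x ∈ s, ∀ y ∈ s, Tendsto (fun k ↦ w k x y) atTop (𝓝 (w' x y))) :
    (pairMajorants μ w').Nonempty := by
  have hbdd (m : ℕ) (x y : X) : BddBelow (range fun k ↦ w (m + k) x y) :=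
    ⟨0, forall_mem_range.2 fun _ ↦ hnonneg ..⟩
  let tailInf (m : ℕ) (x y : X) : ℝ := ⨅ k, w (m + k) x y
  have htail_mono : Monotone tailInf := monotone_nat_of_le_succ fun m x y ↦
    le_ciInf fun k ↦ (ciInf_le (hbdd m x y) (k + 1)).trans_eq <| by
      rw [add_assoc m 1 k, add_comm 1 k]
  have htail_le (m : ℕ) : tailInf m ≤ w m := fun x y ↦ ciInf_le (hbdd m x y) 0
  obtain ⟨h', hh'⟩ := exists_forall_mem_of_antitone_convex
    (fun _ _ hml ↦ pairMajorants_anti (htail_mono hml)) (fun m ↦ convex_pairMajorants (tailInf m))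
    (fun m ↦ isClosed_pairMajorants (tailInf m))
    (fun m ↦ ⟨h m, pairMajorants_anti (htail_le m) (hmem m), hR m⟩)
  choose s hs hmaj using hh'
  obtain ⟨s', hs', hlim⟩ := hlim
  refine ⟨h', _, inter_mem hs' (countable_iInter_mem.2 hs), ?_⟩
  rintro x ⟨hx, hxs⟩ y ⟨hy, hys⟩
  refine le_of_forall_lt_imp_le_of_dense fun a ha ↦ ?_
  obtain ⟨m, hm⟩ := eventually_atTop.1 ((hlim x hx y hy).eventually (lt_mem_nhds ha))
  exact (le_ciInf fun k ↦ (hm (m + k) (Nat.le_add_right m k)).le).trans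
    (hmaj m x (mem_iInter.1 hxs m) y (mem_iInter.1 hys m))

end PairMajorants

/-- `g` is a Hajlasz gradient of `u` with respect to `μ`, for a map `u` between metric spaces:
`g` is measurable, nonnegative, and `d(u x, u y) ≤ d(x, y) (g x + g y)` for all `x`, `y` outside
a `μ`-null set, encoded by its complement `s`. -/
structure IsHajlaszGradient {X Y : Type*} [PseudoMetricSpace X] [MeasurableSpace X]
    [PseudoMetricSpace Y] (u : X → Y) (g : X → ℝ) (μ : Measure X) : Prop where
  measurable : Measurable g
  nonneg (x : X) : 0 ≤ g x
  exists_dist_le : ∃ s ∈ ae μ, ∀ x ∈ s, ∀ y ∈ s, dist (u x) (u y) ≤ dist x y * (g x + g y)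

section LimitGradient

variable {X Y : Type*} [MetricSpace X] [PseudoMetricSpace Y]

/-- The difference quotient of `u`, halved and raised to the power `s`. The factor `2` lets a
Hajlasz gradient `g` of `u` satisfy `snowflakeQuotient s u x y ≤ g x ^ s + g y ^ s` for every
positive `s`. It is `0` on the diagonal. -/
def snowflakeQuotient (s : ℝ) (u : X → Y) (x y : X) : ℝ :=
  (dist (u x) (u y) / (2 * dist x y)) ^ s

theorem snowflakeQuotient_nonneg (s : ℝ) (u : X → Y) (x y : X) : 0 ≤ snowflakeQuotient s u x y := by
  unfold snowflakeQuotient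
  positivity

theorem half_add_rpow_le {a b s : ℝ} (ha : 0 ≤ a) (hb : 0 ≤ b) (hs : 0 ≤ s) :
    ((a + b) / 2) ^ s ≤ a ^ s + b ^ s := by
  wlog hab : a ≤ b generalizing a b
  · rw [add_comm a, add_comm (a ^ s)]
    exact this hb ha (le_of_not_ge hab)
  calc ((a + b) / 2) ^ s ≤ b ^ s := Real.rpow_le_rpow (by positivity) (by linarith) hs
    _ ≤ a ^ s + b ^ s := le_add_of_nonneg_left (by positivity)

variable [MeasurableSpace X] {μ : Measure X} {u : X → Y} {g : X → ℝ}

theorem IsHajlaszGradient.toLp_mem_pairMajorants {s : ℝ} (hg : IsHajlaszGradient u g μ)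
    (hs : 0 < s) (hgs : MemLp (fun x ↦ ‖g x‖ ^ s) 2 μ) :
    hgs.toLp ∈ pairMajorants μ (snowflakeQuotient s u) := by
  obtain ⟨t, ht, hdist⟩ := hg.exists_dist_le
  refine ⟨_, inter_mem ht hgs.coeFn_toLp, ?_⟩
  rintro x ⟨hx, hxg⟩ y ⟨hy, hyg⟩
  rw [hxg.out, hyg.out]
  simp only [Real.norm_of_nonneg (hg.nonneg _)]
  refine le_trans ?_ (half_add_rpow_le (hg.nonneg x) (hg.nonneg y) hs.le)
  refine Real.rpow_le_rpow (by positivity) ?_ hs.le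
  refine div_le_of_le_mul₀ (by positivity) ?_ ?_
  · linarith [hg.nonneg x, hg.nonneg y]
  · linarith [hdist x hx y hy]

theorem isHajlaszGradient_of_mem_pairMajorants {s : ℝ} (hs : 0 < s) {h : Lp ℝ 2 μ}
    (hh : h ∈ pairMajorants μ (snowflakeQuotient s u)) :
    IsHajlaszGradient u (fun x ↦ 2 * ‖2 * h x‖ ^ s⁻¹) μ where
  measurable := ((Lp.stronglyMeasurable h).measurable.const_mul 2).norm.pow_const _ |>.const_mul 2
  nonneg x := by positivity
  exists_dist_le := by
    obtain ⟨t, ht, hmaj⟩ := hh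
    refine ⟨t, ht, fun x hx y hy ↦ ?_⟩
    rcases eq_or_ne x y with rfl | hxy
    · simp
    have hd : 0 < 2 * dist x y := by simpa using hxy
    have hle : snowflakeQuotient s u x y ≤ (‖2 * h x‖ + ‖2 * h y‖) / 2 := by
      have := hmaj x hx y hy
      simp only [Real.norm_eq_abs]
      linarith [le_abs_self (2 * h x), le_abs_self (2 * h y)]
    have hquot : dist (u x) (u y) / (2 * dist x y) ≤ ‖2 * h x‖ ^ s⁻¹ + ‖2 * h y‖ ^ s⁻¹ :=
      ((Real.le_rpow_inv_iff_of_pos (by positivity) (by positivity) hs).2 hle).trans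
        (half_add_rpow_le (norm_nonneg _) (norm_nonneg _) (by positivity))
    rw [div_le_iff₀ hd] at hquot
    linarith

theorem exists_isHajlaszGradient_memLp_of_tendsto_ae {p : ℝ≥0} (hp : p ≠ 0) {u : ℕ → X → Y}
    {g : ℕ → X → ℝ} {v : X → Y} (hg : ∀ k, IsHajlaszGradient (u k) (g k) μ) {K : ℝ≥0∞}
    (hK : K ≠ ∞) (hgK : ∀ k, eLpNorm (g k) p μ ≤ K)
    (hlim : ∀ᵐ x ∂μ, Tendsto (fun k ↦ u k x) atTop (𝓝 (v x))) :
    ∃ G, IsHajlaszGradient v G μ ∧ MemLp G p μ := by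
  set s : ℝ := p / 2 with hs_def
  have hs : 0 < s := half_pos (by positivity)
  have hpow_norm (k : ℕ) : eLpNorm (fun x ↦ ‖g k x‖ ^ s) 2 μ ≤ K ^ s := by
    have hexp : 2 * ENNReal.ofReal s = p := by
      rw [← ENNReal.ofReal_ofNat, ← ENNReal.ofReal_mul zero_le_two, hs_def,
        mul_div_cancel₀ _ two_ne_zero, ENNReal.ofReal_coe_nnreal]
    rw [eLpNorm_norm_rpow _ hs, hexp]
    gcongr
    exact hgK k
  have hKs : K ^ s ≠ ∞ := ENNReal.rpow_ne_top_of_nonneg hs.le hK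
  have hpow_mem (k : ℕ) : MemLp (fun x ↦ ‖g k x‖ ^ s) 2 μ :=
    ⟨((hg k).measurable.norm.pow_const s).aestronglyMeasurable,
      (hpow_norm k).trans_lt hKs.lt_top⟩
  obtain ⟨h, hh⟩ := pairMajorants_nonempty_of_tendsto (w' := snowflakeQuotient s v)
    (fun k ↦ snowflakeQuotient_nonneg s (u k))
    (fun k ↦ (hg k).toLp_mem_pairMajorants hs (hpow_mem k))
    (fun k ↦ (Lp.norm_toLp _ _).trans_le (ENNReal.toReal_mono hKs (hpow_norm k)))
    ⟨_, hlim, fun x hx y hy ↦ ((hx.out.dist hy.out).div_const _).rpow_const (Or.inr hs.le)⟩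
  refine ⟨_, isHajlaszGradient_of_mem_pairMajorants hs hh, MemLp.const_mul ?_ 2⟩
  have hexp : (2 : ℝ≥0∞) / ENNReal.ofReal s⁻¹ = p := by
    rw [← ENNReal.ofReal_ofNat, ← ENNReal.ofReal_div_of_pos (by positivity), hs_def, inv_div,
      div_div_cancel₀ two_ne_zero, ENNReal.ofReal_coe_nnreal]
  have := ((Lp.memLp h).const_mul 2).norm_rpow_div (ENNReal.ofReal s⁻¹)
  rwa [hexp, ENNReal.toReal_ofReal (by positivity)] at this

end LimitGradient

section Poincare

theorem dist_le_of_dyadic_chain {X Y : Type*} [PseudoMetricSpace X] [PseudoMetricSpace Y]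
    {u : X → Y} {g : X → ℝ} {S : Set X} {lam D t : ℝ} (hlam : 0 ≤ lam) (hD : 0 ≤ D) (ht : 1 < 2 * t)
    (hu : ∀ x ∈ S, ∀ y ∈ S, dist (u x) (u y) ≤ dist x y * (g x + g y))
    (hgood : ∀ x ∈ S, ∀ j : ℕ, ∃ y ∈ S, g y ≤ lam * 2 ^ j ∧ dist x y ≤ t ^ j * D)
    (hdiam : ∀ x ∈ S, ∀ y ∈ S, dist x y ≤ D) {y₀ : X} (hy₀ : y₀ ∈ S) (hgy₀ : g y₀ ≤ lam) (j : ℕ)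
    {x : X} (hx : x ∈ S) (hgx : g x ≤ lam * 2 ^ j) :
    dist (u x) (u y₀) ≤ (2 + 3 / (2 * t - 1)) * lam * D * (2 * t) ^ j := by
  have ht₁ : 0 < 2 * t - 1 := by linarith
  have htpos : 0 < t := by linarith
  induction j generalizing x with
  | zero =>
    calc dist (u x) (u y₀) ≤ dist x y₀ * (g x + g y₀) := hu x hx y₀ hy₀
      _ ≤ dist x y₀ * (2 * lam) := by gcongr; linarith
      _ ≤ D * (2 * lam) := by gcongr; exact hdiam x hx y₀ hy₀
      _ ≤ _ := by
        rw [pow_zero, mul_one, add_mul, add_mul]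
        exact (by ring : D * (2 * lam) = 2 * lam * D).trans_le
          (le_add_of_nonneg_right (by positivity))
  | succ j ih =>
    obtain ⟨y, hy, hgy, hxy⟩ := hgood x hx j
    have hstep : dist (u x) (u y) ≤ 3 * lam * D * (2 * t) ^ j :=
      calc dist (u x) (u y) ≤ dist x y * (g x + g y) := hu x hx y hy
        _ ≤ dist x y * (lam * 2 ^ (j + 1) + lam * 2 ^ j) := by gcongr
        _ ≤ t ^ j * D * (lam * 2 ^ (j + 1) + lam * 2 ^ j) := by gcongr
        _ = 3 * lam * D * (2 * t) ^ j := by ring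
    have hconst : 3 + (2 + 3 / (2 * t - 1)) ≤ (2 + 3 / (2 * t - 1)) * (2 * t) := by
      have := div_mul_cancel₀ 3 ht₁.ne'
      linarith
    calc dist (u x) (u y₀) ≤ dist (u x) (u y) + dist (u y) (u y₀) := dist_triangle _ _ _
      _ ≤ 3 * lam * D * (2 * t) ^ j + (2 + 3 / (2 * t - 1)) * lam * D * (2 * t) ^ j := by
        gcongr
        exact ih hy hgy
      _ = (3 + (2 + 3 / (2 * t - 1))) * (lam * D * (2 * t) ^ j) := by ring
      _ ≤ (2 + 3 / (2 * t - 1)) * (2 * t) * (lam * D * (2 * t) ^ j) := by gcongr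
      _ = _ := by ring

theorem exists_nat_le_two_pow_and_pow_le {a q t : ℝ} (ha : 0 ≤ a) (ht₀ : 0 ≤ t) (ht₁ : t ≤ 1)
    (htq : 2 * t ≤ 2 ^ q) (hq : 0 ≤ q) :
    ∃ j : ℕ, a ≤ 2 ^ j ∧ (2 * t) ^ j ≤ 1 + 2 * a ^ q := by
  rcases le_total a 1 with ha₁ | ha₁
  · exact ⟨0, by simpa using ha₁, by rw [pow_zero]; linarith [Real.rpow_nonneg ha q]⟩
  obtain ⟨m, hm, ham⟩ := exists_nat_pow_near ha₁ one_lt_two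
  refine ⟨m + 1, ham.le, ?_⟩
  calc (2 * t) ^ (m + 1) = (2 * t) ^ m * (2 * t) := pow_succ _ _
    _ ≤ ((2 : ℝ) ^ q) ^ m * 2 := by gcongr; linarith
    _ = ((2 : ℝ) ^ m) ^ q * 2 := by
      rw [← Real.rpow_natCast, ← Real.rpow_natCast, ← Real.rpow_mul zero_le_two,
        ← Real.rpow_mul zero_le_two, mul_comm q]
    _ ≤ a ^ q * 2 := by gcongr
    _ ≤ _ := by linarith

theorem IsHajlaszGradient.exists_ae_eq_const_of_eLpNorm_eq_zero {X Y : Type*}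
    [PseudoMetricSpace X] [MeasurableSpace X] [MetricSpace Y] {u : X → Y} {g : X → ℝ}
    {μ : Measure X} {Q : Set X} {q : ℝ≥0∞} (hg : IsHajlaszGradient u g μ) (hq : q ≠ 0)
    (hQ₀ : μ Q ≠ 0) (hL : eLpNorm g q (μ.restrict Q) = 0) : ∃ c, u =ᵐ[μ.restrict Q] fun _ ↦ c := by
  obtain ⟨s, hs, hdist⟩ := hg.exists_dist_le
  rw [eLpNorm_eq_zero_iff hg.measurable.aestronglyMeasurable hq] at hL
  have hgood := hL.and (ae_restrict_of_ae hs)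
  have : (ae (μ.restrict Q)).NeBot := ae_neBot.2 (by simpa using hQ₀)
  obtain ⟨y, hgy, hys⟩ := hgood.exists
  refine ⟨u y, hgood.mono fun x ⟨hgx, hxs⟩ ↦ dist_le_zero.1 ?_⟩
  simpa [hgx, hgy] using hdist x hxs y hys

variable {E : Type*} [NormedAddCommGroup E] [NormedSpace ℝ E] [FiniteDimensional ℝ E]
  [MeasurableSpace E] [BorelSpace E] {μ : Measure E} [μ.IsAddHaarMeasure] {Q : Set E}

theorem exists_mem_inter_dist_le_of_measure_diff_lt {A : Set E} (hQ : Convex ℝ Q)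
    (hQb : Bornology.IsBounded Q) {x : E} (hx : x ∈ Q) {t : ℝ} (ht₀ : 0 ≤ t) (ht₁ : t ≤ 1)
    (hA : μ (Q \ A) < ENNReal.ofReal (t ^ finrank ℝ E) * μ Q) :
    ∃ y ∈ Q ∩ A, dist x y ≤ t * diam Q := by
  by_contra! hfar
  suffices hsub : AffineMap.homothety x t '' Q ⊆ Q \ A by
    refine (measure_mono (μ := μ) hsub).not_gt ?_
    rwa [Measure.addHaar_image_homothety, abs_of_nonneg (by positivity)]
  rintro _ ⟨y, hy, rfl⟩
  have hmem : AffineMap.homothety x t y ∈ Q := hQ.lineMap_mem hx hy ⟨ht₀, ht₁⟩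
  refine ⟨hmem, fun hyA ↦ (hfar _ ⟨hmem, hyA⟩).not_ge ?_⟩
  rw [dist_center_homothety, Real.norm_of_nonneg ht₀]
  gcongr
  exact dist_le_diam_of_mem hQb hx hy

theorem exists_mem_inter_le_dist_le_of_eLpNorm_lt {g : E → ℝ} {s : Set E} {q : ℝ≥0} {M t : ℝ}
    (hQ : Convex ℝ Q) (hQb : Bornology.IsBounded Q) (hg : Measurable g) (hs : s ∈ ae μ)
    (hq : q ≠ 0) (hM : 0 < M) {x : E} (hx : x ∈ Q) (ht₀ : 0 ≤ t) (ht₁ : t ≤ 1)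
    (hL : eLpNorm g q (μ.restrict Q) ^ (q : ℝ) <
      ENNReal.ofReal (M ^ (q : ℝ) * t ^ finrank ℝ E) * μ Q) :
    ∃ y ∈ Q ∩ s, g y ≤ M ∧ dist x y ≤ t * diam Q := by
  suffices h : μ (Q \ (s ∩ {y | g y ≤ M})) < ENNReal.ofReal (t ^ finrank ℝ E) * μ Q by
    obtain ⟨y, ⟨hyQ, hys, hyM⟩, hxy⟩ :=
      exists_mem_inter_dist_le_of_measure_diff_lt hQ hQb hx ht₀ ht₁ h
    exact ⟨y, ⟨hyQ, hys⟩, hyM, hxy⟩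
  have hsub : μ (Q \ (s ∩ {y | g y ≤ M})) ≤ μ.restrict Q {y | ENNReal.ofReal M ≤ ‖g y‖ₑ} := by
    rw [Measure.restrict_apply (measurableSet_le measurable_const hg.enorm)]
    refine measure_mono_ae ?_
    filter_upwards [hs] with y hys ⟨hyQ, hy⟩
    refine ⟨?_, hyQ⟩
    have hMy : M < g y := not_le.1 fun hle ↦ hy ⟨hys, hle⟩
    exact (ENNReal.ofReal_le_ofReal hMy.le).trans (Real.ofReal_le_enorm _)
  have hcheb := mul_meas_ge_le_pow_eLpNorm' (μ.restrict Q) (p := q) (by simpa using hq)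
    ENNReal.coe_ne_top hg.aestronglyMeasurable (ENNReal.ofReal M)
  rw [ENNReal.ofReal_mul (by positivity), mul_assoc,
    ← ENNReal.ofReal_rpow_of_nonneg hM.le q.coe_nonneg] at hL
  exact hsub.trans_lt (lt_of_mul_lt_mul_left' (hcheb.trans_lt hL))

/-- The contraction factor `2 ^ (-q / n)`: a dilation by it divides `n`-dimensional volumes by
`2 ^ q`, which balances the doubling of the level of a function in `L^q`. -/
def dyadicRatio (n : ℕ) (q : ℝ) : ℝ := 2 ^ (-(q / n))

/-- The constant of the pointwise Poincaré estimate for Hajlasz gradients in dimension `n` and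
exponent `q`; it sums the geometric series of ratio `2 * dyadicRatio n q`. -/
def hajlaszPoincareConst (n : ℕ) (q : ℝ) : ℝ := 2 + 3 / (2 * dyadicRatio n q - 1)

section Constants

variable {n : ℕ} {q : ℝ}

theorem dyadicRatio_pos : 0 < dyadicRatio n q := Real.rpow_pos_of_pos two_pos _

theorem dyadicRatio_le_one (hq : 0 ≤ q) : dyadicRatio n q ≤ 1 :=
  Real.rpow_le_one_of_one_le_of_nonpos one_le_two (neg_nonpos.2 (by positivity))

theorem one_lt_two_mul_dyadicRatio (hn : n ≠ 0) (hq : q < 1) : 1 < 2 * dyadicRatio n q := by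
  have hn₁ : (1 : ℝ) ≤ n := by exact_mod_cast Nat.one_le_iff_ne_zero.2 hn
  have hdiv : q / n < 1 := by rw [div_lt_one (by positivity)]; linarith
  rw [dyadicRatio, ← Real.rpow_one_add' zero_le_two (by linarith)]
  exact Real.one_lt_rpow one_lt_two (by linarith)

theorem two_mul_dyadicRatio_le (hn : n ≠ 0) (hq : (n / (n + 1) : ℝ) ≤ q) :
    2 * dyadicRatio n q ≤ 2 ^ q := by
  have hn₁ : (0 : ℝ) < n := by positivity
  have hle : 1 ≤ q + q / n := by
    rw [div_le_iff₀ (by positivity)] at hq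
    calc (1 : ℝ) = n / n := (div_self hn₁.ne').symm
      _ ≤ q * (n + 1) / n := by gcongr
      _ = q + q / n := by field_simp
  calc 2 * dyadicRatio n q = 2 ^ (1 + -(q / n)) := by
        rw [Real.rpow_add two_pos, Real.rpow_one, dyadicRatio]
    _ ≤ 2 ^ q := Real.rpow_le_rpow_of_exponent_le one_le_two (by linarith)

theorem two_pow_rpow_mul_dyadicRatio_pow (hn : n ≠ 0) (j : ℕ) :
    ((2 : ℝ) ^ j) ^ q * (dyadicRatio n q ^ j) ^ n = 1 := by
  have hratio : dyadicRatio n q ^ n = 2 ^ (-q) := by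
    rw [dyadicRatio, ← Real.rpow_mul_natCast zero_le_two, neg_mul,
      div_mul_cancel₀ _ (by positivity)]
  rw [pow_right_comm, hratio, ← Real.rpow_pow_comm zero_le_two, ← mul_pow,
    ← Real.rpow_add two_pos, add_neg_cancel, Real.rpow_zero, one_pow]

theorem hajlaszPoincareConst_nonneg (hn : n ≠ 0) (hq : q < 1) : 0 ≤ hajlaszPoincareConst n q := by
  have := sub_pos.2 (one_lt_two_mul_dyadicRatio hn hq)
  unfold hajlaszPoincareConst
  positivity

end Constants

variable [Nontrivial E] {q : ℝ≥0}

theorem IsHajlaszGradient.exists_dist_le_one_add_rpow {Y : Type*} [PseudoMetricSpace Y] {u : E → Y}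
    {g : E → ℝ} (hg : IsHajlaszGradient u g μ) (hQ : Convex ℝ Q) (hQb : Bornology.IsBounded Q)
    (hq : (finrank ℝ E / (finrank ℝ E + 1) : ℝ) ≤ q) (hq₁ : q < 1) {lam : ℝ} (hlam : 0 < lam)
    (hL : eLpNorm g q (μ.restrict Q) ^ (q : ℝ) < ENNReal.ofReal (lam ^ (q : ℝ)) * μ Q) :
    ∃ c, ∀ᵐ x ∂μ.restrict Q, dist (u x) c ≤
      hajlaszPoincareConst (finrank ℝ E) q * lam * diam Q * (1 + 2 * (g x / lam) ^ (q : ℝ)) := by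
  have hn : finrank ℝ E ≠ 0 := finrank_pos.ne'
  have hq₀ : 0 < (q : ℝ) := lt_of_lt_of_le (by positivity) hq
  have hq₁' : (q : ℝ) < 1 := NNReal.coe_lt_one.2 hq₁
  set t := dyadicRatio (finrank ℝ E) q
  have ht₀ : 0 < t := dyadicRatio_pos
  have ht₁ : t ≤ 1 := dyadicRatio_le_one hq₀.le
  obtain ⟨s, hs, hdist⟩ := hg.exists_dist_le
  have hgood (x : E) (hx : x ∈ Q) (j : ℕ) :
      ∃ y ∈ Q ∩ s, g y ≤ lam * 2 ^ j ∧ dist x y ≤ t ^ j * diam Q := by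
    refine exists_mem_inter_le_dist_le_of_eLpNorm_lt hQ hQb hg.measurable hs
      (NNReal.coe_pos.1 hq₀).ne' (by positivity) hx (by positivity) (pow_le_one₀ ht₀.le ht₁) ?_
    rwa [Real.mul_rpow hlam.le (by positivity), mul_assoc, two_pow_rpow_mul_dyadicRatio_pow hn,
      mul_one]
  obtain ⟨x₀, hx₀⟩ : Q.Nonempty := nonempty_of_measure_ne_zero (μ := μ) fun h ↦ by simp [h] at hL
  obtain ⟨y₀, hy₀, hgy₀, -⟩ := hgood x₀ hx₀ 0
  refine ⟨u y₀, ?_⟩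
  filter_upwards [ae_restrict_mem₀ (hQ.nullMeasurableSet μ), ae_restrict_of_ae hs] with x hxQ hxs
  obtain ⟨j, hgj, hj⟩ := exists_nat_le_two_pow_and_pow_le (div_nonneg (hg.nonneg x) hlam.le) ht₀.le
    ht₁ (two_mul_dyadicRatio_le hn hq) hq₀.le
  refine (dist_le_of_dyadic_chain hlam.le diam_nonneg (one_lt_two_mul_dyadicRatio hn hq₁')
    (fun x hx y hy ↦ hdist x hx.2 y hy.2) (fun x hx ↦ hgood x hx.1)
    (fun x hx y hy ↦ dist_le_diam_of_mem hQb hx.1 hy.1) hy₀ (by simpa using hgy₀) j ⟨hxQ, hxs⟩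
    ((div_le_iff₀' hlam).1 hgj)).trans ?_
  have hconst := hajlaszPoincareConst_nonneg hn hq₁'
  exact mul_le_mul_of_nonneg_left hj (by positivity)

variable {F : Type*} [NormedAddCommGroup F] {u : E → F} {g : E → ℝ}

theorem IsHajlaszGradient.exists_eLpNorm_sub_const_le_of_lt (hg : IsHajlaszGradient u g μ)
    (hQ : Convex ℝ Q) (hQb : Bornology.IsBounded Q)
    (hq : (finrank ℝ E / (finrank ℝ E + 1) : ℝ) ≤ q) (hq₁ : q < 1) {lam : ℝ} (hlam : 0 < lam)
    (hL : eLpNorm g q (μ.restrict Q) ^ (q : ℝ) < ENNReal.ofReal (lam ^ (q : ℝ)) * μ Q) :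
    ∃ c, eLpNorm (fun x ↦ u x - c) 1 (μ.restrict Q) ≤
      ENNReal.ofReal (hajlaszPoincareConst (finrank ℝ E) q * lam * diam Q) * (3 * μ Q) := by
  have hq₀ : 0 < (q : ℝ) := lt_of_lt_of_le (by have := finrank_pos (R := ℝ) (M := E); positivity) hq
  obtain ⟨c, hc⟩ := hg.exists_dist_le_one_add_rpow hQ hQb hq hq₁ hlam hL
  refine ⟨c, ?_⟩
  set B := hajlaszPoincareConst (finrank ℝ E) q * lam * diam Q
  have hpoint : ∀ᵐ x ∂μ.restrict Q, ‖u x - c‖ₑ ≤ ENNReal.ofReal B *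
      (1 + 2 * ((ENNReal.ofReal (lam ^ (q : ℝ)))⁻¹ * ‖g x‖ₑ ^ (q : ℝ))) := by
    filter_upwards [hc] with x hx
    have hgx := hg.nonneg x
    rw [← ofReal_norm, ← dist_eq_norm]
    refine (ENNReal.ofReal_le_ofReal hx).trans_eq ?_
    rw [ENNReal.ofReal_mul' (p := B) (by positivity),
      ENNReal.ofReal_add zero_le_one (by positivity), ENNReal.ofReal_one,
      ENNReal.ofReal_mul zero_le_two, ENNReal.ofReal_ofNat, Real.div_rpow hgx hlam.le,
      div_eq_inv_mul, ENNReal.ofReal_mul (p := (lam ^ (q : ℝ))⁻¹) (by positivity),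
      ENNReal.ofReal_inv_of_pos (by positivity), ← ofReal_norm, Real.norm_of_nonneg hgx,
      ENNReal.ofReal_rpow_of_nonneg hgx hq₀.le]
  have hmeas : Measurable fun x ↦ ‖g x‖ₑ ^ (q : ℝ) := hg.measurable.enorm.pow_const _
  have hLdiv : (ENNReal.ofReal (lam ^ (q : ℝ)))⁻¹ * eLpNorm g q (μ.restrict Q) ^ (q : ℝ) ≤ μ Q :=
    ENNReal.inv_mul_le_iff (by positivity) ENNReal.ofReal_ne_top |>.2 hL.le
  rw [eLpNorm_one_eq_lintegral_enorm]
  calc ∫⁻ x in Q, ‖u x - c‖ₑ ∂μ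
      ≤ ∫⁻ x in Q, ENNReal.ofReal B *
        (1 + 2 * ((ENNReal.ofReal (lam ^ (q : ℝ)))⁻¹ * ‖g x‖ₑ ^ (q : ℝ))) ∂μ :=
      lintegral_mono_ae hpoint
    _ = ENNReal.ofReal B * (μ Q + 2 * ((ENNReal.ofReal (lam ^ (q : ℝ)))⁻¹ *
        eLpNorm g q (μ.restrict Q) ^ (q : ℝ))) := by
      rw [lintegral_const_mul _ (by fun_prop), lintegral_add_left measurable_const,
        lintegral_const_mul _ (by fun_prop), lintegral_const_mul _ hmeas,
        eLpNorm_nnreal_pow_eq_lintegral (NNReal.coe_pos.1 hq₀).ne', setLIntegral_one]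
    _ ≤ ENNReal.ofReal B * (μ Q + 2 * μ Q) := by gcongr
    _ = ENNReal.ofReal B * (3 * μ Q) := by ring

theorem IsHajlaszGradient.exists_eLpNorm_sub_const_le (hg : IsHajlaszGradient u g μ)
    (hQ : Convex ℝ Q) (hQb : Bornology.IsBounded Q) (hQ₀ : μ Q ≠ 0)
    (hq : (finrank ℝ E / (finrank ℝ E + 1) : ℝ) ≤ q) (hq₁ : q < 1)
    (hL : eLpNorm g q (μ.restrict Q) ≠ ∞) :
    ∃ c, eLpNorm (fun x ↦ u x - c) 1 (μ.restrict Q) ≤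
      ENNReal.ofReal (3 * hajlaszPoincareConst (finrank ℝ E) q * (2 / μ.real Q) ^ (q⁻¹ : ℝ) *
        diam Q * μ.real Q) * eLpNorm g q (μ.restrict Q) := by
  have hq₀ : 0 < (q : ℝ) := lt_of_lt_of_le (by have := finrank_pos (R := ℝ) (M := E); positivity) hq
  rcases eq_or_ne (eLpNorm g q (μ.restrict Q)) 0 with h0 | h0
  · obtain ⟨c, hc⟩ := hg.exists_ae_eq_const_of_eLpNorm_eq_zero (by simpa using hq₀.ne') hQ₀ h0
    refine ⟨c, (eLpNorm_congr_ae (hc.sub (ae_eq_refl fun _ ↦ c))).trans_le ?_⟩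
    simp
  have hQfin : μ Q ≠ ∞ := hQb.measure_lt_top.ne
  have hm : 0 < μ.real Q := ENNReal.toReal_pos hQ₀ hQfin
  set L := (eLpNorm g q (μ.restrict Q)).toReal
  have hLpos : 0 < L := ENNReal.toReal_pos h0 hL
  have hLeq : eLpNorm g q (μ.restrict Q) = ENNReal.ofReal L := (ENNReal.ofReal_toReal hL).symm
  have hQeq : μ Q = ENNReal.ofReal (μ.real Q) := (ENNReal.ofReal_toReal hQfin).symm
  obtain ⟨c, hc⟩ := hg.exists_eLpNorm_sub_const_le_of_lt hQ hQb hq hq₁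
    (lam := (2 / μ.real Q) ^ (q⁻¹ : ℝ) * L) (by positivity) <| by
      rw [Real.mul_rpow (by positivity) hLpos.le, Real.rpow_inv_rpow (by positivity) hq₀.ne', hLeq,
        hQeq, ENNReal.ofReal_rpow_of_pos hLpos, ← ENNReal.ofReal_mul (by positivity),
        ENNReal.ofReal_lt_ofReal_iff (by positivity)]
      have := Real.rpow_pos_of_pos hLpos q
      field_simp
      linarith
  refine ⟨c, hc.trans_eq ?_⟩
  have hconst := hajlaszPoincareConst_nonneg (finrank_pos (R := ℝ) (M := E)).ne'
    (NNReal.coe_lt_one.2 hq₁)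
  rw [hLeq, hQeq, ← ENNReal.ofReal_ofNat, ← ENNReal.ofReal_mul zero_le_three,
    ← ENNReal.ofReal_mul (by positivity), ← ENNReal.ofReal_mul (by positivity)]
  congr 1
  ring

end Poincare

section Grid

open scoped Function Pointwise

variable {E ι : Type*} [NormedAddCommGroup E] [NormedSpace ℝ E] [Fintype ι] (b : Basis ι ℝ E)

/-- The cell with lattice index `z` of the grid of mesh `t` spanned by the basis `b`: the dilation
by `t` of a translate of `ZSpan.fundamentalDomain b`. Defining it through `ZSpan.floor` makes it
evident that the cells of a given mesh partition the space. -/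
def gridCell (t : ℝ) (z : Submodule.span ℤ (range b)) : Set E := {x | ZSpan.floor b (t⁻¹ • x) = z}

variable {b} {t : ℝ} {z : Submodule.span ℤ (range b)}

theorem mem_gridCell_floor (x : E) : x ∈ gridCell b t (ZSpan.floor b (t⁻¹ • x)) := rfl

theorem pairwise_disjoint_gridCell : Pairwise (Disjoint on gridCell b t) := fun _ _ hne ↦
  disjoint_left.2 fun _ hz hz' ↦ hne (hz.symm.trans hz')

theorem gridCell_eq_smul_vadd (ht : 0 < t) :
    gridCell b t z = t • ((z : E) +ᵥ ZSpan.fundamentalDomain b) := by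
  ext x
  rw [mem_smul_set_iff_inv_smul_mem₀ ht.ne', mem_vadd_set_iff_neg_vadd_mem, vadd_eq_add]
  change _ ↔ -z +ᵥ t⁻¹ • x ∈ _
  rw [ZSpan.vadd_mem_fundamentalDomain, neg_inj, eq_comm]
  rfl

theorem convex_gridCell (ht : 0 < t) : Convex ℝ (gridCell b t z) := by
  have hconv : Convex ℝ (ZSpan.fundamentalDomain b) := by
    have heq : ZSpan.fundamentalDomain b = ⋂ i, b.coord i ⁻¹' Ico 0 1 := by
      ext
      simp [ZSpan.mem_fundamentalDomain]
    exact heq ▸ convex_iInter fun i ↦ (convex_Ico 0 1).linear_preimage (b.coord i)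
  rw [gridCell_eq_smul_vadd ht]
  exact (hconv.vadd _).smul t

theorem isBounded_gridCell (ht : 0 < t) : Bornology.IsBounded (gridCell b t z) := by
  rw [gridCell_eq_smul_vadd ht]
  exact ((ZSpan.fundamentalDomain_isBounded b).vadd _).smul₀ t

theorem diam_gridCell (ht : 0 < t) :
    diam (gridCell b t z) = t * diam (ZSpan.fundamentalDomain b) := by
  rw [gridCell_eq_smul_vadd ht, diam_smul₀, diam_vadd, Real.norm_of_nonneg ht.le]

theorem gridCell_subset_ball {R : ℝ} (ht₀ : 0 < t) (ht₁ : t ≤ 1)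
    (hz : (gridCell b t z ∩ ball 0 R).Nonempty) :
    gridCell b t z ⊆ ball 0 (R + diam (ZSpan.fundamentalDomain b)) := by
  obtain ⟨x, hxz, hxR⟩ := hz
  intro y hy
  have hyx := dist_le_diam_of_mem (isBounded_gridCell ht₀) hy hxz
  rw [diam_gridCell ht₀] at hyx
  have := mul_le_of_le_one_left (diam_nonneg (s := ZSpan.fundamentalDomain b)) ht₁
  exact mem_ball.2 <| (dist_triangle y x 0).trans_lt (by linarith [mem_ball.1 hxR])

theorem finite_setOf_gridCell_inter_nonempty (b : Basis ι ℝ E) (t : ℝ) {S : Set E}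
    (hS : Bornology.IsBounded S) : {z | (gridCell b t z ∩ S).Nonempty}.Finite := by
  have : FiniteDimensional ℝ E := b.finiteDimensional_of_finite
  have : ProperSpace E := FiniteDimensional.proper_real E
  refine Finite.of_finite_image ((ZSpan.setFinite_inter b
    ((hS.smul₀ t⁻¹).sub (ZSpan.fundamentalDomain_isBounded b))).subset ?_)
    Subtype.val_injective.injOn
  rintro _ ⟨z, ⟨x, hxz, hxS⟩, rfl⟩
  refine ⟨⟨t⁻¹ • x, smul_mem_smul_set hxS, _, ZSpan.fract_mem_fundamentalDomain b (t⁻¹ • x), ?_⟩,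
    z.2⟩
  simp only [ZSpan.fract_apply, _root_.sub_sub_cancel, hxz.out]

variable [MeasurableSpace E] [BorelSpace E]

theorem measurableSet_gridCell (ht : 0 < t) : MeasurableSet (gridCell b t z) := by
  rw [gridCell_eq_smul_vadd ht]
  exact ((ZSpan.fundamentalDomain_measurableSet b).const_vadd _).const_smul₀ t

variable [FiniteDimensional ℝ E] {μ : Measure E} [μ.IsAddHaarMeasure]

theorem measure_gridCell (ht : 0 < t) : μ (gridCell b t z) =
    ENNReal.ofReal (t ^ finrank ℝ E) * μ (ZSpan.fundamentalDomain b) := by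
  rw [gridCell_eq_smul_vadd ht, Measure.addHaar_smul, measure_vadd, abs_of_nonneg (by positivity)]

theorem measure_gridCell_ne_zero (ht : 0 < t) : μ (gridCell b t z) ≠ 0 := by
  rw [measure_gridCell ht]
  exact mul_ne_zero (by simp only [ne_eq, ENNReal.ofReal_eq_zero, not_le]; positivity)
    (ZSpan.measure_fundamentalDomain_ne_zero b)

theorem exists_forall_eLpNorm_gridCell_sub_const_le [Nontrivial E] (b : Basis ι ℝ E)
    (μ : Measure E) [μ.IsAddHaarMeasure] (F : Type*) [NormedAddCommGroup F] {q : ℝ≥0}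
    (hq : (finrank ℝ E / (finrank ℝ E + 1) : ℝ) ≤ q) (hq₁ : q < 1) :
    ∃ C : ℝ, ∀ t > 0, ∀ (z : Submodule.span ℤ (range b)) (u : E → F) (g : E → ℝ),
      IsHajlaszGradient u g μ → eLpNorm g q (μ.restrict (gridCell b t z)) ≠ ∞ →
      ∃ c, eLpNorm (fun x ↦ u x - c) 1 (μ.restrict (gridCell b t z)) ≤
        ENNReal.ofReal (C * t ^ (finrank ℝ E + 1 - finrank ℝ E / q : ℝ)) *
          eLpNorm g q (μ.restrict (gridCell b t z)) := by
  set m := μ.real (ZSpan.fundamentalDomain b)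
  set d := diam (ZSpan.fundamentalDomain b)
  refine ⟨3 * hajlaszPoincareConst (finrank ℝ E) q * (2 / m) ^ (q⁻¹ : ℝ) * d * m,
    fun t ht z u g hg hL ↦ ?_⟩
  obtain ⟨c, hc⟩ := hg.exists_eLpNorm_sub_const_le (convex_gridCell ht) (isBounded_gridCell ht)
    (measure_gridCell_ne_zero ht) hq hq₁ hL
  refine ⟨c, hc.trans_eq ?_⟩
  have hmeas : μ.real (gridCell b t z) = t ^ finrank ℝ E * m := by
    rw [measureReal_def, measure_gridCell ht, ENNReal.toReal_mul,
      ENNReal.toReal_ofReal (by positivity)]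
    rfl
  have hpow : (2 / (t ^ finrank ℝ E * m)) ^ (q⁻¹ : ℝ) * t * t ^ finrank ℝ E =
      (2 / m) ^ (q⁻¹ : ℝ) * t ^ (finrank ℝ E + 1 - finrank ℝ E / q : ℝ) := by
    rw [mul_comm (t ^ _) m, ← div_div, Real.div_rpow (by positivity) (by positivity),
      ← Real.rpow_natCast_mul ht.le, Real.rpow_sub ht, Real.rpow_add ht, Real.rpow_one,
      Real.rpow_natCast, ← div_eq_mul_inv]
    ring
  rw [diam_gridCell ht, hmeas]
  congr 2
  linear_combination (3 * hajlaszPoincareConst (finrank ℝ E) q * d * m) * hpow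

end Grid

section Compactness

theorem sum_rpow_le_rpow_sum {κ : Type*} (Z : Finset κ) (a : κ → ℝ≥0∞) {r : ℝ} (hr : 1 ≤ r) :
    ∑ z ∈ Z, a z ^ r ≤ (∑ z ∈ Z, a z) ^ r := by
  classical
  induction Z using Finset.induction_on with
  | empty => simp
  | insert z Z hz ih =>
    rw [Finset.sum_insert hz, Finset.sum_insert hz]
    exact (add_le_add_right ih _).trans (ENNReal.add_rpow_le_rpow_add _ _ hr)

theorem exists_strictMono_forall_exists_tendsto {κ F : Type*} [Countable κ] [PseudoMetricSpace F]
    [ProperSpace F] {c : ℕ → κ → F} (hc : ∀ i, Bornology.IsBounded (range fun k ↦ c k i)) :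
    ∃ φ : ℕ → ℕ, StrictMono φ ∧ ∀ i, ∃ l, Tendsto (fun k ↦ c (φ k) i) atTop (𝓝 l) := by
  obtain ⟨l, -, φ, hφ, hl⟩ := (isCompact_univ_pi fun i ↦ (hc i).isCompact_closure).tendsto_subseq
    fun k i _ ↦ subset_closure (mem_range_self k)
  exact ⟨φ, hφ, fun i ↦ ⟨l i, tendsto_pi_nhds.1 hl i⟩⟩

theorem tendsto_zero_of_le_add {α : Type*} {l : Filter α} {w : α → ℝ≥0∞} {a : ℕ → ℝ≥0∞}
    {e : ℕ → α → ℝ≥0∞} (hw : ∀ i x, w x ≤ a i + e i x) (ha : Tendsto a atTop (𝓝 0))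
    (he : ∀ i, Tendsto (e i) l (𝓝 0)) : Tendsto w l (𝓝 0) := by
  refine ENNReal.tendsto_nhds_zero.2 fun ε hε ↦ ?_
  have hε₂ : 0 < ε / 2 := ENNReal.half_pos hε.ne'
  obtain ⟨i, hi⟩ := (ENNReal.tendsto_nhds_zero.1 ha _ hε₂).exists
  filter_upwards [ENNReal.tendsto_nhds_zero.1 (he i) _ hε₂] with x hx
  exact (hw i x).trans ((add_le_add hi hx).trans_eq (ENNReal.add_halves ε))

variable {X F : Type*} [MeasurableSpace X] {μ : Measure X} [NormedAddCommGroup F]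

theorem isBounded_range_of_eLpNorm_le [IsFiniteMeasure μ] (hμ : μ ≠ 0) {κ : Type*} {f : κ → X → F}
    {c : κ → F} (hf : ∀ k, AEStronglyMeasurable (f k) μ) {q : ℝ≥0} (hq₀ : q ≠ 0) (hq₁ : q ≤ 1)
    {A B : ℝ≥0∞} (hA : A ≠ ∞) (hB : B ≠ ∞) (hfA : ∀ k, eLpNorm (f k) q μ ≤ A)
    (hfB : ∀ k, eLpNorm (fun x ↦ f k x - c k) 1 μ ≤ B) : Bornology.IsBounded (range c) := by
  have hμ₀ : μ univ ≠ 0 := by simpa using hμ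
  have hm₀ : μ univ ^ (1 / (q : ℝ)) ≠ 0 := by simp [hμ₀]
  have hm : μ univ ^ (1 / (q : ℝ)) ≠ ∞ := by finiteness
  have hm' : μ univ ^ (1 / (q : ℝ) - 1) ≠ ∞ := by finiteness
  set M : ℝ≥0∞ := LpAddConst q * (A + B * μ univ ^ (1 / (q : ℝ) - 1))
  have hM : M ≠ ∞ := by have := (LpAddConst_lt_top q).ne; finiteness
  have hc (k : κ) : ‖c k‖ₑ ≤ M / μ univ ^ (1 / (q : ℝ)) := by
    have hdiff := (hf k).sub (aestronglyMeasurable_const (b := c k))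
    have hqdiff : eLpNorm (f k - fun _ ↦ c k) q μ ≤ B * μ univ ^ (1 / (q : ℝ) - 1) := by
      have := eLpNorm_le_eLpNorm_mul_rpow_measure_univ (p := q) (q := 1)
        (by exact_mod_cast hq₁) hdiff
      simp only [coe_toReal, toReal_one, div_one] at this
      exact this.trans (mul_le_mul_left (hfB k) _)
    rw [ENNReal.le_div_iff_mul_le (.inl hm₀) (.inl hm)]
    calc ‖c k‖ₑ * μ univ ^ (1 / (q : ℝ)) = eLpNorm (fun _ ↦ c k) q μ := by
          rw [eLpNorm_const _ (by simpa using hq₀) hμ, coe_toReal]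
      _ = eLpNorm (f k - (f k - fun _ ↦ c k)) q μ := by rw [_root_.sub_sub_cancel]
      _ ≤ LpAddConst q * (eLpNorm (f k) q μ + eLpNorm (f k - fun _ ↦ c k) q μ) :=
        eLpNorm_sub_le' (hf k) hdiff q
      _ ≤ M := mul_le_mul_right (add_le_add (hfA k) hqdiff) _
  refine isBounded_iff_forall_norm_le.2
    ⟨(M / μ univ ^ (1 / (q : ℝ))).toReal, forall_mem_range.2 fun k ↦ ?_⟩
  exact toReal_enorm (c k) ▸ ENNReal.toReal_mono (by finiteness) (hc k)

section Cells

variable {κ : Type*} {Q : κ → Set X} {Z : Finset κ} {S S' : Set X}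

theorem eLpNorm_one_restrict_le_sum (hS : S ⊆ ⋃ z ∈ Z, Q z) (h : X → F) :
    eLpNorm h 1 (μ.restrict S) ≤ ∑ z ∈ Z, eLpNorm h 1 (μ.restrict (Q z)) := by
  simp only [eLpNorm_one_eq_lintegral_enorm]
  rw [← Finset.tsum_subtype, ← lintegral_sum_measure]
  have hS' : S ⊆ ⋃ z : Z, Q z := hS.trans (iUnion_subtype (· ∈ Z) fun z ↦ Q z).ge
  exact lintegral_mono'
    ((Measure.restrict_mono hS' le_rfl).trans Measure.restrict_iUnion_le) le_rfl

theorem sum_eLpNorm_restrict_le (hdisj : (Z : Set κ).PairwiseDisjoint Q)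
    (hmeas : ∀ z ∈ Z, MeasurableSet (Q z)) (hS : ∀ z ∈ Z, Q z ⊆ S) {q : ℝ≥0} (hq₀ : q ≠ 0)
    (hq₁ : q ≤ 1) (h : X → F) :
    ∑ z ∈ Z, eLpNorm h q (μ.restrict (Q z)) ≤ eLpNorm h q (μ.restrict S) := by
  simp only [eLpNorm_nnreal_eq_lintegral hq₀]
  have hq₀' : 0 < (q : ℝ) := by positivity
  calc ∑ z ∈ Z, (∫⁻ x in Q z, ‖h x‖ₑ ^ (q : ℝ) ∂μ) ^ (1 / (q : ℝ))
      ≤ (∑ z ∈ Z, ∫⁻ x in Q z, ‖h x‖ₑ ^ (q : ℝ) ∂μ) ^ (1 / (q : ℝ)) :=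
        sum_rpow_le_rpow_sum _ _ (by rw [one_le_div hq₀']; exact_mod_cast hq₁)
    _ = (∫⁻ x in ⋃ z ∈ Z, Q z, ‖h x‖ₑ ^ (q : ℝ) ∂μ) ^ (1 / (q : ℝ)) := by
        rw [lintegral_biUnion_finset hdisj hmeas]
    _ ≤ (∫⁻ x in S, ‖h x‖ₑ ^ (q : ℝ) ∂μ) ^ (1 / (q : ℝ)) := by
        gcongr
        exact iUnion₂_subset hS

theorem eLpNorm_one_sub_le_of_sub_const {ν : Measure X} {u w : X → F} {a c : F}
    (hu : AEStronglyMeasurable u ν) (hw : AEStronglyMeasurable w ν) :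
    eLpNorm (u - w) 1 ν ≤ eLpNorm (fun x ↦ u x - a) 1 ν + eLpNorm (fun x ↦ w x - c) 1 ν +
      ‖a - c‖ₑ * ν univ := by
  have hua : AEStronglyMeasurable (fun x ↦ u x - a) ν := hu.sub aestronglyMeasurable_const
  have hwc : AEStronglyMeasurable (fun x ↦ w x - c) ν := hw.sub aestronglyMeasurable_const
  have hsplit : u - w = ((fun x ↦ u x - a) - fun x ↦ w x - c) + fun _ ↦ a - c := by
    ext x
    simp only [Pi.add_apply, Pi.sub_apply]
    abel
  rw [hsplit]
  refine (eLpNorm_add_le (hua.sub hwc) aestronglyMeasurable_const le_rfl).trans ?_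
  gcongr
  · exact eLpNorm_sub_le hua hwc le_rfl
  · rw [eLpNorm_one_eq_lintegral_enorm, lintegral_const]

theorem eLpNorm_one_sub_restrict_le_of_cells (hdisj : (Z : Set κ).PairwiseDisjoint Q)
    (hmeas : ∀ z ∈ Z, MeasurableSet (Q z)) (hS : S ⊆ ⋃ z ∈ Z, Q z) (hS' : ∀ z ∈ Z, Q z ⊆ S')
    {u w : X → F} (hu : AEStronglyMeasurable u μ) (hw : AEStronglyMeasurable w μ) {g h : X → ℝ}
    {q : ℝ≥0} (hq₀ : q ≠ 0) (hq₁ : q ≤ 1) {Λ : ℝ≥0∞} {a c : κ → F}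
    (hua : ∀ z, eLpNorm (fun x ↦ u x - a z) 1 (μ.restrict (Q z)) ≤
      Λ * eLpNorm g q (μ.restrict (Q z)))
    (hwc : ∀ z, eLpNorm (fun x ↦ w x - c z) 1 (μ.restrict (Q z)) ≤
      Λ * eLpNorm h q (μ.restrict (Q z))) :
    eLpNorm (u - w) 1 (μ.restrict S) ≤
      Λ * (eLpNorm g q (μ.restrict S') + eLpNorm h q (μ.restrict S')) +
        ∑ z ∈ Z, ‖a z - c z‖ₑ * μ (Q z) :=
  calc eLpNorm (u - w) 1 (μ.restrict S)
      ≤ ∑ z ∈ Z, eLpNorm (u - w) 1 (μ.restrict (Q z)) := eLpNorm_one_restrict_le_sum hS _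
    _ ≤ ∑ z ∈ Z, (Λ * eLpNorm g q (μ.restrict (Q z)) + Λ * eLpNorm h q (μ.restrict (Q z)) +
        ‖a z - c z‖ₑ * μ (Q z)) := by
      refine Finset.sum_le_sum fun z _ ↦
        (eLpNorm_one_sub_le_of_sub_const (a := a z) (c := c z) hu.restrict hw.restrict).trans ?_
      rw [Measure.restrict_apply_univ]
      gcongr
      exacts [hua z, hwc z]
    _ = Λ * (∑ z ∈ Z, eLpNorm g q (μ.restrict (Q z)) + ∑ z ∈ Z, eLpNorm h q (μ.restrict (Q z))) +
        ∑ z ∈ Z, ‖a z - c z‖ₑ * μ (Q z) := by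
      rw [Finset.sum_add_distrib, Finset.sum_add_distrib, mul_add, Finset.mul_sum, Finset.mul_sum]
    _ ≤ _ := by
      gcongr <;> exact sum_eLpNorm_restrict_le hdisj hmeas hS' hq₀ hq₁ _

end Cells

/-- Boundedness of a sequence in `L^q` on every bounded set, uniformly in the index; the encoding
of a bounded sequence in `L^q_loc`. -/
def IsLocallyBoundedInLp {X F : Type*} [Bornology X] [MeasurableSpace X] [NormedAddCommGroup F]
    (f : ℕ → X → F) (q : ℝ≥0) (μ : Measure X) : Prop :=
  ∀ s, Bornology.IsBounded s → ∃ A : ℝ≥0, ∀ k, eLpNorm (f k) q (μ.restrict s) ≤ A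

theorem tendsto_ofReal_const_mul_inv_rpow (C : ℝ) {s : ℝ} (hs : 0 < s) :
    Tendsto (fun i : ℕ ↦ ENNReal.ofReal (C * ((i + 1 : ℝ)⁻¹) ^ s)) atTop (𝓝 0) := by
  have hinv : Tendsto (fun i : ℕ ↦ (i + 1 : ℝ)⁻¹) atTop (𝓝 0) := by
    simpa only [one_div] using tendsto_one_div_add_atTop_nhds_zero_nat (𝕜 := ℝ)
  simpa [Real.zero_rpow hs.ne'] using
    ENNReal.tendsto_ofReal ((hinv.rpow_const (.inr hs.le)).const_mul C)

theorem tendsto_sum_enorm_sub_mul {κ F : Type*} [NormedAddCommGroup F] {c : ℕ → κ → F}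
    (hc : ∀ z, ∃ l, Tendsto (fun k ↦ c k z) atTop (𝓝 l)) (Z : Finset κ) {m : κ → ℝ≥0∞}
    (hm : ∀ z, m z ≠ ∞) :
    Tendsto (fun k : ℕ × ℕ ↦ ∑ z ∈ Z, ‖c k.1 z - c k.2 z‖ₑ * m z) atTop (𝓝 0) := by
  rw [← Finset.sum_const_zero (s := Z), ← prod_atTop_atTop_eq]
  refine tendsto_finsetSum _ fun z _ ↦ ?_
  obtain ⟨l, hl⟩ := hc z
  have hsub := ((hl.comp tendsto_fst).sub (hl.comp (tendsto_snd (f := atTop (α := ℕ))))).enorm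
  simpa using ENNReal.Tendsto.mul_const hsub (.inr (hm z))

section Rellich

variable {E F : Type*} [NormedAddCommGroup E] [NormedSpace ℝ E] [MeasurableSpace E] [BorelSpace E]
  {μ : Measure E} [NormedAddCommGroup F] {q : ℝ≥0}

theorem exists_finset_forall_eLpNorm_sub_ball_le {ι : Type*} [Fintype ι] (b : Basis ι ℝ E)
    (hq₀ : q ≠ 0) (hq₁ : q ≤ 1) {t : ℝ} (ht₀ : 0 < t) (ht₁ : t ≤ 1) (R : ℝ) :
    ∃ Z : Finset (Submodule.span ℤ (range b)),
      ∀ {u w : E → F} {a c : Submodule.span ℤ (range b) → F} {g h : E → ℝ} {Λ : ℝ≥0∞},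
      AEStronglyMeasurable u μ → AEStronglyMeasurable w μ →
      (∀ z, eLpNorm (fun x ↦ u x - a z) 1 (μ.restrict (gridCell b t z)) ≤
        Λ * eLpNorm g q (μ.restrict (gridCell b t z))) →
      (∀ z, eLpNorm (fun x ↦ w x - c z) 1 (μ.restrict (gridCell b t z)) ≤
        Λ * eLpNorm h q (μ.restrict (gridCell b t z))) →
      eLpNorm (u - w) 1 (μ.restrict (ball 0 R)) ≤
        Λ * (eLpNorm g q (μ.restrict (ball 0 (R + diam (ZSpan.fundamentalDomain b)))) +
          eLpNorm h q (μ.restrict (ball 0 (R + diam (ZSpan.fundamentalDomain b))))) +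
        ∑ z ∈ Z, ‖a z - c z‖ₑ * μ (gridCell b t z) := by
  have hfin := finite_setOf_gridCell_inter_nonempty b t (isBounded_ball (x := (0 : E)) (r := R))
  refine ⟨hfin.toFinset, fun hu hw hua hwc ↦ eLpNorm_one_sub_restrict_le_of_cells
    (fun _ _ _ _ h ↦ pairwise_disjoint_gridCell h) (fun _ _ ↦ measurableSet_gridCell ht₀)
    (fun x hx ↦ ?_) (fun z hz ↦ gridCell_subset_ball ht₀ ht₁ (hfin.mem_toFinset.1 hz))
    hu hw hq₀ hq₁ hua hwc⟩
  exact mem_biUnion (hfin.mem_toFinset.2 ⟨x, mem_gridCell_floor x, hx⟩) (mem_gridCell_floor x)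

variable [FiniteDimensional ℝ E] [μ.IsAddHaarMeasure] {f : ℕ → E → F} {g : ℕ → E → ℝ}

theorem exists_gridCell_constants [Nontrivial E] {ι : Type*} [Fintype ι] (b : Basis ι ℝ E)
    (hq : (finrank ℝ E / (finrank ℝ E + 1) : ℝ) < q) (hq₁ : q < 1)
    (hf : ∀ k, AEStronglyMeasurable (f k) μ) (hg : ∀ k, IsHajlaszGradient (f k) (g k) μ)
    (hfq : IsLocallyBoundedInLp f q μ) (hgq : IsLocallyBoundedInLp g q μ) :
    ∃ (Λ : ℕ → ℝ≥0∞) (c : ℕ → ℕ × Submodule.span ℤ (range b) → F), Tendsto Λ atTop (𝓝 0) ∧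
      (∀ j, Bornology.IsBounded (range fun k ↦ c k j)) ∧
      ∀ k i z, eLpNorm (fun x ↦ f k x - c k (i, z)) 1 (μ.restrict (gridCell b (i + 1 : ℝ)⁻¹ z)) ≤
        Λ i * eLpNorm (g k) q (μ.restrict (gridCell b (i + 1 : ℝ)⁻¹ z)) := by
  have hq₀ : 0 < (q : ℝ) := lt_of_le_of_lt (by positivity) hq
  have hexp : 0 < (finrank ℝ E + 1 - finrank ℝ E / q : ℝ) := by
    rw [sub_pos, div_lt_comm₀ hq₀ (by positivity)]
    exact hq
  have hmesh (i : ℕ) : 0 < (i + 1 : ℝ)⁻¹ := by positivity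
  obtain ⟨C, hC⟩ := exists_forall_eLpNorm_gridCell_sub_const_le b μ F hq.le hq₁
  choose A hA using fun i z ↦ hfq _ (isBounded_gridCell (b := b) (z := z) (hmesh i))
  choose B hB using fun i z ↦ hgq _ (isBounded_gridCell (b := b) (z := z) (hmesh i))
  choose c hc using fun k (j : ℕ × Submodule.span ℤ (range b)) ↦
    hC _ (hmesh j.1) j.2 _ _ (hg k) (ne_top_of_le_ne_top coe_ne_top (hB j.1 j.2 k))
  refine ⟨_, c, tendsto_ofReal_const_mul_inv_rpow C hexp, fun ⟨i, z⟩ ↦ ?_,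
    fun k i z ↦ hc k (i, z)⟩
  have hcell : μ (gridCell b (i + 1 : ℝ)⁻¹ z) ≠ ∞ :=
    (isBounded_gridCell (hmesh i)).measure_lt_top.ne
  have : IsFiniteMeasure (μ.restrict (gridCell b (i + 1 : ℝ)⁻¹ z)) := ⟨by simpa using hcell.lt_top⟩
  exact isBounded_range_of_eLpNorm_le (by simpa using measure_gridCell_ne_zero (hmesh i))
    (fun k ↦ (hf k).restrict) (by exact_mod_cast hq₀.ne') hq₁.le coe_ne_top
    (ENNReal.mul_ne_top ofReal_ne_top coe_ne_top) (hA i z)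
    fun k ↦ (hc k (i, z)).trans (mul_le_mul_right (hB i z k) _)

theorem exists_strictMono_tendsto_eLpNorm_sub_ball [Nontrivial E] [ProperSpace F]
    (hq : (finrank ℝ E / (finrank ℝ E + 1) : ℝ) < q) (hq₁ : q < 1)
    (hf : ∀ k, AEStronglyMeasurable (f k) μ) (hg : ∀ k, IsHajlaszGradient (f k) (g k) μ)
    (hfq : IsLocallyBoundedInLp f q μ) (hgq : IsLocallyBoundedInLp g q μ) :
    ∃ φ : ℕ → ℕ, StrictMono φ ∧ ∀ R, Tendsto
      (fun k : ℕ × ℕ ↦ eLpNorm (f (φ k.1) - f (φ k.2)) 1 (μ.restrict (ball 0 R)))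
        atTop (𝓝 0) := by
  have hq₀ : q ≠ 0 := (NNReal.coe_pos.1 (lt_of_le_of_lt (by positivity) hq)).ne'
  have hmesh₀ (i : ℕ) : 0 < (i + 1 : ℝ)⁻¹ := by positivity
  have hmesh₁ (i : ℕ) : (i + 1 : ℝ)⁻¹ ≤ 1 := inv_le_one_of_one_le₀ (by simp)
  set b := finBasis ℝ E
  obtain ⟨Λ, c, hΛ, hbdd, hc⟩ := exists_gridCell_constants b hq hq₁ hf hg hfq hgq
  obtain ⟨φ, hφ, hlim⟩ := exists_strictMono_forall_exists_tendsto hbdd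
  refine ⟨φ, hφ, fun R ↦ ?_⟩
  obtain ⟨B, hB⟩ := hgq _ (isBounded_ball (x := 0) (r := R + diam (ZSpan.fundamentalDomain b)))
  choose Z hZ using fun i ↦ exists_finset_forall_eLpNorm_sub_ball_le (μ := μ) (F := F) b hq₀
    hq₁.le (hmesh₀ i) (hmesh₁ i) R
  have hΛB : Tendsto (fun i ↦ Λ i * (B + B : ℝ≥0∞)) atTop (𝓝 0) := by
    simpa using ENNReal.Tendsto.mul_const hΛ (b := (B + B : ℝ≥0∞)) (.inr (by finiteness))
  have hcell (i : ℕ) (z) : μ (gridCell b (i + 1 : ℝ)⁻¹ z) < ∞ :=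
    (isBounded_gridCell (hmesh₀ i)).measure_lt_top
  refine tendsto_zero_of_le_add (fun i k ↦ ?_) hΛB fun i ↦ tendsto_sum_enorm_sub_mul
    (c := fun k z ↦ c (φ k) (i, z)) (fun z ↦ hlim (i, z)) (Z i)
    fun z ↦ (hcell i z).ne
  refine (hZ i (hf _) (hf _) (hc (φ k.1) i) (hc (φ k.2) i)).trans ?_
  gcongr <;> exact hB _

end Rellich

end Compactness

section LimitFunction

variable {X F : Type*} [MeasurableSpace X] {μ : Measure X} [NormedAddCommGroup F] {f : ℕ → X → F}

theorem exists_strictMono_tendsto_ae_of_cauchy_eLpNorm [CompleteSpace F] {S : ℕ → Set X}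
    (hS : Monotone S) (hSuniv : ⋃ j, S j = univ) (hf : ∀ k, AEStronglyMeasurable (f k) μ)
    (hcauchy : ∀ j, Tendsto (fun k : ℕ × ℕ ↦ eLpNorm (f k.1 - f k.2) 1 (μ.restrict (S j)))
      atTop (𝓝 0)) :
    ∃ φ : ℕ → ℕ, StrictMono φ ∧ ∃ v : X → F,
      ∀ᵐ x ∂μ, Tendsto (fun k ↦ f (φ k) x) atTop (𝓝 (v x)) := by
  obtain ⟨B, hB₀, hB⟩ := ENNReal.exists_pos_sum_of_countable one_ne_zero ℕ
  have hfast (j : ℕ) : ∃ N, ∀ k ≥ N, ∀ m ≥ k, ∀ n ≥ k,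
      eLpNorm (f m - f n) 1 (μ.restrict (S j)) < B j := by
    obtain ⟨N, hN⟩ := eventually_atTop_prod_self'.1
      ((hcauchy j).eventually_lt_const (ENNReal.coe_pos.2 (hB₀ j)))
    exact ⟨N, fun k hk m hm n hn ↦ hN m (hk.trans hm) n (hk.trans hn)⟩
  obtain ⟨φ, hφ, hφB⟩ := extraction_forall_of_eventually' hfast
  have hlim : ∀ᵐ x ∂μ, ∃ l, Tendsto (fun k ↦ f (φ k) x) atTop (𝓝 l) := by
    rw [← Measure.restrict_univ (μ := μ), ← hSuniv, ae_restrict_iUnion_iff]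
    intro j
    have hsum : ∑' k, (B (k + j) : ℝ≥0∞) ≠ ∞ := ne_top_of_le_ne_top one_ne_top
      ((ENNReal.tsum_comp_le_tsum_of_injective (add_left_injective j) _).trans hB.le)
    have hbound (N m n : ℕ) (hm : N ≤ m) (hn : N ≤ n) :
        eLpNorm (f (φ (m + j)) - f (φ (n + j))) 1 (μ.restrict (S j)) < B (N + j) :=
      (eLpNorm_mono_measure _ (Measure.restrict_mono (hS (j.le_add_left N)) le_rfl)).trans_lt
        (hφB (N + j) _ (hφ.monotone (by lia)) _ (hφ.monotone (by lia)))
    filter_upwards [Lp.ae_tendsto_of_cauchy_eLpNorm (fun k ↦ (hf _).restrict) le_rfl hsum hbound]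
      with x ⟨l, hl⟩
    exact ⟨l, (tendsto_add_atTop_iff_nat j).1 hl⟩
  obtain ⟨v, -, hfv⟩ := exists_stronglyMeasurable_limit_of_tendsto_ae (fun k ↦ hf (φ k)) hlim
  exact ⟨φ, hφ, v, hfv⟩

theorem tendsto_eLpNorm_sub_of_cauchy_of_tendsto_ae {p : ℝ≥0∞} {v : X → F}
    (hf : ∀ k, AEStronglyMeasurable (f k) μ)
    (hcauchy : Tendsto (fun k : ℕ × ℕ ↦ eLpNorm (f k.1 - f k.2) p μ) atTop (𝓝 0))
    (hlim : ∀ᵐ x ∂μ, Tendsto (fun k ↦ f k x) atTop (𝓝 (v x))) :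
    Tendsto (fun k ↦ eLpNorm (f k - v) p μ) atTop (𝓝 0) := by
  refine ENNReal.tendsto_nhds_zero.2 fun ε hε ↦ ?_
  obtain ⟨N, hN⟩ := eventually_atTop_prod_self'.1 (ENNReal.tendsto_nhds_zero.1 hcauchy ε hε)
  filter_upwards [eventually_ge_atTop N] with k hk
  calc eLpNorm (f k - v) p μ
      ≤ liminf (fun m ↦ eLpNorm (f k - f m) p μ) atTop :=
        Lp.eLpNorm_lim_le_liminf_eLpNorm (fun m ↦ (hf k).sub (hf m)) _ <| by
          filter_upwards [hlim] with x hx using hx.const_sub (f k x)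
    _ ≤ ε := liminf_le_of_le (by isBoundedDefault) fun a ha ↦ by
          obtain ⟨m, hm, ham⟩ := ((eventually_ge_atTop N).and ha).exists
          exact ham.trans (hN k hk m hm)

theorem memLp_of_tendsto_ae {p K : ℝ≥0∞} {v : X → F} (hf : ∀ k, AEStronglyMeasurable (f k) μ)
    (hK : K ≠ ∞) (hfK : ∀ k, eLpNorm (f k) p μ ≤ K)
    (hlim : ∀ᵐ x ∂μ, Tendsto (fun k ↦ f k x) atTop (𝓝 (v x))) : MemLp v p μ := by
  refine ⟨aestronglyMeasurable_of_tendsto_ae atTop hf hlim, ?_⟩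
  calc eLpNorm v p μ ≤ liminf (fun k ↦ eLpNorm (f k) p μ) atTop :=
        Lp.eLpNorm_lim_le_liminf_eLpNorm hf v hlim
    _ ≤ K := liminf_le_of_le (by isBoundedDefault) fun a ha ↦
        let ⟨k, hk⟩ := ha.exists; hk.trans (hfK k)
    _ < ∞ := hK.lt_top

end LimitFunction

theorem exists_strictMono_tendsto_of_cauchy_eLpNorm_ball {X F : Type*} [PseudoMetricSpace X]
    [MeasurableSpace X] {μ : Measure X} [NormedAddCommGroup F] [CompleteSpace F] {f : ℕ → X → F}
    (hf : ∀ k, AEStronglyMeasurable (f k) μ) (x₀ : X)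
    (hcauchy : ∀ R, Tendsto (fun k : ℕ × ℕ ↦ eLpNorm (f k.1 - f k.2) 1 (μ.restrict (ball x₀ R)))
      atTop (𝓝 0)) :
    ∃ φ : ℕ → ℕ, StrictMono φ ∧ ∃ v : X → F,
      (∀ᵐ x ∂μ, Tendsto (fun k ↦ f (φ k) x) atTop (𝓝 (v x))) ∧
      ∀ x r, Tendsto (fun k ↦ eLpNorm (f (φ k) - v) 1 (μ.restrict (ball x r))) atTop (𝓝 0) := by
  obtain ⟨φ, hφ, v, hlim⟩ := exists_strictMono_tendsto_ae_of_cauchy_eLpNorm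
    (S := fun j : ℕ ↦ ball x₀ j) (fun i j hij ↦ ball_subset_ball (by exact_mod_cast hij))
    (iUnion_ball_nat x₀) hf fun j ↦ hcauchy j
  refine ⟨φ, hφ, v, hlim, fun x r ↦ ?_⟩
  have hφφ : Tendsto (Prod.map φ φ) atTop atTop := by
    rw [← prod_atTop_atTop_eq]
    exact hφ.tendsto_atTop.prodMap hφ.tendsto_atTop
  have hball : ball x r ⊆ ball x₀ (r + dist x x₀) := ball_subset_ball' le_rfl
  have hsub : Tendsto
      (fun k : ℕ × ℕ ↦ eLpNorm (f (φ k.1) - f (φ k.2)) 1 (μ.restrict (ball x₀ (r + dist x x₀))))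
      atTop (𝓝 0) := by
    simpa only [Function.comp_def, Prod.map_fst, Prod.map_snd] using
      (hcauchy (r + dist x x₀)).comp hφφ
  have hbig := tendsto_eLpNorm_sub_of_cauchy_of_tendsto_ae
    (fun k ↦ (hf (φ k)).restrict) hsub (ae_restrict_of_ae hlim)
  exact tendsto_of_tendsto_of_tendsto_of_le_of_le tendsto_const_nhds hbig (fun _ ↦ zero_le)
    fun k ↦ eLpNorm_mono_measure _ (Measure.restrict_mono hball le_rfl)

theorem isLocallyBoundedInLp_of_eLpNorm_le {X F : Type*} [PseudoMetricSpace X] [ProperSpace X]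
    [MeasurableSpace X] {μ : Measure X} [IsFiniteMeasureOnCompacts μ] [NormedAddCommGroup F]
    {f : ℕ → X → F} (hf : ∀ k, AEStronglyMeasurable (f k) μ) {q p : ℝ≥0} (hq : q ≠ 0) (hqp : q ≤ p)
    {K : ℝ≥0∞} (hK : K ≠ ∞) (hfK : ∀ k, eLpNorm (f k) p μ ≤ K) : IsLocallyBoundedInLp f q μ := by
  intro s hs
  have hexp : 0 ≤ 1 / (q : ℝ) - 1 / (p : ℝ) := by
    have hq' : 0 < (q : ℝ) := by positivity
    exact sub_nonneg.2 (one_div_le_one_div_of_le hq' (by exact_mod_cast hqp))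
  have hfin : K * μ s ^ (1 / (q : ℝ) - 1 / (p : ℝ)) ≠ ∞ :=
    ENNReal.mul_ne_top hK (rpow_ne_top_of_nonneg hexp hs.measure_lt_top.ne)
  refine ⟨(K * μ s ^ (1 / (q : ℝ) - 1 / (p : ℝ))).toNNReal, fun k ↦ ?_⟩
  rw [coe_toNNReal hfin]
  calc eLpNorm (f k) q (μ.restrict s)
      ≤ eLpNorm (f k) p (μ.restrict s) * μ s ^ (1 / (q : ℝ) - 1 / (p : ℝ)) := by
        simpa only [coe_toReal, Measure.restrict_apply_univ] using
          eLpNorm_le_eLpNorm_mul_rpow_measure_univ (ENNReal.coe_le_coe.2 hqp) (hf k).restrict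
    _ ≤ K * μ s ^ (1 / (q : ℝ) - 1 / (p : ℝ)) := by
        gcongr
        exact (eLpNorm_mono_measure _ Measure.restrict_le_self).trans (hfK k)

theorem hajlasz_sobolev_weak_compactness_general {E F : Type*} [NormedAddCommGroup E]
    [NormedSpace ℝ E] [FiniteDimensional ℝ E] [Nontrivial E] [MeasurableSpace E] [BorelSpace E]
    {μ : Measure E} [μ.IsAddHaarMeasure] [NormedAddCommGroup F] [ProperSpace F] {p : ℝ≥0}
    (hp : (finrank ℝ E / (finrank ℝ E + 1) : ℝ) < p) {K : ℝ≥0∞} (hK : K ≠ ∞) {f : ℕ → E → F}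
    {g : ℕ → E → ℝ} (hf : ∀ k, AEStronglyMeasurable (f k) μ)
    (hg : ∀ k, IsHajlaszGradient (f k) (g k) μ) (hfK : ∀ k, eLpNorm (f k) p μ ≤ K)
    (hgK : ∀ k, eLpNorm (g k) p μ ≤ K) :
    ∃ v, MemLp v p μ ∧ (∃ G, IsHajlaszGradient v G μ ∧ MemLp G p μ) ∧
      ∃ φ : ℕ → ℕ, StrictMono φ ∧ ∀ x r,
        Tendsto (fun k ↦ eLpNorm (f (φ k) - v) 1 (μ.restrict (ball x r))) atTop (𝓝 0) := by
  have : ProperSpace E := FiniteDimensional.proper_real E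
  have hlt_one : (finrank ℝ E / (finrank ℝ E + 1) : ℝ) < 1 := by
    rw [div_lt_one (by positivity)]; linarith
  obtain ⟨q, hq, hqmin⟩ := exists_between (lt_min hp hlt_one)
  lift q to ℝ≥0 using (show 0 ≤ q from le_trans (by positivity) hq.le)
  have hq₀ : q ≠ 0 := (NNReal.coe_pos.1 (lt_of_le_of_lt (by positivity) hq)).ne'
  have hqp : q < p := by exact_mod_cast hqmin.trans_le (min_le_left _ _)
  obtain ⟨φ, hφ, hcauchy⟩ := exists_strictMono_tendsto_eLpNorm_sub_ball hq
    (by exact_mod_cast hqmin.trans_le (min_le_right _ _)) hf hg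
    (isLocallyBoundedInLp_of_eLpNorm_le hf hq₀ hqp.le hK hfK)
    (isLocallyBoundedInLp_of_eLpNorm_le (fun k ↦ (hg k).measurable.aestronglyMeasurable) hq₀
      hqp.le hK hgK)
  obtain ⟨ψ, hψ, v, hlim, hball⟩ :=
    exists_strictMono_tendsto_of_cauchy_eLpNorm_ball (fun k ↦ hf (φ k)) 0 hcauchy
  exact ⟨v, memLp_of_tendsto_ae (fun k ↦ hf _) hK (fun k ↦ hfK _) hlim,
    exists_isHajlaszGradient_memLp_of_tendsto_ae (ne_zero_of_lt hqp) (fun k ↦ hg _) hK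
      (fun k ↦ hgK _) hlim, φ ∘ ψ, hφ.comp hψ, hball⟩

section EuclideanSpace

variable {n : ℕ} {u g : EuclideanSpace ℝ (Fin n) → ℝ}

theorem isHajlaszGradientOn_univ_iff :
    IsHajlaszGradientOn n u g univ ↔ IsHajlaszGradient u g volume := by
  constructor
  · rintro ⟨hmeas, hnonneg, N, hN, hdist⟩
    exact ⟨hmeas, hnonneg, Nᶜ, compl_mem_ae_iff.2 hN, fun x hx y hy ↦ by
      simpa only [Real.dist_eq, dist_eq_norm x y] using hdist x ⟨mem_univ x, hx⟩ y ⟨mem_univ y, hy⟩⟩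
  · rintro ⟨hmeas, hnonneg, s, hs, hdist⟩
    exact ⟨hmeas, hnonneg, sᶜ, mem_ae_iff.1 hs, fun x hx y hy ↦ by
      simpa only [Real.dist_eq, dist_eq_norm x y] using
        hdist x (notMem_compl_iff.1 hx.2) y (notMem_compl_iff.1 hy.2)⟩

theorem lpNorm_eq_eLpNorm {p : ℝ≥0} (hp : p ≠ 0) (μ : Measure (EuclideanSpace ℝ (Fin n))) :
    _root_.lpNorm n p u μ = eLpNorm u p μ := by
  simp only [eLpNorm_nnreal_eq_lintegral hp, _root_.lpNorm, Real.enorm_eq_ofReal_abs]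

end EuclideanSpace

end HajlaszCompactness

/-- **Corollary 2.9.** Weak compactness of norm-bounded sets in `M^{1,p}(ℝⁿ)`,
`p > n/(n+1)`: a sequence bounded in the `M^{1,p}` norm has a subsequence converging in
`L¹_loc` to a function of `M^{1,p}(ℝⁿ)`. -/
theorem hajlasz_sobolev_weak_compactness
    (n : ℕ) (hn : 1 ≤ n) (p : ℝ) (hp : (n : ℝ) / (n + 1) < p) (K : ℝ)
    (f : ℕ → EuclideanSpace ℝ (Fin n) → ℝ)
    (hfloc : ∀ k, LocallyIntegrable (f k))
    (g : ℕ → EuclideanSpace ℝ (Fin n) → ℝ)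
    (hg : ∀ k, IsHajlaszGradientOn n (f k) (g k) univ)
    (hbdd : ∀ k, lpNorm n p (f k) volume + lpNorm n p (g k) volume ≤ ENNReal.ofReal K) :
    ∃ F : EuclideanSpace ℝ (Fin n) → ℝ,
      AEStronglyMeasurable F volume ∧ lpNorm n p F volume ≠ ⊤ ∧
      (∃ G, IsHajlaszGradientOn n F G univ ∧ lpNorm n p G volume ≠ ⊤) ∧
      ∃ k : ℕ → ℕ, StrictMono k ∧
        ∀ (x₀ : EuclideanSpace ℝ (Fin n)) (r : ℝ),
          Filter.Tendsto
            (fun ℓ => ∫⁻ y in ball x₀ r, ENNReal.ofReal |f (k ℓ) y - F y|)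
            Filter.atTop (nhds 0) := by
  have : NeZero n := ⟨by lia⟩
  have hp₀ : 0 < p := lt_of_le_of_lt (by positivity) hp
  lift p to ℝ≥0 using hp₀.le
  have hp₀ : p ≠ 0 := (NNReal.coe_pos.1 hp₀).ne'
  simp only [isHajlaszGradientOn_univ_iff, lpNorm_eq_eLpNorm hp₀] at hg hbdd ⊢
  obtain ⟨F, hF, ⟨G, hG, hGp⟩, k, hk, hlim⟩ := hajlasz_sobolev_weak_compactness_general
    (by simpa using hp) ofReal_ne_top (fun k ↦ (hfloc k).aestronglyMeasurable) hg
    (fun k ↦ le_self_add.trans (hbdd k)) fun k ↦ le_add_self.trans (hbdd k)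
  refine ⟨F, hF.1, hF.2.ne, ⟨G, hG, hGp.2.ne⟩, k, hk, fun x₀ r ↦ ?_⟩
  simpa only [eLpNorm_one_eq_lintegral_enorm, Real.enorm_eq_ofReal_abs, Pi.sub_apply]
    using hlim x₀ r
end
end
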